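/- The space S_{20,2}(Γ₂,ε) has dimension 1 over ℂ. -/

import Mathlib

noncomputable section

open Matrix Complex Filter Topology

/-- The standard symplectic form matrix of size 4. -/
def J4 : Matrix (Fin 4) (Fin 4) ℤ := !![0,0,1,0; 0,0,0,1; -1,0,0,0; 0,-1,0,0]

/-- The Siegel modular group `Γ₂ = Sp(4,ℤ)`, as a set of 4×4 integer matrices. -/
def Sp4Z : Set (Matrix (Fin 4) (Fin 4) ℤ) := {γ | γᵀ * J4 * γ = J4}

/-- The principal congruence subgroup `Γ₂[2]` of level 2. -/
def Sp4Z2 : Set (Matrix (Fin 4) (Fin 4) ℤ) :=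
  {γ | γ ∈ Sp4Z ∧ ∀ i j, ((γ i j : ZMod 2) = if i = j then 1 else 0)}

/-- The Siegel upper half space of degree 2: symmetric 2×2 complex matrices with
positive definite imaginary part (encoded as functions `Fin 2 → Fin 2 → ℂ`). -/
def H2 : Set (Fin 2 → Fin 2 → ℂ) :=
  {τ | (Matrix.of τ).IsSymm ∧ (Matrix.of fun i j => (τ i j).im).PosDef}

/-- The four 2×2 blocks of a 4×4 integer matrix, as complex matrices. -/
def blk (γ : Matrix (Fin 4) (Fin 4) ℤ) (r s : Fin 2) : Matrix (Fin 2) (Fin 2) ℂ :=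
  Matrix.of fun i j =>
    ((γ ⟨2 * (r : ℕ) + (i : ℕ), by have h1 := r.isLt; have h2 := i.isLt; omega⟩
        ⟨2 * (s : ℕ) + (j : ℕ), by have h1 := s.isLt; have h2 := j.isLt; omega⟩ : ℤ) : ℂ)

/-- The factor `cτ + d`. -/
def den (γ : Matrix (Fin 4) (Fin 4) ℤ) (τ : Fin 2 → Fin 2 → ℂ) : Matrix (Fin 2) (Fin 2) ℂ :=
  blk γ 1 0 * Matrix.of τ + blk γ 1 1

/-- The action `γ·τ = (aτ+b)(cτ+d)⁻¹` of `Sp(4)` on the Siegel upper half space. -/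
def moeb (γ : Matrix (Fin 4) (Fin 4) ℤ) (τ : Fin 2 → Fin 2 → ℂ) : Fin 2 → Fin 2 → ℂ :=
  fun i j => ((blk γ 0 0 * Matrix.of τ + blk γ 0 1) * (den γ τ)⁻¹) i j

/-- Matrix coefficients of the `j`-th symmetric power of the standard representation of
`GL(2,ℂ)`, in the basis `x₁^(j-i) x₂^i`. -/
def symCoeff (j : ℕ) (m : Matrix (Fin 2) (Fin 2) ℂ) (l i : Fin (j + 1)) : ℂ :=
  (((Polynomial.C (m 0 0) + Polynomial.C (m 1 0) * Polynomial.X) ^ (j - (l : ℕ)) *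
    (Polynomial.C (m 0 1) + Polynomial.C (m 1 1) * Polynomial.X) ^ (l : ℕ)).coeff i)

/-- The `j`-th symmetric power `Sym^j(m)` acting on coordinate vectors. -/
def symAct (j : ℕ) (m : Matrix (Fin 2) (Fin 2) ℂ) (v : Fin (j + 1) → ℂ) : Fin (j + 1) → ℂ :=
  fun i => ∑ l, symCoeff j m l i * v l

lemma symAct_add (j : ℕ) (m : Matrix (Fin 2) (Fin 2) ℂ) (v w : Fin (j + 1) → ℂ) :
    symAct j m (v + w) = symAct j m v + symAct j m w := by
  funext i
  simp [symAct, mul_add, Finset.sum_add_distrib]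

lemma symAct_smul (j : ℕ) (m : Matrix (Fin 2) (Fin 2) ℂ) (a : ℂ) (v : Fin (j + 1) → ℂ) :
    symAct j m (a • v) = a • symAct j m v := by
  funext i
  simp only [symAct, Pi.smul_apply, smul_eq_mul, Finset.mul_sum]
  exact Finset.sum_congr rfl fun l _ => by ring

lemma symAct_zero (j : ℕ) (m : Matrix (Fin 2) (Fin 2) ℂ) : symAct j m 0 = 0 := by
  funext i; simp [symAct]

/-- The weight `(j,k)` automorphy action `Sym^j(m) ⊗ det(m)^k`. -/
def wt (j : ℕ) (k : ℤ) (m : Matrix (Fin 2) (Fin 2) ℂ) (v : Fin (j + 1) → ℂ) :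
    Fin (j + 1) → ℂ :=
  (m.det ^ k) • symAct j m v

lemma wt_add (j : ℕ) (k : ℤ) (m : Matrix (Fin 2) (Fin 2) ℂ) (v w : Fin (j + 1) → ℂ) :
    wt j k m (v + w) = wt j k m v + wt j k m w := by
  simp [wt, symAct_add, smul_add]

lemma wt_smul (j : ℕ) (k : ℤ) (m : Matrix (Fin 2) (Fin 2) ℂ) (a : ℂ) (v : Fin (j + 1) → ℂ) :
    wt j k m (a • v) = a • wt j k m v := by
  rw [wt, wt, symAct_smul, smul_comm]

lemma wt_zero (j : ℕ) (k : ℤ) (m : Matrix (Fin 2) (Fin 2) ℂ) : wt j k m 0 = 0 := by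
  simp [wt, symAct_zero]

/-- The slash operation `(F|γ)(τ) = Sym^j(cτ+d)⁻¹ det(cτ+d)⁻ᵏ F(γ·τ)`. -/
def slashS (j : ℕ) (k : ℤ) (γ : Matrix (Fin 4) (Fin 4) ℤ)
    (F : (Fin 2 → Fin 2 → ℂ) → (Fin (j + 1) → ℂ)) (τ : Fin 2 → Fin 2 → ℂ) :
    Fin (j + 1) → ℂ :=
  ((den γ τ).det ^ (-k)) • symAct j ((den γ τ)⁻¹) (F (moeb γ τ))

lemma slashS_add (j : ℕ) (k : ℤ) (γ : Matrix (Fin 4) (Fin 4) ℤ)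
    (F G : (Fin 2 → Fin 2 → ℂ) → (Fin (j + 1) → ℂ)) (τ : Fin 2 → Fin 2 → ℂ) :
    slashS j k γ (F + G) τ = slashS j k γ F τ + slashS j k γ G τ := by
  simp [slashS, symAct_add, smul_add]

lemma slashS_smul (j : ℕ) (k : ℤ) (γ : Matrix (Fin 4) (Fin 4) ℤ) (a : ℂ)
    (F : (Fin 2 → Fin 2 → ℂ) → (Fin (j + 1) → ℂ)) (τ : Fin 2 → Fin 2 → ℂ) :
    slashS j k γ (a • F) τ = a • slashS j k γ F τ := by
  simp only [slashS, Pi.smul_apply, symAct_smul]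
  rw [smul_comm]

lemma slashS_zero (j : ℕ) (k : ℤ) (γ : Matrix (Fin 4) (Fin 4) ℤ) (τ : Fin 2 → Fin 2 → ℂ) :
    slashS j k γ (0 : (Fin 2 → Fin 2 → ℂ) → (Fin (j + 1) → ℂ)) τ = 0 := by
  simp [slashS, symAct_zero]

/-- The diagonal point `diag(τ₁,τ₂)` of the Siegel upper half space. -/
def diagH (τ₁ τ₂ : ℂ) : Fin 2 → Fin 2 → ℂ :=
  fun i j => if i = j then (if i = 0 then τ₁ else τ₂) else 0

/-- `F` is a Siegel cusp form of degree 2 and weight `(j,k)` on `Γ`, with character `χ`: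
holomorphic on `ℍ₂`, transforming by `F(γ·τ) = χ(γ) Sym^j(cτ+d) det(cτ+d)^k F(τ)` for `γ ∈ Γ`,
with `(F|γ)(diag(τ₁,it)) → 0` as `t → ∞` for every `γ ∈ Γ₂`, and (normalization) vanishing
off `ℍ₂`. -/
def IsSiegelCuspForm (j : ℕ) (k : ℤ) (Γ : Set (Matrix (Fin 4) (Fin 4) ℤ))
    (χ : Matrix (Fin 4) (Fin 4) ℤ → ℂ)
    (F : (Fin 2 → Fin 2 → ℂ) → (Fin (j + 1) → ℂ)) : Prop :=
  DifferentiableOn ℂ F H2 ∧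
  (∀ γ ∈ Γ, ∀ τ ∈ H2, F (moeb γ τ) = χ γ • wt j k (den γ τ) (F τ)) ∧
  (∀ γ ∈ Sp4Z, ∀ τ₁ : ℂ, 0 < τ₁.im →
    Tendsto (fun t : ℝ => slashS j k γ F (diagH τ₁ (t * Complex.I))) atTop (𝓝 0)) ∧
  (∀ τ, τ ∉ H2 → F τ = 0)

/-- The space `S_{j,k}(Γ, χ)` of Siegel cusp forms of degree 2 and weight `(j,k)` on `Γ`
with character `χ`, as a complex vector space. -/
def SiegelCusp (j : ℕ) (k : ℤ) (Γ : Set (Matrix (Fin 4) (Fin 4) ℤ))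
    (χ : Matrix (Fin 4) (Fin 4) ℤ → ℂ) :
    Submodule ℂ ((Fin 2 → Fin 2 → ℂ) → (Fin (j + 1) → ℂ)) where
  carrier := {F | IsSiegelCuspForm j k Γ χ F}
  add_mem' := by
    rintro F G hF hG
    refine ⟨hF.1.add hG.1, ?_, ?_, ?_⟩
    · intro γ hγ τ hτ
      show F (moeb γ τ) + G (moeb γ τ) = χ γ • wt j k (den γ τ) (F τ + G τ)
      rw [wt_add, smul_add, hF.2.1 γ hγ τ hτ, hG.2.1 γ hγ τ hτ]
    · intro γ hγ τ₁ hτ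
      have h := (hF.2.2.1 γ hγ τ₁ hτ).add (hG.2.2.1 γ hγ τ₁ hτ)
      rw [add_zero] at h
      exact h.congr fun t => (slashS_add j k γ F G _).symm
    · intro τ hτ
      show F τ + G τ = 0
      rw [hF.2.2.2 τ hτ, hG.2.2.2 τ hτ, add_zero]
  zero_mem' := by
    refine ⟨?_, ?_, ?_, ?_⟩
    · exact differentiableOn_const 0
    · intro γ hγ τ hτ
      show (0 : Fin (j + 1) → ℂ) = χ γ • wt j k (den γ τ) 0
      rw [wt_zero, smul_zero]
    · intro γ hγ τ₁ hτ
      have : (fun t : ℝ => slashS j k γ (0 : (Fin 2 → Fin 2 → ℂ) → (Fin (j + 1) → ℂ))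
          (diagH τ₁ (t * Complex.I))) = fun _ => 0 := by
        funext t; exact slashS_zero j k γ _
      rw [this]
      exact tendsto_const_nhds
    · intro τ _; rfl
  smul_mem' := by
    rintro a F hF
    refine ⟨hF.1.const_smul a, ?_, ?_, ?_⟩
    · intro γ hγ τ hτ
      show a • F (moeb γ τ) = χ γ • wt j k (den γ τ) (a • F τ)
      rw [hF.2.1 γ hγ τ hτ, wt_smul, smul_comm]
    · intro γ hγ τ₁ hτ
      have h := (hF.2.2.1 γ hγ τ₁ hτ).const_smul a
      rw [smul_zero] at h
      exact h.congr fun t => (slashS_smul j k γ a F _).symm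
    · intro τ hτ
      show a • F τ = 0
      rw [hF.2.2.2 τ hτ, smul_zero]

/-- `ε` is (on `Γ₂`) the unique nontrivial homomorphism `Γ₂ → {±1}`. -/
def IsEps (ε : Matrix (Fin 4) (Fin 4) ℤ → ℂ) : Prop :=
  (∀ γ ∈ Sp4Z, ε γ = 1 ∨ ε γ = -1) ∧
  (∀ γ ∈ Sp4Z, ∀ δ ∈ Sp4Z, ε (γ * δ) = ε γ * ε δ) ∧
  (∃ γ ∈ Sp4Z, ε γ ≠ 1)

/-!
The group `Γ₂` is generated by `τ₀₀ ↦ τ₀₀ + 1`, the partial inversion in `τ₀₀`, the exchange of the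
two variables and the shear `τ ↦ U τ Uᵀ` with `U = (1 0; 1 1)`, and `ε` is `-1` on all four of them.

The dimension is at most one. The translations give the components of `F ∈ S_{20,2}(Γ₂,ε)` Fourier
expansions in which all frequencies are odd. In the Fourier–Jacobi expansion the partial inversion
turns the first nonvanishing Taylor coefficient at `z = 0` into a form on `SL(2,ℤ)` with a sign
character; its square divided by a power of `Δ` is a modular form of level one, of a weight too
small to be nonzero. This gives linear relations between the Fourier coefficients, and those for the
first Fourier–Jacobi coefficients, together with the finitely many relations coming from the
exchange and the shear, leave only one free coefficient.

A nonzero form arises from theta series. Since `1² + 2² + 2² + (3i)² = 0`, the exponential factor of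
the theta transformation law cancels in the product `θ(τ, w) θ(τ, 2w) θ(τ, 2w) θ(τ, 3iw)`. Hence the
homogeneous part of degree 20 in `w ∈ ℂ²` of a suitably signed sum over the six odd characteristics
transforms with weight `(20, 2)` and character `ε`. Its leading asymptotics at `diag(iy, iy)` as `y
→ ∞` is a number that one computes not to be zero.
-/

/-! ## Level-one forms with the sign character -/

/-- A holomorphic function `g` on the upper half plane (encoded on `ℂ`) that transforms like a
modular form of weight `K` for the sign character of `SL(2,ℤ)`, the one with value `-1` on both
standard generators, and that is `O(e^{-πN Im t})` at the cusp. -/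
structure IsSignForm (K N : ℕ) (g : ℂ → ℂ) : Prop where
  differentiableOn : DifferentiableOn ℂ g {t | 0 < t.im}
  map_add_one : ∀ t : ℂ, 0 < t.im → g (t + 1) = -g t
  map_neg_one_div : ∀ t : ℂ, 0 < t.im → g (-1 / t) = -t ^ K * g t
  exists_bound : ∃ C : ℝ, ∀ t : ℂ, 1 ≤ t.im → ‖g t‖ ≤ C * Real.exp (-Real.pi * N * t.im)

section LevelOne

open UpperHalfPlane ModularForm MatrixGroups Manifold

lemma denom_modularGroup_T (z : ℍ) : denom (ModularGroup.T : GL (Fin 2) ℝ) z = 1 := by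
  rw [ModularGroup.denom_apply]
  simp [ModularGroup.T]

lemma discriminant_one_vadd (z : ℍ) : discriminant ((1 : ℝ) +ᵥ z) = discriminant z := by
  have h := congrFun discriminant_T_invariant z
  rwa [SL_slash_apply, modular_T_smul, denom_modularGroup_T, _root_.one_zpow, mul_one] at h

lemma discriminant_S_smul (z : ℍ) :
    discriminant (ModularGroup.S • z) = (z : ℂ) ^ 12 * discriminant z := by
  have h := congrFun discriminant_S_invariant z
  rw [SL_slash_apply, ModularGroup.denom_S, _root_.zpow_neg,
    mul_inv_eq_iff_eq_mul₀ (zpow_ne_zero _ z.ne_zero)] at h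
  rw [h, mul_comm]
  rfl

lemma E₆_I : E₆ UpperHalfPlane.I = 0 := by
  have h := congrFun (SlashInvariantForm.slash_action_eqn E₆
    (ModularGroup.S : GL (Fin 2) ℝ) ⟨_, rfl⟩) UpperHalfPlane.I
  have hfix : ModularGroup.S • UpperHalfPlane.I = UpperHalfPlane.I := by
    rw [modular_S_smul]; ext; simp
  have hpow : Complex.I ^ (-((6 : ℕ) : ℤ)) = -1 := by
    rw [_root_.zpow_neg, zpow_natCast, show 6 = 2 * 3 from rfl, pow_mul, I_sq]
    norm_num
  rw [← ModularForm.SL_slash, SL_slash_apply, ModularGroup.denom_S, hfix,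
    UpperHalfPlane.coe_I] at h
  have h' : E₆ UpperHalfPlane.I * -1 = E₆ UpperHalfPlane.I := hpow ▸ h
  linear_combination -h' / 2

lemma E₄_I_ne_zero : E₄ UpperHalfPlane.I ≠ 0 := by
  intro h
  have hΔ := discriminant_eq_E₄_cube_sub_E₆_sq UpperHalfPlane.I
  rw [h, E₆_I] at hΔ
  exact discriminant_ne_zero _ (by simpa using hΔ)

lemma eq_zero_of_weight_four_of_apply_I (f : ModularForm 𝒮ℒ 4)
    (hf : f UpperHalfPlane.I = 0) : f = 0 := by
  have hE₄ : (E₄ : ModularForm 𝒮ℒ 4) ≠ 0 := fun h ↦ E₄_I_ne_zero (by rw [h]; rfl)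
  obtain ⟨c, rfl⟩ := (finrank_eq_one_iff_of_nonzero' _ hE₄).1
    (Module.finrank_eq_of_rank_eq levelOne_weight_four_rank_one) f
  have hc : c * E₄ UpperHalfPlane.I = 0 := hf
  rw [(mul_eq_zero.1 hc).resolve_right E₄_I_ne_zero, zero_smul]

namespace IsSignForm

/-- The quotient `g² / Δ^N`: squaring removes the sign character and dividing by `Δ^N` uses up the
vanishing at the cusp. -/
def discQuot (N : ℕ) (g : ℂ → ℂ) (z : ℍ) : ℂ := g z ^ 2 / discriminant z ^ N

variable {K N : ℕ} {g : ℂ → ℂ}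

lemma discQuot_slash_T (hg : IsSignForm K N g) (k : ℤ) :
    discQuot N g ∣[k] ModularGroup.T = discQuot N g := by
  ext z
  have hgT : g (((1 : ℝ) +ᵥ z : ℍ) : ℂ) = -g z := by
    rw [UpperHalfPlane.coe_vadd, add_comm, ofReal_one, hg.map_add_one z z.2]
  rw [SL_slash_apply, modular_T_smul, denom_modularGroup_T, _root_.one_zpow, mul_one]
  simp only [discQuot, discriminant_one_vadd, hgT, neg_sq]

lemma discQuot_slash_S (hg : IsSignForm K N g) :
    discQuot N g ∣[(2 * (K : ℤ) - 12 * N)] ModularGroup.S = discQuot N g := by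
  ext z
  have hz := z.ne_zero
  have hΔ := discriminant_ne_zero z
  have hgS : g ((ModularGroup.S • z : ℍ) : ℂ) = -(z : ℂ) ^ K * g z := by
    rw [← hg.map_neg_one_div z z.2, modular_S_smul, UpperHalfPlane.coe_mk, ← neg_inv,
      neg_div, one_div]
  have hz_pow : (z : ℂ) ^ (12 * (N : ℤ) - 2 * K) = ((z : ℂ) ^ 12) ^ N / ((z : ℂ) ^ K) ^ 2 := by
    rw [zpow_sub₀ hz, ← pow_mul, ← pow_mul, mul_comm K 2]
    norm_cast
  rw [SL_slash_apply, ModularGroup.denom_S, neg_sub, hz_pow]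
  simp only [discQuot, discriminant_S_smul, hgS]
  field_simp
  ring

lemma mdifferentiable_discQuot (hg : IsSignForm K N g) : MDiff (discQuot N g) := by
  have hg' : MDiff (fun z : ℍ ↦ g z) :=
    UpperHalfPlane.mdifferentiable_iff.2 <| hg.differentiableOn.congr fun z hz ↦ by
      simp [ofComplex_apply_of_im_pos hz]
  have hΔ : MDiff (fun z : ℍ ↦ discriminant z) := CuspForm.discriminant.holo'
  rw [UpperHalfPlane.mdifferentiable_iff] at hg' hΔ ⊢
  exact (hg'.pow 2).div (hΔ.pow N) fun z _ ↦ pow_ne_zero _ (discriminant_ne_zero _)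

lemma isBoundedAtImInfty_discQuot (hg : IsSignForm K N g) :
    IsBoundedAtImInfty (discQuot N g) := by
  obtain ⟨C, hC⟩ := hg.exists_bound
  rw [IsBoundedAtImInfty, BoundedAtFilter]
  refine (Asymptotics.div_isBoundedUnder_of_isBigO
    (.trans (.of_bound (C ^ 2) ?_) (exp_isBigO_discriminant.pow N))).isBigO_one ℝ
  have him : ∀ᶠ z : ℍ in atImInfty, 1 ≤ z.im :=
    tendsto_comap.eventually (eventually_ge_atTop 1)
  filter_upwards [him] with z hz
  rw [norm_pow, norm_pow, Real.norm_of_nonneg (Real.exp_pos _).le]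
  calc ‖g z‖ ^ 2 ≤ (C * Real.exp (-Real.pi * N * (z : ℂ).im)) ^ 2 := by
        gcongr; exact hC z hz
    _ = C ^ 2 * Real.exp (-2 * Real.pi * z.im) ^ N := by
        rw [mul_pow, ← Real.exp_nat_mul, ← Real.exp_nat_mul, UpperHalfPlane.coe_im]
        congr 2
        push_cast
        ring

/-- The quotient `g² / Δ^N` as a modular form of level one. -/
def discQuotForm (hg : IsSignForm K N g) : ModularForm 𝒮ℒ (2 * (K : ℤ) - 12 * N) :=
  have hslash := SlashInvariantForm.slash_action_generators_SL2Z
    hg.discQuot_slash_S (hg.discQuot_slash_T _)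
  { toFun := discQuot N g
    slash_action_eq' := fun _ ⟨γ, hγ⟩ ↦ hγ ▸ hslash γ
    holo' := hg.mdifferentiable_discQuot
    bdd_at_cusps' := fun {c} hc ↦ by
      rw [Subgroup.IsArithmetic.isCusp_iff_isCusp_SL2Z] at hc
      rw [OnePoint.isBoundedAt_iff_forall_SL2Z hc]
      intro γ _
      exact (hslash γ).symm ▸ hg.isBoundedAtImInfty_discQuot }

lemma eq_zero_of_discQuotForm_eq_zero (hg : IsSignForm K N g) (h : hg.discQuotForm = 0) {t : ℂ}
    (ht : 0 < t.im) : g t = 0 := by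
  have hquot : discQuot N g ⟨t, ht⟩ = 0 := DFunLike.congr_fun h (⟨t, ht⟩ : ℍ)
  have hsq := (div_eq_zero_iff.1 hquot).resolve_right (pow_ne_zero _ (discriminant_ne_zero _))
  exact (pow_eq_zero_iff two_ne_zero).1 hsq

theorem eq_zero_of_lt (hg : IsSignForm K N g) (hKN : K < 6 * N) {t : ℂ} (ht : 0 < t.im) :
    g t = 0 :=
  have hweight : 2 * (K : ℤ) - 12 * N < 0 := by omega
  hg.eq_zero_of_discQuotForm_eq_zero
    (DFunLike.coe_injective (ModularFormClass.levelOne_neg_weight_eq_zero hweight _)) ht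

/-- In weight `8` the sign in the transformation law under `t ↦ -1/t` forces `g(i) = 0`, whereas
`g²/Δ` is a multiple of `E₄`, and `E₄(i) ≠ 0`. -/
theorem eq_zero_of_weight_eight (hg : IsSignForm 8 1 g) {t : ℂ} (ht : 0 < t.im) : g t = 0 := by
  have hI : g Complex.I = 0 := by
    have h := hg.map_neg_one_div Complex.I (by simp)
    have hpow : Complex.I ^ 8 = 1 := by rw [show 8 = 4 * 2 from rfl, pow_mul, I_pow_four, one_pow]
    rw [show -1 / Complex.I = Complex.I by simp, hpow] at h
    linear_combination h / 2
  refine hg.eq_zero_of_discQuotForm_eq_zero (eq_zero_of_weight_four_of_apply_I _ ?_) ht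
  change g _ ^ 2 / _ = 0
  simp [hI]

end IsSignForm

end LevelOne

/-! ## Generators of `Sp(4,ℤ)` and the character `ε` -/

section Generators

open MatrixGroups

variable {γ δ : Matrix (Fin 4) (Fin 4) ℤ}

/-- The translation `τ ↦ τ + (p q; q r)`. -/
def translMat (p q r : ℤ) : Matrix (Fin 4) (Fin 4) ℤ :=
  !![1,0,p,q; 0,1,q,r; 0,0,1,0; 0,0,0,1]

/-- The inversion `τ₁ ↦ -1/τ₁` in the first diagonal variable. -/
def partialInvMat : Matrix (Fin 4) (Fin 4) ℤ := !![0,0,-1,0; 0,1,0,0; 1,0,0,0; 0,0,0,1]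

/-- The exchange of the two diagonal variables. -/
def swapMat : Matrix (Fin 4) (Fin 4) ℤ := !![0,1,0,0; 1,0,0,0; 0,0,0,1; 0,0,1,0]

/-- The substitution `τ ↦ U τ Uᵀ` with `U = (1 0; 1 1)`. -/
def shearMat : Matrix (Fin 4) (Fin 4) ℤ := !![1,0,0,0; 1,1,0,0; 0,0,1,-1; 0,0,0,1]

/-- The substitution `τ ↦ U τ Uᵀ` with `U = diag(1,-1)`. -/
def reflMat : Matrix (Fin 4) (Fin 4) ℤ := !![1,0,0,0; 0,-1,0,0; 0,0,1,0; 0,0,0,-1]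

/-- The chosen generators of `Sp(4,ℤ)`. -/
def sp4Gens : Set (Matrix (Fin 4) (Fin 4) ℤ) :=
  {translMat 1 0 0, partialInvMat, swapMat, shearMat}

/-- The monoid generated by `sp4Gens`; it turns out to be all of `Sp(4,ℤ)`, see `Sp4Z_eq_coe`. -/
def sp4Monoid : Submonoid (Matrix (Fin 4) (Fin 4) ℤ) := Submonoid.closure sp4Gens

lemma forall_mem_sp4Gens {p : Matrix (Fin 4) (Fin 4) ℤ → Prop} :
    (∀ g ∈ sp4Gens, p g) ↔ p (translMat 1 0 0) ∧ p partialInvMat ∧ p swapMat ∧ p shearMat := by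
  simp [sp4Gens]

lemma translMat_one_mem : translMat 1 0 0 ∈ sp4Monoid :=
  Submonoid.subset_closure (by simp [sp4Gens])

lemma partialInvMat_mem : partialInvMat ∈ sp4Monoid :=
  Submonoid.subset_closure (by simp [sp4Gens])

lemma swapMat_mem : swapMat ∈ sp4Monoid := Submonoid.subset_closure (by simp [sp4Gens])

lemma shearMat_mem : shearMat ∈ sp4Monoid := Submonoid.subset_closure (by simp [sp4Gens])

lemma reflMat_mem : reflMat ∈ sp4Monoid := by
  have hconj := mul_mem (mul_mem swapMat_mem partialInvMat_mem) swapMat_mem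
  rw [show reflMat = (swapMat * partialInvMat * swapMat) * (swapMat * partialInvMat * swapMat) by
    decide]
  exact mul_mem hconj hconj

lemma Sp4Z_mul_mem (hγ : γ ∈ Sp4Z) (hδ : δ ∈ Sp4Z) : γ * δ ∈ Sp4Z := by
  simp only [Sp4Z, Set.mem_ofPred_eq] at *
  calc (γ * δ)ᵀ * J4 * (γ * δ) = δᵀ * (γᵀ * J4 * γ) * δ := by
        rw [Matrix.transpose_mul]; simp only [Matrix.mul_assoc]
    _ = J4 := by rw [hγ, hδ]

lemma mem_Sp4Z_of_mem_sp4Monoid (hγ : γ ∈ sp4Monoid) : γ ∈ Sp4Z := by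
  induction hγ using Submonoid.closure_induction with
  | mem g hg =>
    revert g
    simp only [forall_mem_sp4Gens, Sp4Z, Set.mem_ofPred_eq]
    decide
  | one => simp [Sp4Z]
  | mul g h _ _ hg hh => exact Sp4Z_mul_mem hg hh

lemma exists_mul_eq_one_of_mem_sp4Monoid (hγ : γ ∈ sp4Monoid) :
    ∃ γ' ∈ sp4Monoid, γ' * γ = 1 := by
  have hJ := partialInvMat_mem
  have hT := translMat_one_mem
  induction hγ using Submonoid.closure_induction with
  | mem g hg =>
    revert g
    refine forall_mem_sp4Gens.2 ⟨?_, ?_, ?_, ?_⟩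
    · exact ⟨partialInvMat * translMat 1 0 0 * partialInvMat * translMat 1 0 0 * partialInvMat *
        (partialInvMat * partialInvMat), mul_mem (mul_mem (mul_mem (mul_mem (mul_mem hJ hT) hJ) hT)
          hJ) (mul_mem hJ hJ), by decide⟩
    · exact ⟨partialInvMat * partialInvMat * partialInvMat, mul_mem (mul_mem hJ hJ) hJ, by decide⟩
    · exact ⟨swapMat, swapMat_mem, by decide⟩
    · exact ⟨reflMat * shearMat * reflMat, mul_mem (mul_mem reflMat_mem shearMat_mem) reflMat_mem,
        by decide⟩
  | one => exact ⟨1, one_mem _, one_mul 1⟩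
  | mul g h _ _ hg hh =>
    obtain ⟨g', hg', hgg⟩ := hg
    obtain ⟨h', hh', hhh⟩ := hh
    refine ⟨h' * g', mul_mem hh' hg', ?_⟩
    rw [Matrix.mul_assoc, ← Matrix.mul_assoc g', hgg, Matrix.one_mul, hhh]

lemma mem_sp4Monoid_of_mul_mem (hγ : γ ∈ sp4Monoid) (h : γ * δ ∈ sp4Monoid) :
    δ ∈ sp4Monoid := by
  obtain ⟨γ', hγ', hmul⟩ := exists_mul_eq_one_of_mem_sp4Monoid hγ
  rw [← Matrix.one_mul δ, ← hmul, Matrix.mul_assoc]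
  exact mul_mem hγ' h

lemma map_SL2_mem_sp4Monoid (E : SL(2, ℤ) →* Matrix (Fin 4) (Fin 4) ℤ)
    (hS : E ModularGroup.S ∈ sp4Monoid) (hT : E ModularGroup.T ∈ sp4Monoid) (σ : SL(2, ℤ)) :
    E σ ∈ sp4Monoid := by
  have hσ : σ ∈ Subgroup.closure {ModularGroup.S, ModularGroup.T} := by
    rw [SpecialLinearGroup.SL2Z_generators]; trivial
  induction hσ using Subgroup.closure_induction with
  | mem x hx =>
    simp only [Set.mem_insert_iff, Set.mem_singleton_iff] at hx
    rcases hx with rfl | rfl <;> assumption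
  | one => rw [map_one]; exact one_mem _
  | mul x y _ _ hx hy => rw [map_mul]; exact mul_mem hx hy
  | inv x _ hx =>
    refine mem_sp4Monoid_of_mul_mem hx ?_
    rw [← map_mul, mul_inv_cancel, map_one]
    exact one_mem _

lemma SL2_mul_apply (σ τ : SL(2, ℤ)) (i j : Fin 2) :
    (σ * τ) i j = σ i 0 * τ 0 j + σ i 1 * τ 1 j :=
  (Matrix.mul_apply (M := σ.1) (N := τ.1)).trans (Fin.sum_univ_two _)

/-- `SL(2,ℤ)` acting on the first diagonal variable. -/
def embFst : SL(2, ℤ) →* Matrix (Fin 4) (Fin 4) ℤ where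
  toFun σ := !![σ 0 0, 0, σ 0 1, 0; 0,1,0,0; σ 1 0, 0, σ 1 1, 0; 0,0,0,1]
  map_one' := by decide
  map_mul' σ τ := by
    rw [SL2_mul_apply σ τ 0 0, SL2_mul_apply σ τ 0 1, SL2_mul_apply σ τ 1 0, SL2_mul_apply σ τ 1 1]
    simp

/-- `SL(2,ℤ)` acting on the second diagonal variable. -/
def embSnd : SL(2, ℤ) →* Matrix (Fin 4) (Fin 4) ℤ where
  toFun σ := !![1,0,0,0; 0, σ 0 0, 0, σ 0 1; 0,0,1,0; 0, σ 1 0, 0, σ 1 1]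
  map_one' := by decide
  map_mul' σ τ := by
    rw [SL2_mul_apply σ τ 0 0, SL2_mul_apply σ τ 0 1, SL2_mul_apply σ τ 1 0, SL2_mul_apply σ τ 1 1]
    simp

/-- `SL(2,ℤ)` acting by `τ ↦ U τ Uᵀ`. -/
def embLevi : SL(2, ℤ) →* Matrix (Fin 4) (Fin 4) ℤ where
  toFun σ := !![σ 0 0, σ 0 1, 0, 0; σ 1 0, σ 1 1, 0, 0; 0, 0, σ 1 1, -σ 1 0; 0, 0, -σ 0 1, σ 0 0]
  map_one' := by decide
  map_mul' σ τ := by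
    rw [SL2_mul_apply σ τ 0 0, SL2_mul_apply σ τ 0 1, SL2_mul_apply σ τ 1 0, SL2_mul_apply σ τ 1 1]
    ext i j
    fin_cases i <;> fin_cases j <;> simp <;> ring

lemma embFst_mem (σ : SL(2, ℤ)) : embFst σ ∈ sp4Monoid := by
  refine map_SL2_mem_sp4Monoid embFst ?_ ?_ σ
  · rw [show embFst ModularGroup.S = partialInvMat by decide]
    exact partialInvMat_mem
  · rw [show embFst ModularGroup.T = translMat 1 0 0 by decide]
    exact translMat_one_mem

lemma embSnd_mem (σ : SL(2, ℤ)) : embSnd σ ∈ sp4Monoid := by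
  refine map_SL2_mem_sp4Monoid embSnd ?_ ?_ σ
  · rw [show embSnd ModularGroup.S = swapMat * partialInvMat * swapMat by decide]
    exact mul_mem (mul_mem swapMat_mem partialInvMat_mem) swapMat_mem
  · rw [show embSnd ModularGroup.T = swapMat * translMat 1 0 0 * swapMat by decide]
    exact mul_mem (mul_mem swapMat_mem translMat_one_mem) swapMat_mem

lemma embLevi_mem (σ : SL(2, ℤ)) : embLevi σ ∈ sp4Monoid := by
  refine map_SL2_mem_sp4Monoid embLevi ?_ ?_ σ
  · rw [show embLevi ModularGroup.S = swapMat * reflMat by decide]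
    exact mul_mem swapMat_mem reflMat_mem
  · rw [show embLevi ModularGroup.T = swapMat * shearMat * swapMat by decide]
    exact mul_mem (mul_mem swapMat_mem shearMat_mem) swapMat_mem

lemma embFst_mul (σ : SL(2, ℤ)) (γ : Matrix (Fin 4) (Fin 4) ℤ) :
    embFst σ * γ =
      ![σ 0 0 • γ 0 + σ 0 1 • γ 2, γ 1, σ 1 0 • γ 0 + σ 1 1 • γ 2, γ 3] := by
  ext i j
  fin_cases i <;> simp [embFst, Matrix.mul_apply, Fin.sum_univ_four]

lemma embSnd_mul (σ : SL(2, ℤ)) (γ : Matrix (Fin 4) (Fin 4) ℤ) :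
    embSnd σ * γ =
      ![γ 0, σ 0 0 • γ 1 + σ 0 1 • γ 3, γ 2, σ 1 0 • γ 1 + σ 1 1 • γ 3] := by
  ext i j
  fin_cases i <;> simp [embSnd, Matrix.mul_apply, Fin.sum_univ_four]

lemma embLevi_mul (σ : SL(2, ℤ)) (γ : Matrix (Fin 4) (Fin 4) ℤ) :
    embLevi σ * γ =
      ![σ 0 0 • γ 0 + σ 0 1 • γ 1, σ 1 0 • γ 0 + σ 1 1 • γ 1,
        σ 1 1 • γ 2 - σ 1 0 • γ 3, σ 0 0 • γ 3 - σ 0 1 • γ 2] := by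
  ext i j
  fin_cases i <;> simp [embLevi, Matrix.mul_apply, Fin.sum_univ_four] <;> ring

lemma translMat_mem (p q : ℤ) : translMat p q 0 ∈ sp4Monoid := by
  have hfst : embFst (ModularGroup.T ^ p) = translMat p 0 0 := by
    simp [embFst, translMat, ModularGroup.coe_T_zpow]
  have hsnd : embSnd ModularGroup.S * embLevi (ModularGroup.T ^ q) * embSnd ModularGroup.S⁻¹ =
      translMat 0 q 0 := by
    rw [show embSnd ModularGroup.S⁻¹ = !![1,0,0,0; 0,0,0,1; 0,0,1,0; 0,-1,0,0] by decide]
    simp [embSnd, embLevi, translMat, ModularGroup.coe_T_zpow, ModularGroup.S]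
  have hmul : translMat p 0 0 * translMat 0 q 0 = translMat p q 0 := by simp [translMat]
  rw [← hmul, ← hfst, ← hsnd]
  exact mul_mem (embFst_mem _) (mul_mem (mul_mem (embSnd_mem _) (embLevi_mem _)) (embSnd_mem _))

lemma exists_SL2_row_one_mul_eq_zero (a b : ℤ) :
    ∃ σ : SL(2, ℤ), σ 1 0 * a + σ 1 1 * b = 0 := by
  rcases Nat.eq_zero_or_pos (Int.gcd a b) with h | h
  · rw [Int.gcd_eq_zero_iff] at h
    exact ⟨1, by simp [h.1, h.2]⟩
  · obtain ⟨a', b', hcop, ha, hb⟩ := Int.exists_gcd_one h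
    obtain ⟨σ, h0, h1⟩ := (Int.isCoprime_iff_gcd_eq_one.2 hcop).symm.neg_left.exists_SL2_row 1
    refine ⟨σ, ?_⟩
    rw [h0, h1]
    linear_combination (-b') * ha + a' * hb

lemma Sp4Z_column_pairing (hγ : γ ∈ Sp4Z) (i j : Fin 4) :
    γ 0 i * γ 2 j + γ 1 i * γ 3 j - γ 2 i * γ 0 j - γ 3 i * γ 1 j = J4 i j := by
  rw [← show γᵀ * J4 * γ = J4 from hγ]
  simp [Matrix.mul_apply, Fin.sum_univ_succ, J4]
  ring

lemma mem_sp4Monoid_of_second_block_one (hγ : γ ∈ Sp4Z) (h00 : γ 0 0 = 1) (h10 : γ 1 0 = 0)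
    (h20 : γ 2 0 = 0) (h30 : γ 3 0 = 0) (h11 : γ 1 1 = 1) (h13 : γ 1 3 = 0) (h31 : γ 3 1 = 0)
    (h33 : γ 3 3 = 1) : γ ∈ sp4Monoid := by
  have h21 := Sp4Z_column_pairing hγ 0 1
  have h22 := Sp4Z_column_pairing hγ 0 2
  have h23 := Sp4Z_column_pairing hγ 0 3
  have h12 := Sp4Z_column_pairing hγ 2 3
  have h32 := Sp4Z_column_pairing hγ 1 2
  have hJ : J4 0 1 = 0 ∧ J4 0 2 = 1 ∧ J4 0 3 = 0 ∧ J4 2 3 = 0 ∧ J4 1 2 = 0 := by decide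
  simp only [h00, h10, h20, h30, hJ, one_mul, zero_mul, add_zero, sub_zero] at h21 h22 h23
  simp only [h11, h13, h31, h33, h21, h22, h23, hJ, one_mul, zero_mul, mul_zero, mul_one,
    sub_zero] at h12 h32
  have hprod : embLevi (ModularGroup.T ^ γ 0 1) *
      translMat (γ 0 2 - γ 0 1 * γ 0 3) (γ 0 3) 0 = γ := by
    ext i j
    rw [embLevi_mul]
    fin_cases i <;> fin_cases j <;>
      simp [translMat, ModularGroup.coe_T_zpow, *] <;> linarith
  rw [← hprod]
  exact mul_mem (embLevi_mem _) (translMat_mem _ _)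

lemma mem_sp4Monoid_of_column_eq_basis (hγ : γ ∈ Sp4Z) (h00 : γ 0 0 = 1) (h10 : γ 1 0 = 0)
    (h20 : γ 2 0 = 0) (h30 : γ 3 0 = 0) : γ ∈ sp4Monoid := by
  have h21 := Sp4Z_column_pairing hγ 0 1
  have h23 := Sp4Z_column_pairing hγ 0 3
  have hdet := Sp4Z_column_pairing hγ 1 3
  have hJ : J4 0 1 = 0 ∧ J4 0 3 = 0 ∧ J4 1 3 = 1 := by decide
  simp only [h00, h10, h20, h30, hJ, one_mul, zero_mul, add_zero, sub_zero] at h21 h23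
  simp only [h21, h23, hJ, zero_mul, mul_zero, zero_add, sub_zero] at hdet
  let σ : SL(2, ℤ) := ⟨!![γ 3 3, -γ 1 3; -γ 3 1, γ 1 1], by
    rw [Matrix.det_fin_two_of]; linarith⟩
  refine mem_sp4Monoid_of_mul_mem (embSnd_mem σ) (mem_sp4Monoid_of_second_block_one
    (Sp4Z_mul_mem (mem_Sp4Z_of_mem_sp4Monoid (embSnd_mem σ)) hγ) ?_ ?_ ?_ ?_ ?_ ?_ ?_ ?_) <;>
  rw [embSnd_mul] <;> simp [σ, h00, h10, h20, h30] <;> linarith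

/-- Sweeping out the first column by the three embedded copies of `SL(2,ℤ)`. -/
theorem mem_sp4Monoid_of_mem_Sp4Z (hγ : γ ∈ Sp4Z) : γ ∈ sp4Monoid := by
  have reduce {δ ρ : Matrix (Fin 4) (Fin 4) ℤ} (hρ : ρ ∈ sp4Monoid) (hδ : δ ∈ Sp4Z)
      (h : ρ * δ ∈ Sp4Z → ρ * δ ∈ sp4Monoid) : δ ∈ sp4Monoid :=
    mem_sp4Monoid_of_mul_mem hρ (h (Sp4Z_mul_mem (mem_Sp4Z_of_mem_sp4Monoid hρ) hδ))
  have clear_zero : ∀ δ ∈ Sp4Z, δ 1 0 = 0 → δ 2 0 = 0 → δ 3 0 = 0 → δ ∈ sp4Monoid := by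
    intro δ hδ h1 h2 h3
    have hunit := Sp4Z_column_pairing hδ 0 2
    simp only [h1, h2, h3, zero_mul, add_zero, sub_zero, show J4 0 2 = 1 from rfl] at hunit
    rcases Int.eq_one_or_neg_one_of_mul_eq_one hunit with h0 | h0
    · exact mem_sp4Monoid_of_column_eq_basis hδ h0 h1 h2 h3
    · refine reduce (embFst_mem (-1)) hδ fun h ↦ mem_sp4Monoid_of_column_eq_basis h ?_ ?_ ?_ ?_ <;>
      simp [embFst_mul, h0, h1, h2, h3]
  have clear_one : ∀ δ ∈ Sp4Z, δ 2 0 = 0 → δ 3 0 = 0 → δ ∈ sp4Monoid := by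
    intro δ hδ h2 h3
    obtain ⟨σ, hσ⟩ := exists_SL2_row_one_mul_eq_zero (δ 0 0) (δ 1 0)
    refine reduce (embLevi_mem σ) hδ fun h ↦ clear_zero _ h ?_ ?_ ?_ <;>
    simp [embLevi_mul, h2, h3, hσ]
  have clear_three : ∀ δ ∈ Sp4Z, δ 2 0 = 0 → δ ∈ sp4Monoid := by
    intro δ hδ h2
    obtain ⟨σ, hσ⟩ := exists_SL2_row_one_mul_eq_zero (δ 1 0) (δ 3 0)
    refine reduce (embSnd_mem σ) hδ fun h ↦ clear_one _ h ?_ ?_ <;>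
    simp [embSnd_mul, h2, hσ]
  obtain ⟨σ, hσ⟩ := exists_SL2_row_one_mul_eq_zero (γ 0 0) (γ 2 0)
  refine reduce (embFst_mem σ) hγ fun h ↦ clear_three _ h ?_
  simp [embFst_mul, hσ]

theorem Sp4Z_eq_coe : Sp4Z = sp4Monoid :=
  Set.Subset.antisymm (fun _ ↦ mem_sp4Monoid_of_mem_Sp4Z) fun _ ↦ mem_Sp4Z_of_mem_sp4Monoid

lemma one_mem_Sp4Z : (1 : Matrix (Fin 4) (Fin 4) ℤ) ∈ Sp4Z :=
  mem_Sp4Z_of_mem_sp4Monoid (one_mem _)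

theorem Sp4Z_induction {p : Matrix (Fin 4) (Fin 4) ℤ → Prop} (gen : ∀ g ∈ sp4Gens, p g)
    (one : p 1) (mul : ∀ γ ∈ Sp4Z, ∀ δ ∈ Sp4Z, p γ → p δ → p (γ * δ)) (hγ : γ ∈ Sp4Z) :
    p γ := by
  rw [Sp4Z_eq_coe, SetLike.mem_coe] at hγ
  induction hγ using Submonoid.closure_induction with
  | mem g hg => exact gen g hg
  | one => exact one
  | mul g h hg hh ihg ihh =>
    exact mul g (mem_Sp4Z_of_mem_sp4Monoid hg) h (mem_Sp4Z_of_mem_sp4Monoid hh) ihg ihh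

lemma translMat_mem_Sp4Z (p q r : ℤ) : translMat p q r ∈ Sp4Z := by
  change _ * _ * _ = _
  ext i j
  fin_cases i <;> fin_cases j <;> simp [translMat, J4, Matrix.mul_apply, Fin.sum_univ_four]

lemma partialInvMat_mem_Sp4Z : partialInvMat ∈ Sp4Z :=
  mem_Sp4Z_of_mem_sp4Monoid partialInvMat_mem

lemma swapMat_mem_Sp4Z : swapMat ∈ Sp4Z := mem_Sp4Z_of_mem_sp4Monoid swapMat_mem

lemma shearMat_mem_Sp4Z : shearMat ∈ Sp4Z := mem_Sp4Z_of_mem_sp4Monoid shearMat_mem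

lemma reflMat_mem_Sp4Z : reflMat ∈ Sp4Z := mem_Sp4Z_of_mem_sp4Monoid reflMat_mem

end Generators

namespace IsEps

variable {ε : Matrix (Fin 4) (Fin 4) ℤ → ℂ}

lemma apply_mul_self (hε : IsEps ε) {γ : Matrix (Fin 4) (Fin 4) ℤ} (hγ : γ ∈ Sp4Z) :
    ε (γ * γ) = 1 := by
  rw [hε.2.1 γ hγ γ hγ]
  rcases hε.1 γ hγ with h | h <;> rw [h] <;> norm_num

lemma apply_one (hε : IsEps ε) : ε 1 = 1 := by
  rw [← Matrix.one_mul 1]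
  exact hε.apply_mul_self one_mem_Sp4Z

lemma apply_eq_of_mul_eq_mul (hε : IsEps ε) {γ δ ρ : Matrix (Fin 4) (Fin 4) ℤ} (hγ : γ ∈ Sp4Z)
    (hδ : δ ∈ Sp4Z) (hρ : ρ ∈ Sp4Z) (h : γ * δ = ρ * γ) : ε δ = ε ρ := by
  have hεh := congrArg ε h
  rw [hε.2.1 γ hγ δ hδ, hε.2.1 ρ hρ γ hγ] at hεh
  rcases hε.1 γ hγ with h1 | h1 <;> simpa [h1] using hεh

lemma apply_reflMat (hε : IsEps ε) : ε reflMat = 1 := by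
  rw [show reflMat = (swapMat * partialInvMat * swapMat) * (swapMat * partialInvMat * swapMat) by
    decide]
  exact hε.apply_mul_self (Sp4Z_mul_mem (Sp4Z_mul_mem swapMat_mem_Sp4Z partialInvMat_mem_Sp4Z)
    swapMat_mem_Sp4Z)

lemma apply_translMat_snd (hε : IsEps ε) : ε (translMat 0 0 1) = ε (translMat 1 0 0) :=
  hε.apply_eq_of_mul_eq_mul swapMat_mem_Sp4Z (translMat_mem_Sp4Z 0 0 1) (translMat_mem_Sp4Z 1 0 0)
    (by decide)

lemma apply_translMat_off_diag (hε : IsEps ε) : ε (translMat 0 1 0) = ε (translMat 1 0 0) := by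
  have hconj := hε.apply_eq_of_mul_eq_mul shearMat_mem_Sp4Z (translMat_mem_Sp4Z 1 0 0)
    (translMat_mem_Sp4Z 1 1 1) (by decide)
  rw [show translMat 1 1 1 = translMat 0 0 1 * translMat 1 0 0 * translMat 0 1 0 by decide,
    hε.2.1 _ (Sp4Z_mul_mem (translMat_mem_Sp4Z _ _ _) (translMat_mem_Sp4Z _ _ _)) _
      (translMat_mem_Sp4Z _ _ _), hε.2.1 _ (translMat_mem_Sp4Z _ _ _) _ (translMat_mem_Sp4Z _ _ _),
    hε.apply_translMat_snd, ← hε.2.1 _ (translMat_mem_Sp4Z _ _ _) _ (translMat_mem_Sp4Z _ _ _),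
    hε.apply_mul_self (translMat_mem_Sp4Z _ _ _), one_mul] at hconj
  exact hconj.symm

lemma apply_partialInvMat (hε : IsEps ε) : ε partialInvMat = ε (translMat 1 0 0) := by
  have hT := translMat_mem_Sp4Z 1 0 0
  have hJ := partialInvMat_mem_Sp4Z
  have hTJ := Sp4Z_mul_mem hT hJ
  have hcube := congrArg ε (show translMat 1 0 0 * partialInvMat *
    (translMat 1 0 0 * partialInvMat * (translMat 1 0 0 * partialInvMat)) =
      partialInvMat * partialInvMat by decide)
  rw [hε.2.1 _ hTJ _ (Sp4Z_mul_mem hTJ hTJ), hε.apply_mul_self hTJ, hε.apply_mul_self hJ,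
    hε.2.1 _ hT _ hJ] at hcube
  rcases hε.1 _ hT with h | h <;> rw [h] at hcube ⊢
  · linear_combination hcube
  · linear_combination -hcube

lemma apply_shearMat (hε : IsEps ε) : ε shearMat = ε (translMat 1 0 0) := by
  have hP := reflMat_mem_Sp4Z
  have hPL := Sp4Z_mul_mem hP shearMat_mem_Sp4Z
  have hconj := hε.apply_eq_of_mul_eq_mul partialInvMat_mem_Sp4Z (translMat_mem_Sp4Z 0 1 0)
    (Sp4Z_mul_mem hPL hP) (by decide)
  rw [hε.2.1 _ hPL _ hP, hε.2.1 _ hP _ shearMat_mem_Sp4Z, hε.apply_reflMat,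
    hε.apply_translMat_off_diag, one_mul, mul_one] at hconj
  exact hconj.symm

lemma apply_swapMat (hε : IsEps ε) : ε swapMat = ε (translMat 1 0 0) := by
  have hP := reflMat_mem_Sp4Z
  have hL := shearMat_mem_Sp4Z
  have hPL := Sp4Z_mul_mem hP hL
  have hV := Sp4Z_mul_mem (Sp4Z_mul_mem swapMat_mem_Sp4Z hL) swapMat_mem_Sp4Z
  have hrel := congrArg ε (show swapMat * shearMat * swapMat * (reflMat * shearMat * reflMat *
    (swapMat * shearMat * swapMat)) = reflMat * swapMat by decide)
  have hVε := hε.apply_mul_self hV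
  rw [hε.2.1 _ hV _ (Sp4Z_mul_mem (Sp4Z_mul_mem hPL hP) hV), hε.2.1 _ (Sp4Z_mul_mem hPL hP) _ hV,
    hε.2.1 _ hPL _ hP, hε.2.1 _ hP _ hL, hε.2.1 _ hP _ swapMat_mem_Sp4Z, hε.apply_reflMat,
    hε.apply_shearMat] at hrel
  rw [hε.2.1 _ hV _ hV] at hVε
  linear_combination ε (translMat 1 0 0) * hVε - hrel

lemma apply_translMat_one (hε : IsEps ε) : ε (translMat 1 0 0) = -1 := by
  refine (hε.1 _ (translMat_mem_Sp4Z 1 0 0)).resolve_left fun h ↦ ?_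
  obtain ⟨γ, hγ, hne⟩ := hε.2.2
  refine hne (Sp4Z_induction (p := fun γ ↦ ε γ = 1) (forall_mem_sp4Gens.2 ?_) hε.apply_one ?_ hγ)
  · rw [hε.apply_partialInvMat, hε.apply_swapMat, hε.apply_shearMat]
    exact ⟨h, h, h, h⟩
  · intro γ hγ δ hδ h1 h2
    rw [hε.2.1 γ hγ δ hδ, h1, h2, one_mul]

theorem apply_gen (hε : IsEps ε) : ∀ g ∈ sp4Gens, ε g = -1 := by
  rw [forall_mem_sp4Gens, hε.apply_partialInvMat, hε.apply_swapMat, hε.apply_shearMat]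
  exact ⟨hε.apply_translMat_one, hε.apply_translMat_one, hε.apply_translMat_one,
    hε.apply_translMat_one⟩

end IsEps

/-! ## The action of the generators on `ℍ₂` -/

section Action

/-- The point `(t z; z u)` of `ℍ₂`. -/
def symMat (t z u : ℂ) : Fin 2 → Fin 2 → ℂ := ![![t, z], ![z, u]]

variable {t z u : ℂ} {γ δ : Matrix (Fin 4) (Fin 4) ℤ} {τ : Fin 2 → Fin 2 → ℂ}

lemma of_symMat (t z u : ℂ) : Matrix.of (symMat t z u) = !![t, z; z, u] := rfl

lemma symMat_mem_H2 : symMat t z u ∈ H2 ↔ 0 < t.im ∧ z.im ^ 2 < t.im * u.im := by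
  constructor
  · rintro ⟨-, h⟩
    have hdiag := h.diag_pos (i := 0)
    have hdet := h.det_pos
    simp only [symMat, Matrix.det_fin_two, of_apply, cons_val', cons_val_zero, cons_val_one,
      cons_val_fin_one] at hdiag hdet
    exact ⟨hdiag, by nlinarith⟩
  · rintro ⟨ht, hdet⟩
    refine ⟨?_, Matrix.PosDef.of_dotProduct_mulVec_pos ?_ fun x hx ↦ ?_⟩
    · ext i j; fin_cases i <;> fin_cases j <;> simp [symMat]
    · ext i j; fin_cases i <;> fin_cases j <;> simp [symMat]
    · have hsq : star x ⬝ᵥ (Matrix.of fun i j ↦ (symMat t z u i j).im) *ᵥ x =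
          ((t.im * x 0 + z.im * x 1) ^ 2 + (t.im * u.im - z.im ^ 2) * x 1 ^ 2) / t.im := by
        simp [symMat, dotProduct, Matrix.mulVec, Fin.sum_univ_two]
        field_simp
        ring
      rw [hsq]
      refine div_pos ?_ ht
      by_cases hx1 : x 1 = 0
      · have hx0 : x 0 ≠ 0 := fun hx0 ↦ hx (funext (Fin.forall_fin_two.2 ⟨hx0, hx1⟩))
        rw [hx1]
        ring_nf
        positivity
      · have : 0 < (t.im * u.im - z.im ^ 2) * x 1 ^ 2 := mul_pos (by linarith) (by positivity)
        positivity

lemma exists_eq_symMat (hτ : τ ∈ H2) : ∃ t z u, τ = symMat t z u := by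
  refine ⟨τ 0 0, τ 0 1, τ 1 1, ?_⟩
  have hsymm : τ 1 0 = τ 0 1 := congrFun (congrFun hτ.1 0) 1
  ext i j; fin_cases i <;> fin_cases j <;> simp [symMat, hsymm]

lemma ne_zero_of_symMat_mem_H2 (h : symMat t z u ∈ H2) : t ≠ 0 := by
  rintro rfl
  simp [symMat_mem_H2] at h

lemma blk_mul (γ δ : Matrix (Fin 4) (Fin 4) ℤ) (r s : Fin 2) :
    blk (γ * δ) r s = blk γ r 0 * blk δ 0 s + blk γ r 1 * blk δ 1 s := by
  ext i j
  simp only [blk, Matrix.of_apply, Matrix.add_apply, Matrix.mul_apply, Fin.sum_univ_four,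
    Fin.sum_univ_two]
  push_cast
  rw [add_assoc (_ + _)]
  rfl

lemma of_moeb (γ : Matrix (Fin 4) (Fin 4) ℤ) (τ : Fin 2 → Fin 2 → ℂ) :
    Matrix.of (moeb γ τ) = (blk γ 0 0 * Matrix.of τ + blk γ 0 1) * (den γ τ)⁻¹ := rfl

lemma blk_mul_add_blk (γ : Matrix (Fin 4) (Fin 4) ℤ) (r : Fin 2) (hden : (den δ τ).det ≠ 0) :
    blk (γ * δ) r 0 * Matrix.of τ + blk (γ * δ) r 1 =
      (blk γ r 0 * Matrix.of (moeb δ τ) + blk γ r 1) * den δ τ := by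
  have hcancel (A B : Matrix (Fin 2) (Fin 2) ℂ) : (A * (B * (den δ τ)⁻¹)) * den δ τ = A * B := by
    rw [Matrix.mul_assoc, Matrix.mul_assoc, Matrix.nonsing_inv_mul _ hden.isUnit, Matrix.mul_one]
  rw [of_moeb, blk_mul, blk_mul, Matrix.add_mul (blk γ r 0 * _) (blk γ r 1), hcancel]
  conv_rhs => rw [den]
  noncomm_ring

lemma den_mul (γ : Matrix (Fin 4) (Fin 4) ℤ) (hden : (den δ τ).det ≠ 0) :
    den (γ * δ) τ = den γ (moeb δ τ) * den δ τ := blk_mul_add_blk γ 1 hden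

lemma moeb_mul (γ : Matrix (Fin 4) (Fin 4) ℤ) (hden : (den δ τ).det ≠ 0) :
    moeb (γ * δ) τ = moeb γ (moeb δ τ) := by
  refine Matrix.of.injective ?_
  rw [of_moeb, of_moeb γ, blk_mul_add_blk γ 0 hden, den_mul γ hden, Matrix.mul_inv_rev,
    Matrix.mul_assoc _ (den δ τ), ← Matrix.mul_assoc (den δ τ),
    Matrix.mul_nonsing_inv _ hden.isUnit, Matrix.one_mul]

lemma moeb_eq_of_mul_den {σ : Fin 2 → Fin 2 → ℂ} (hden : (den γ τ).det ≠ 0)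
    (h : blk γ 0 0 * Matrix.of τ + blk γ 0 1 = Matrix.of σ * den γ τ) : moeb γ τ = σ := by
  refine Matrix.of.injective ?_
  rw [of_moeb, h, Matrix.mul_assoc, Matrix.mul_nonsing_inv _ hden.isUnit, Matrix.mul_one]

lemma blk_mul_symMat_add_blk (γ : Matrix (Fin 4) (Fin 4) ℤ) (r : Fin 2) (t z u : ℂ) :
    blk γ r 0 * Matrix.of (symMat t z u) + blk γ r 1 =
      Matrix.of fun i ↦ ![blk γ r 0 i 0 * t + blk γ r 0 i 1 * z + blk γ r 1 i 0,
        blk γ r 0 i 0 * z + blk γ r 0 i 1 * u + blk γ r 1 i 1] := by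
  ext i j
  fin_cases j <;> simp [symMat, Matrix.mul_apply, Fin.sum_univ_two]

lemma num_symMat (γ : Matrix (Fin 4) (Fin 4) ℤ) (t z u : ℂ) :
    blk γ 0 0 * Matrix.of (symMat t z u) + blk γ 0 1 =
      !![γ 0 0 * t + γ 0 1 * z + γ 0 2, γ 0 0 * z + γ 0 1 * u + γ 0 3;
        γ 1 0 * t + γ 1 1 * z + γ 1 2, γ 1 0 * z + γ 1 1 * u + γ 1 3] := by
  rw [blk_mul_symMat_add_blk]
  ext i j
  fin_cases i <;> fin_cases j <;> rfl

lemma den_symMat (γ : Matrix (Fin 4) (Fin 4) ℤ) (t z u : ℂ) : den γ (symMat t z u) =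
    !![γ 2 0 * t + γ 2 1 * z + γ 2 2, γ 2 0 * z + γ 2 1 * u + γ 2 3;
      γ 3 0 * t + γ 3 1 * z + γ 3 2, γ 3 0 * z + γ 3 1 * u + γ 3 3] := by
  rw [den, blk_mul_symMat_add_blk]
  ext i j
  fin_cases i <;> fin_cases j <;> rfl

lemma den_translMat (p q r : ℤ) (t z u : ℂ) :
    den (translMat p q r) (symMat t z u) = 1 := by
  simp [den_symMat, translMat, Matrix.one_fin_two]

lemma den_partialInvMat (t z u : ℂ) : den partialInvMat (symMat t z u) = !![t, z; 0, 1] := by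
  simp [den_symMat, partialInvMat]

lemma den_swapMat (t z u : ℂ) : den swapMat (symMat t z u) = !![0, 1; 1, 0] := by
  simp [den_symMat, swapMat]

lemma den_shearMat (t z u : ℂ) : den shearMat (symMat t z u) = !![1, -1; 0, 1] := by
  simp [den_symMat, shearMat]

lemma den_reflMat (t z u : ℂ) : den reflMat (symMat t z u) = !![1, 0; 0, -1] := by
  simp [den_symMat, reflMat]

lemma moeb_translMat (p q r : ℤ) (t z u : ℂ) :
    moeb (translMat p q r) (symMat t z u) = symMat (t + p) (z + q) (u + r) := by
  apply moeb_eq_of_mul_den <;> rw [den_translMat]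
  · simp
  · rw [num_symMat, of_symMat]
    simp [translMat]

lemma moeb_partialInvMat (ht : t ≠ 0) (z u : ℂ) :
    moeb partialInvMat (symMat t z u) = symMat (-1 / t) (z / t) (u - z ^ 2 / t) := by
  apply moeb_eq_of_mul_den <;> rw [den_partialInvMat]
  · simpa [Matrix.det_fin_two] using ht
  · rw [num_symMat, of_symMat]
    ext i j
    fin_cases i <;> fin_cases j <;> simp [partialInvMat, Matrix.mul_apply, Fin.sum_univ_two, ht]
    · field_simp
      ring
    · ring

lemma moeb_swapMat (t z u : ℂ) : moeb swapMat (symMat t z u) = symMat u z t := by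
  apply moeb_eq_of_mul_den <;> rw [den_swapMat]
  · simp [Matrix.det_fin_two]
  · rw [num_symMat, of_symMat]
    simp [swapMat]

lemma moeb_shearMat (t z u : ℂ) :
    moeb shearMat (symMat t z u) = symMat t (z + t) (u + 2 * z + t) := by
  apply moeb_eq_of_mul_den <;> rw [den_shearMat]
  · simp [Matrix.det_fin_two]
  · rw [num_symMat, of_symMat]
    ext i j
    fin_cases i <;> fin_cases j <;> simp [shearMat, Matrix.mul_apply, Fin.sum_univ_two] <;> ring

lemma moeb_reflMat (t z u : ℂ) : moeb reflMat (symMat t z u) = symMat t (-z) u := by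
  apply moeb_eq_of_mul_den <;> rw [den_reflMat]
  · simp [Matrix.det_fin_two]
  · rw [num_symMat, of_symMat]
    simp [reflMat]

lemma symMat_inv_mem_H2 (h : symMat t z u ∈ H2) :
    symMat (-1 / t) (z / t) (u - z ^ 2 / t) ∈ H2 := by
  rw [symMat_mem_H2] at h ⊢
  obtain ⟨ht, hdet⟩ := h
  have hn : 0 < normSq t := normSq_pos.2 fun h0 ↦ by simp [h0] at ht
  have him_inv : (-1 / t).im = t.im / normSq t := by simp [neg_div]
  have him_det : (-1 / t).im * (u - z ^ 2 / t).im - (z / t).im ^ 2 =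
      (t.im * u.im - z.im ^ 2) / normSq t := by
    rw [him_inv, Complex.sub_im, Complex.div_im, Complex.div_im, pow_two, Complex.mul_im,
      Complex.mul_re]
    field_simp
    rw [normSq_apply]
    ring
  exact ⟨him_inv ▸ div_pos ht hn, sub_pos.1 (him_det ▸ div_pos (sub_pos.2 hdet) hn)⟩

lemma symMat_swap_mem_H2 (h : symMat t z u ∈ H2) : symMat u z t ∈ H2 := by
  rw [symMat_mem_H2] at h ⊢
  exact ⟨pos_of_mul_pos_right ((sq_nonneg _).trans_lt h.2) h.1.le, mul_comm t.im _ ▸ h.2⟩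

lemma symMat_shear_mem_H2 (h : symMat t z u ∈ H2) :
    symMat t (z + t) (u + 2 * z + t) ∈ H2 := by
  rw [symMat_mem_H2] at h ⊢
  refine ⟨h.1, ?_⟩
  simp only [add_im, mul_im, re_ofNat, im_ofNat, zero_mul, add_zero]
  nlinarith [h.2]

lemma symMat_add_intCast_mem_H2 (p q r : ℤ) (h : symMat t z u ∈ H2) :
    symMat (t + p) (z + q) (u + r) ∈ H2 := by
  rw [symMat_mem_H2] at h ⊢
  simpa using h

lemma det_den_ne_zero_and_moeb_mem_H2_of_gen {g : Matrix (Fin 4) (Fin 4) ℤ} (hg : g ∈ sp4Gens)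
    (hτ : τ ∈ H2) : (den g τ).det ≠ 0 ∧ moeb g τ ∈ H2 := by
  obtain ⟨t, z, u, rfl⟩ := exists_eq_symMat hτ
  have ht := ne_zero_of_symMat_mem_H2 hτ
  revert g
  rw [forall_mem_sp4Gens, den_translMat, den_partialInvMat, den_swapMat, den_shearMat,
    moeb_translMat, moeb_partialInvMat ht, moeb_swapMat, moeb_shearMat]
  exact ⟨⟨by simp, symMat_add_intCast_mem_H2 1 0 0 hτ⟩,
    ⟨by simpa [Matrix.det_fin_two] using ht, symMat_inv_mem_H2 hτ⟩,
    ⟨by simp [Matrix.det_fin_two], symMat_swap_mem_H2 hτ⟩,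
    ⟨by simp [Matrix.det_fin_two], symMat_shear_mem_H2 hτ⟩⟩

theorem det_den_ne_zero_and_moeb_mem_H2 (hγ : γ ∈ Sp4Z) (hτ : τ ∈ H2) :
    (den γ τ).det ≠ 0 ∧ moeb γ τ ∈ H2 := by
  revert τ
  refine Sp4Z_induction (p := fun γ ↦ ∀ {τ}, τ ∈ H2 → (den γ τ).det ≠ 0 ∧ moeb γ τ ∈ H2)
    (fun g hg τ hτ ↦ det_den_ne_zero_and_moeb_mem_H2_of_gen hg hτ) (fun {τ} hτ ↦ ?_)
    (fun γ _ δ _ ihγ ihδ τ hτ ↦ ?_) hγ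
  · obtain ⟨t, z, u, rfl⟩ := exists_eq_symMat hτ
    rw [show (1 : Matrix (Fin 4) (Fin 4) ℤ) = translMat 0 0 0 by decide, den_translMat,
      moeb_translMat]
    exact ⟨by simp, symMat_add_intCast_mem_H2 0 0 0 hτ⟩
  · obtain ⟨hdet, hmem⟩ := ihδ hτ
    rw [den_mul γ hdet, moeb_mul γ hdet, Matrix.det_mul]
    exact ⟨mul_ne_zero (ihγ hmem).1 hdet, (ihγ hmem).2⟩

end Action

/-! ### Symmetric powers as binary forms -/

section BinaryForm

variable {j : ℕ}

/-- The binary form `∑ l, v l * a ^ (j - l) * b ^ l` of degree `j` with coefficient vector `v`; the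
action `symAct` is the substitution action on binary forms. -/
def binForm (v : Fin (j + 1) → ℂ) (a b : ℂ) : ℂ :=
  ∑ l, v l * a ^ (j - (l : ℕ)) * b ^ (l : ℕ)

lemma binForm_injective {v w : Fin (j + 1) → ℂ} (h : ∀ x, binForm v 1 x = binForm w 1 x) :
    v = w := by
  have hpoly : (∑ l : Fin (j + 1), Polynomial.C (v l) * Polynomial.X ^ (l : ℕ)) =
      ∑ l : Fin (j + 1), Polynomial.C (w l) * Polynomial.X ^ (l : ℕ) :=
    Polynomial.funext fun x ↦ by simpa [binForm, Polynomial.eval_finsetSum] using h x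
  funext i
  simpa [Polynomial.finsetSum_coeff, Polynomial.coeff_X_pow, Fin.val_inj] using
    congrArg (fun p ↦ Polynomial.coeff p (i : ℕ)) hpoly

lemma binForm_smul (c : ℂ) (v : Fin (j + 1) → ℂ) (a b : ℂ) :
    binForm (c • v) a b = c * binForm v a b := by
  simp only [binForm, Finset.mul_sum, Pi.smul_apply, smul_eq_mul, mul_assoc]

lemma binForm_mul_mul (v : Fin (j + 1) → ℂ) (c a b : ℂ) :
    binForm v (c * a) (c * b) = c ^ j * binForm v a b := by
  rw [binForm, binForm, Finset.mul_sum]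
  refine Finset.sum_congr rfl fun l _ ↦ ?_
  have hpow : c ^ j = c ^ (j - (l : ℕ)) * c ^ (l : ℕ) := by
    rw [← pow_add, Nat.sub_add_cancel (Nat.lt_succ_iff.1 l.2)]
  rw [mul_pow, mul_pow, hpow]
  ring

lemma sum_symCoeff_mul_pow (m : Matrix (Fin 2) (Fin 2) ℂ) (l : Fin (j + 1)) (x : ℂ) :
    ∑ i, symCoeff j m l i * x ^ (i : ℕ) =
      (m 0 0 + m 1 0 * x) ^ (j - (l : ℕ)) * (m 0 1 + m 1 1 * x) ^ (l : ℕ) := by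
  set q : Polynomial ℂ :=
    (Polynomial.C (m 0 0) + Polynomial.C (m 1 0) * Polynomial.X) ^ (j - (l : ℕ)) *
      (Polynomial.C (m 0 1) + Polynomial.C (m 1 1) * Polynomial.X) ^ (l : ℕ) with hq
  have hlin (c d : ℂ) : (Polynomial.C c + Polynomial.C d * Polynomial.X).natDegree ≤ 1 := by
    compute_degree
  have hdeg : q.natDegree < j + 1 := by
    have hmul : q.natDegree ≤ _ := Polynomial.natDegree_mul_le
    have hl := Polynomial.natDegree_pow_le_of_le (j - (l : ℕ)) (hlin (m 0 0) (m 1 0))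
    have hr := Polynomial.natDegree_pow_le_of_le (l : ℕ) (hlin (m 0 1) (m 1 1))
    omega
  have heval := Polynomial.eval_eq_sum_range' hdeg x
  rw [← Fin.sum_univ_eq_sum_range (fun i ↦ q.coeff i * x ^ i)] at heval
  rw [hq] at heval
  simpa [symCoeff] using heval.symm

lemma binForm_symAct_one (m : Matrix (Fin 2) (Fin 2) ℂ) (v : Fin (j + 1) → ℂ) (x : ℂ) :
    binForm (symAct j m v) 1 x = binForm v (m 0 0 + m 1 0 * x) (m 0 1 + m 1 1 * x) := by
  simp only [binForm, symAct, one_pow, mul_one, Finset.sum_mul]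
  rw [Finset.sum_comm]
  refine Finset.sum_congr rfl fun l _ ↦ ?_
  rw [mul_assoc, ← sum_symCoeff_mul_pow, Finset.mul_sum]
  exact Finset.sum_congr rfl fun i _ ↦ by ring

lemma binForm_symAct (m : Matrix (Fin 2) (Fin 2) ℂ) (v : Fin (j + 1) → ℂ) (a b : ℂ) :
    binForm (symAct j m v) a b = binForm v (m 0 0 * a + m 1 0 * b) (m 0 1 * a + m 1 1 * b) := by
  have hcont_left : Continuous fun a ↦ binForm (symAct j m v) a b := by
    unfold binForm
    fun_prop
  have hcont_right :
      Continuous fun a ↦ binForm v (m 0 0 * a + m 1 0 * b) (m 0 1 * a + m 1 1 * b) := by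
    unfold binForm
    fun_prop
  refine congrFun (hcont_left.ext_on (dense_compl_singleton (0 : ℂ)) hcont_right ?_) a
  intro a (ha : a ≠ 0)
  calc binForm (symAct j m v) a b
    _ = binForm (symAct j m v) (a * 1) (a * (b / a)) := by rw [mul_one, mul_div_cancel₀ _ ha]
    _ = binForm v (a * (m 0 0 + m 1 0 * (b / a))) (a * (m 0 1 + m 1 1 * (b / a))) := by
      rw [binForm_mul_mul, binForm_symAct_one, binForm_mul_mul]
    _ = binForm v (m 0 0 * a + m 1 0 * b) (m 0 1 * a + m 1 1 * b) := by congr 1 <;> field_simp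

lemma symAct_mul (m n : Matrix (Fin 2) (Fin 2) ℂ) (v : Fin (j + 1) → ℂ) :
    symAct j (m * n) v = symAct j m (symAct j n v) := by
  refine binForm_injective fun x ↦ ?_
  simp only [binForm_symAct, Matrix.mul_apply, Fin.sum_univ_two]
  congr 1 <;> ring

lemma symAct_one (v : Fin (j + 1) → ℂ) : symAct j 1 v = v :=
  binForm_injective fun x ↦ by simp [binForm_symAct]

lemma symAct_upperTriangular (t z : ℂ) (v : Fin (j + 1) → ℂ) (i : Fin (j + 1)) :
    symAct j !![t, z; 0, 1] v i =
      ∑ l : Fin (j + 1), ((l : ℕ).choose i : ℂ) * z ^ ((l : ℕ) - i) * t ^ (j - (l : ℕ)) * v l := by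
  refine Finset.sum_congr rfl fun l _ ↦ ?_
  have hpoly : (Polynomial.C (!![t, z; 0, 1] 0 0) +
        Polynomial.C (!![t, z; 0, 1] 1 0) * Polynomial.X) ^ (j - (l : ℕ)) *
      (Polynomial.C (!![t, z; 0, 1] 0 1) +
        Polynomial.C (!![t, z; 0, 1] 1 1) * Polynomial.X) ^ (l : ℕ) =
      Polynomial.C (t ^ (j - (l : ℕ))) * (Polynomial.X + Polynomial.C z) ^ (l : ℕ) := by
    simp [add_comm (Polynomial.C z)]
  rw [symCoeff, hpoly, Polynomial.coeff_C_mul, Polynomial.coeff_X_add_C_pow]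
  ring

lemma symAct_swap (v : Fin (j + 1) → ℂ) : symAct j !![0, 1; 1, 0] v = fun i ↦ v i.rev := by
  refine binForm_injective fun x ↦ ?_
  rw [binForm_symAct, binForm, binForm, ← Equiv.sum_comp Fin.revPerm]
  refine Finset.sum_congr rfl fun l _ ↦ ?_
  have hsub : j - (j - (l : ℕ)) = l := by omega
  simp [Fin.val_rev, hsub]

lemma symAct_diag_one_neg_one (v : Fin (j + 1) → ℂ) :
    symAct j !![1, 0; 0, -1] v =
      fun i : Fin (j + 1) ↦ (-1) ^ (i : ℕ) * v i := by
  refine binForm_injective fun x ↦ ?_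
  rw [binForm_symAct, binForm, binForm]
  refine Finset.sum_congr rfl fun l _ ↦ ?_
  simp only [of_apply, cons_val', cons_val_zero, cons_val_one, cons_val_fin_one, mul_one, zero_mul,
    add_zero, zero_add, one_pow, neg_one_mul, neg_pow x]
  ring

variable {k : ℤ}

lemma wt_mul (m n : Matrix (Fin 2) (Fin 2) ℂ) (v : Fin (j + 1) → ℂ) :
    wt j k (m * n) v = wt j k m (wt j k n v) := by
  rw [wt, wt, wt, symAct_smul, symAct_mul, Matrix.det_mul, mul_zpow, mul_smul]

lemma wt_one (v : Fin (j + 1) → ℂ) : wt j k 1 v = v := by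
  simp [wt, symAct_one]

end BinaryForm

/-! ### Transformation laws in coordinates -/

section TransformationLaws

variable {j : ℕ} {k : ℤ} {ε : Matrix (Fin 4) (Fin 4) ℤ → ℂ}
  {F : (Fin 2 → Fin 2 → ℂ) → Fin (j + 1) → ℂ}

lemma den_one (τ : Fin 2 → Fin 2 → ℂ) : den 1 τ = 1 := by
  ext i j
  fin_cases i <;> fin_cases j <;> simp [den, blk, Matrix.mul_apply]

lemma moeb_one (τ : Fin 2 → Fin 2 → ℂ) : moeb 1 τ = τ := by
  ext i j
  fin_cases i <;> fin_cases j <;> simp [moeb, den_one, blk, Matrix.mul_apply]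

theorem transforms_of_sp4Gens (hε : IsEps ε)
    (hF : ∀ g ∈ sp4Gens, ∀ τ ∈ H2, F (moeb g τ) = -wt j k (den g τ) (F τ)) :
    ∀ γ ∈ Sp4Z, ∀ τ ∈ H2, F (moeb γ τ) = ε γ • wt j k (den γ τ) (F τ) := by
  intro γ hγ
  refine Sp4Z_induction (p := fun γ ↦ ∀ τ ∈ H2, F (moeb γ τ) = ε γ • wt j k (den γ τ) (F τ))
    ?_ ?_ ?_ hγ
  · intro g hg τ hτ
    rw [hF g hg τ hτ, hε.apply_gen g hg, neg_one_smul]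
  · intro τ _
    rw [moeb_one, den_one, wt_one, hε.apply_one, one_smul]
  · intro γ hγ δ hδ ihγ ihδ τ hτ
    obtain ⟨hdet, hmem⟩ := det_den_ne_zero_and_moeb_mem_H2 hδ hτ
    rw [den_mul γ hdet, moeb_mul γ hdet, ihγ _ hmem, ihδ τ hτ, hε.2.1 γ hγ δ hδ, wt_smul, wt_mul,
      mul_smul]

theorem slashS_eq_smul
    (hF : ∀ γ ∈ Sp4Z, ∀ τ ∈ H2, F (moeb γ τ) = ε γ • wt j k (den γ τ) (F τ))
    {γ : Matrix (Fin 4) (Fin 4) ℤ} (hγ : γ ∈ Sp4Z) {τ : Fin 2 → Fin 2 → ℂ} (hτ : τ ∈ H2) :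
    slashS j k γ F τ = ε γ • F τ := by
  have hdet := (det_den_ne_zero_and_moeb_mem_H2 hγ hτ).1
  rw [slashS, hF γ hγ τ hτ, symAct_smul, wt, symAct_smul, ← symAct_mul,
    Matrix.nonsing_inv_mul _ (isUnit_iff_ne_zero.2 hdet), symAct_one, smul_comm, smul_smul (_ ^ _),
    _root_.zpow_neg, inv_mul_cancel₀ (zpow_ne_zero _ hdet), one_smul]

/-- The transformation laws, in the coordinates `τ = (t z; z u)`, of a `Sym^j ⊗ det^k`-valued form
with character `ε` for even `k`, under the translations, `reflMat`, `swapMat`, `shearMat` and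
`partialInvMat`. -/
structure IsEpsForm (k : ℤ) (f : ℂ → ℂ → ℂ → Fin (j + 1) → ℂ) : Prop where
  add_one_fst : ∀ t z u, symMat t z u ∈ H2 → f (t + 1) z u = -f t z u
  add_one_mid : ∀ t z u, symMat t z u ∈ H2 → f t (z + 1) u = -f t z u
  add_one_snd : ∀ t z u, symMat t z u ∈ H2 → f t z (u + 1) = -f t z u
  neg_mid : ∀ t z u, symMat t z u ∈ H2 → ∀ i, f t (-z) u i = (-1) ^ (i : ℕ) * f t z u i
  swap : ∀ t z u, symMat t z u ∈ H2 → ∀ i, f u z t i = -f t z u i.rev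
  shear : ∀ t z u, symMat t z u ∈ H2 → ∀ i : Fin (j + 1), f t (z + t) (u + 2 * z + t) i =
    -∑ l : Fin (j + 1), ((l : ℕ).choose i : ℂ) * (-1) ^ ((l : ℕ) - i) * f t z u l
  inv : ∀ t z u, symMat t z u ∈ H2 → ∀ i : Fin (j + 1), f (-1 / t) (z / t) (u - z ^ 2 / t) i =
    -(t ^ k * ∑ l : Fin (j + 1),
      ((l : ℕ).choose i : ℂ) * z ^ ((l : ℕ) - i) * t ^ (j - (l : ℕ)) * f t z u l)

theorem IsEps.isEpsForm (hε : IsEps ε) (hk : Even k)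
    (hF : ∀ γ ∈ Sp4Z, ∀ τ ∈ H2, F (moeb γ τ) = ε γ • wt j k (den γ τ) (F τ)) :
    IsEpsForm k fun t z u ↦ F (symMat t z u) where
  add_one_fst t z u h := by
    simpa [moeb_translMat, den_translMat, wt_one, hε.apply_translMat_one] using
      hF _ (translMat_mem_Sp4Z 1 0 0) _ h
  add_one_mid t z u h := by
    simpa [moeb_translMat, den_translMat, wt_one, hε.apply_translMat_off_diag,
      hε.apply_translMat_one] using hF _ (translMat_mem_Sp4Z 0 1 0) _ h
  add_one_snd t z u h := by
    simpa [moeb_translMat, den_translMat, wt_one, hε.apply_translMat_snd,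
      hε.apply_translMat_one] using hF _ (translMat_mem_Sp4Z 0 0 1) _ h
  neg_mid t z u h i := by
    simpa [moeb_reflMat, den_reflMat, wt, symAct_diag_one_neg_one, Matrix.det_fin_two,
      hε.apply_reflMat, hk.neg_one_zpow] using congrFun (hF _ reflMat_mem_Sp4Z _ h) i
  swap t z u h i := by
    simpa [moeb_swapMat, den_swapMat, wt, symAct_swap, Matrix.det_fin_two, hε.apply_swapMat,
      hε.apply_translMat_one, hk.neg_one_zpow] using congrFun (hF _ swapMat_mem_Sp4Z _ h) i
  shear t z u h i := by
    simpa [moeb_shearMat, den_shearMat, wt, symAct_upperTriangular, Matrix.det_fin_two,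
      hε.apply_shearMat, hε.apply_translMat_one] using congrFun (hF _ shearMat_mem_Sp4Z _ h) i
  inv t z u h i := by
    simpa [moeb_partialInvMat (ne_zero_of_symMat_mem_H2 h), den_partialInvMat, wt,
      symAct_upperTriangular, Matrix.det_fin_two, hε.apply_partialInvMat,
      hε.apply_translMat_one] using congrFun (hF _ partialInvMat_mem_Sp4Z _ h) i

theorem transforms_sp4Gens_of_binForm (hk : Even k)
    (htransl : ∀ t z u, symMat t z u ∈ H2 → ∀ a b,
      binForm (F (symMat (t + 1) z u)) a b = -binForm (F (symMat t z u)) a b)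
    (hinv : ∀ t z u, symMat t z u ∈ H2 → ∀ a b,
      binForm (F (symMat (-1 / t) (z / t) (u - z ^ 2 / t))) a b =
        -(t ^ k * binForm (F (symMat t z u)) (t * a) (z * a + b)))
    (hswap : ∀ t z u, symMat t z u ∈ H2 → ∀ a b,
      binForm (F (symMat u z t)) a b = -binForm (F (symMat t z u)) b a)
    (hshear : ∀ t z u, symMat t z u ∈ H2 → ∀ a b,
      binForm (F (symMat t (z + t) (u + 2 * z + t))) a b =
        -binForm (F (symMat t z u)) a (b - a)) :
    ∀ g ∈ sp4Gens, ∀ τ ∈ H2, F (moeb g τ) = -wt j k (den g τ) (F τ) := by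
  suffices h : ∀ g ∈ sp4Gens, ∀ t z u, symMat t z u ∈ H2 → ∀ x,
      binForm (F (moeb g (symMat t z u))) 1 x =
        -((den g (symMat t z u)).det ^ k *
          binForm (symAct j (den g (symMat t z u)) (F (symMat t z u))) 1 x) by
    intro g hg τ hτ
    obtain ⟨t, z, u, rfl⟩ := exists_eq_symMat hτ
    refine binForm_injective fun x ↦ ?_
    rw [h g hg t z u hτ x, wt, ← neg_smul, binForm_smul, neg_mul]
  refine forall_mem_sp4Gens.2 ⟨?_, ?_, ?_, ?_⟩ <;> intro t z u h x <;> rw [binForm_symAct]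
  · simpa [moeb_translMat, den_translMat] using htransl t z u h 1 x
  · simpa [moeb_partialInvMat (ne_zero_of_symMat_mem_H2 h), den_partialInvMat,
      Matrix.det_fin_two] using hinv t z u h 1 x
  · simpa [moeb_swapMat, den_swapMat, Matrix.det_fin_two, hk.neg_one_zpow] using
      hswap t z u h 1 x
  · simpa [moeb_shearMat, den_shearMat, Matrix.det_fin_two, sub_eq_neg_add] using
      hshear t z u h 1 x

end TransformationLaws

/-! ### Fourier expansions on tube domains -/

section FourierUniqueness

open MeasureTheory UnitAddTorus

variable {ι : Type*} [Fintype ι]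

/-- The character `w ↦ exp (2πi ∑ j, n j * w j)` of `ℂ^ι` attached to the lattice point `n`. -/
def expChar (n : ι → ℤ) (w : ι → ℂ) : ℂ := cexp (2 * Real.pi * I * ∑ j, (n j : ℂ) * w j)

lemma expChar_add (n : ι → ℤ) (w w' : ι → ℂ) :
    expChar n (w + w') = expChar n w * expChar n w' := by
  rw [expChar, expChar, expChar, ← Complex.exp_add, ← mul_add, ← Finset.sum_add_distrib]
  simp only [Pi.add_apply, mul_add]

lemma expChar_neg_mul_self (n : ι → ℤ) (w : ι → ℂ) : expChar (-n) w * expChar n w = 1 := by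
  rw [expChar, expChar, ← Complex.exp_add, ← mul_add, ← Finset.sum_add_distrib]
  simp

lemma expChar_intCast (n m : ι → ℤ) : expChar n (fun i ↦ (m i : ℂ)) = 1 :=
  Complex.exp_eq_one_iff.2 ⟨∑ j, n j * m j, by push_cast; ring⟩

lemma norm_expChar (n : ι → ℤ) (w : ι → ℂ) :
    ‖expChar n w‖ = Real.exp (-(2 * Real.pi * ∑ j, n j * (w j).im)) := by
  rw [expChar, Complex.norm_exp]
  simp [Complex.mul_re, Complex.im_sum, Complex.mul_im]

@[fun_prop]
lemma differentiable_expChar (n : ι → ℤ) : Differentiable ℂ (expChar n) := by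
  unfold expChar
  fun_prop

lemma mFourier_coe (n : ι → ℤ) (x : ι → ℝ) :
    mFourier n (fun i ↦ (x i : UnitAddCircle)) = expChar n (fun i ↦ (x i : ℂ)) := by
  simp only [mFourier, ContinuousMap.coe_mk, fourier_coe_apply, expChar]
  rw [← Complex.exp_sum, Finset.mul_sum]
  congr 1
  exact Finset.sum_congr rfl fun j _ ↦ by push_cast; ring

lemma norm_mFourierCoeff_le (G : C(UnitAddTorus ι, ℂ)) (n : ι → ℤ) :
    ‖mFourierCoeff G n‖ ≤ ‖G‖ := by
  refine (norm_integral_le_of_norm_le_const (μ := Measure.pi fun _ ↦ AddCircle.haarAddCircle)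
    (C := ‖G‖) (Eventually.of_forall fun x ↦ ?_)).trans_eq (by simp)
  calc ‖mFourier (-n) x • G x‖ ≤ ‖mFourier (-n)‖ * ‖G‖ := by
        rw [norm_smul]
        exact mul_le_mul (ContinuousMap.norm_coe_le_norm _ x) (G.norm_coe_le_norm x)
          (norm_nonneg _) (norm_nonneg _)
    _ = ‖G‖ := by rw [mFourier_norm, one_mul]

lemma eq_zero_of_hasSum_mFourier_zero {c : (ι → ℤ) → ℂ}
    (h : HasSum (fun n ↦ c n • mFourier n) (0 : C(UnitAddTorus ι, ℂ))) (n : ι → ℤ) : c n = 0 := by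
  have hLp : HasSum (fun n ↦ c n • mFourierLp 2 n) (0 : Lp ℂ 2 _) := by
    have hmap := (ContinuousMap.toLp (E := ℂ) 2
      (Measure.pi fun _ : ι ↦ AddCircle.haarAddCircle) ℂ).hasSum h
    rw [map_zero] at hmap
    exact hmap.congr_fun fun n ↦ (map_smul _ _ _).symm
  have hinner := (innerSL ℂ (mFourierLp 2 n)).hasSum hLp
  rw [map_zero] at hinner
  have hortho := orthonormal_iff_ite.1 (orthonormal_mFourier (d := ι)) n
  have hite : HasSum (fun m ↦ c m * if n = m then (1 : ℂ) else 0) 0 :=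
    hinner.congr_fun fun m ↦ by rw [← hortho m, map_smul]; rfl
  have hsingle := hasSum_single (f := fun m ↦ c m * if n = m then (1 : ℂ) else 0) n
    fun m hm ↦ by simp [hm.symm]
  simpa using (hite.unique hsingle).symm

theorem eq_zero_of_hasSum_expChar_zero {c : (ι → ℤ) → ℂ}
    (h : ∀ x : ι → ℝ, HasSum (fun n ↦ c n * expChar n (fun i ↦ (x i : ℂ))) 0) (n : ι → ℤ) :
    c n = 0 := by
  have hsum : Summable fun n ↦ c n • mFourier n := by
    refine Summable.of_norm ((h 0).summable.norm.congr fun n ↦ ?_)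
    rw [norm_smul, mFourier_norm]
    simp [expChar]
  obtain ⟨f, hf⟩ := hsum
  suffices hf0 : f = 0 from eq_zero_of_hasSum_mFourier_zero (hf0 ▸ hf) n
  ext x
  obtain ⟨y, rfl⟩ : ∃ y : ι → ℝ, (fun i ↦ (y i : UnitAddCircle)) = x := by
    choose y hy using fun i ↦ QuotientAddGroup.mk_surjective (x i)
    exact ⟨y, funext hy⟩
  refine ((ContinuousMap.evalCLM ℂ fun i ↦ (y i : UnitAddCircle)).hasSum hf).unique ?_
  simpa [mFourier_coe, Function.comp_def] using h y

lemma exists_torus_lift {ι : Type*} {g : (ι → ℝ) → ℂ} (hg : Continuous g)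
    (hper : ∀ x (n : ι → ℤ), g (fun i ↦ x i + n i) = g x) :
    ∃ G : C(UnitAddTorus ι, ℂ), ∀ x : ι → ℝ, G (fun i ↦ (x i : UnitAddCircle)) = g x := by
  set q : (ι → ℝ) → UnitAddTorus ι := fun x i ↦ (x i : UnitAddCircle)
  have hquot : IsOpenQuotientMap q :=
    IsOpenQuotientMap.piMap fun _ ↦ QuotientAddGroup.isOpenQuotientMap_mk
  choose r hr using hquot.surjective
  have hgr (x : ι → ℝ) : g (r (q x)) = g x := by
    have hdiff (i : ι) : ∃ n : ℤ, r (q x) i = x i + n := by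
      have hi : ((r (q x) i : ℝ) : UnitAddCircle) = (x i : UnitAddCircle) := congrFun (hr (q x)) i
      obtain ⟨n, hn⟩ := AddSubgroup.mem_zmultiples_iff.1 (QuotientAddGroup.eq_iff_sub_mem.1 hi)
      rw [zsmul_one] at hn
      exact ⟨n, by linarith⟩
    choose n hn using hdiff
    rw [← hper x n]
    exact congrArg g (funext hn)
  refine ⟨⟨fun y ↦ g (r y), ?_⟩, hgr⟩
  rw [hquot.isQuotientMap.continuous_iff]
  exact hg.congr fun x ↦ (hgr x).symm

lemma summable_pi_prod_of_nonneg {k : ℕ} {f : ℤ → ℝ} (hf : Summable f) (hpos : ∀ n, 0 ≤ f n) :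
    Summable fun n : Fin k → ℤ ↦ ∏ j, f (n j) := by
  induction k with
  | zero => exact Summable.of_finite
  | succ k ih =>
    rw [← (Fin.consEquiv fun _ : Fin (k + 1) ↦ ℤ).summable_iff]
    simpa [Function.comp_def, Fin.prod_univ_succ] using
      Summable.mul_of_nonneg hf ih hpos fun n ↦ Finset.prod_nonneg fun j _ ↦ hpos (n j)

lemma summable_exp_neg_mul_abs {δ : ℝ} (hδ : 0 < δ) :
    Summable fun n : ℤ ↦ Real.exp (-(δ * |(n : ℝ)|)) := by
  have h : Summable fun n : ℕ ↦ Real.exp (-(δ * n)) :=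
    (Real.summable_exp_nat_mul_iff.2 (neg_lt_zero.2 hδ)).congr fun n ↦ by ring_nf
  refine Summable.of_nat_of_neg ?_ ?_ <;> simpa using h

end FourierUniqueness

section TubeDomain

open MeasureTheory UnitAddTorus

variable {k : ℕ} {B : Set (Fin k → ℝ)} {g : (Fin k → ℂ) → ℂ}

/-- The tube domain `ℝᵏ + iB`. -/
def tube (B : Set (Fin k → ℝ)) : Set (Fin k → ℂ) := {w | (fun i ↦ (w i).im) ∈ B}

/-- The point `x + iY` of `ℂᵏ`. -/
def tubePt (x Y : Fin k → ℝ) : Fin k → ℂ := fun i ↦ (x i : ℂ) + Y i * I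

lemma tubePt_mem_tube {x Y : Fin k → ℝ} : tubePt x Y ∈ tube B ↔ Y ∈ B := by
  simp [tube, tubePt]

lemma tubePt_re_im (w : Fin k → ℂ) : tubePt (fun i ↦ (w i).re) (fun i ↦ (w i).im) = w :=
  funext fun i ↦ Complex.re_add_im (w i)

lemma tubePt_eq_add (x Y : Fin k → ℝ) : tubePt x Y = (fun i ↦ (x i : ℂ)) + tubePt 0 Y := by
  funext i
  simp [tubePt]

lemma continuous_tubePt (Y : Fin k → ℝ) : Continuous fun x ↦ tubePt x Y := by
  unfold tubePt
  fun_prop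

lemma add_intCast_mem_tube {w : Fin k → ℂ} (hw : w ∈ tube B) (n : Fin k → ℤ) :
    w + (fun i ↦ (n i : ℂ)) ∈ tube B := by
  simpa [tube] using hw

lemma periodic_of_periodic_single
    (hper : ∀ w ∈ tube B, ∀ j, g (w + fun i ↦ ((Pi.single j 1 : Fin k → ℤ) i : ℂ)) = g w)
    {w : Fin k → ℂ} (hw : w ∈ tube B) (n : Fin k → ℤ) : g (w + fun i ↦ (n i : ℂ)) = g w := by
  let S : AddSubgroup (Fin k → ℤ) :=
    { carrier := {n | ∀ w ∈ tube B, g (w + fun i ↦ (n i : ℂ)) = g w}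
      zero_mem' := fun w _ ↦ by simp [← Pi.zero_def]
      add_mem' := fun {m n} hm hn w hw ↦ by
        rw [← hm w hw, ← hn _ (add_intCast_mem_tube hw m), add_assoc]
        congr 2
        ext i
        simp
      neg_mem' := fun {n} hn w hw ↦ by
        rw [← hn _ (add_intCast_mem_tube hw (-n)), add_assoc]
        congr 1
        ext i
        simp }
  have hn : n ∈ S := by
    rw [← Finset.univ_sum_single n]
    refine sum_mem fun j _ ↦ ?_
    rw [show Pi.single j (n j) = n j • (Pi.single j 1 : Fin k → ℤ) by simp [← Pi.single_smul]]
    exact zsmul_mem (show Pi.single j 1 ∈ S from fun w hw ↦ hper w hw j) _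
  exact hn w hw

/-- Lebesgue measure on the half-open unit cube. -/
def unitCubeMeasure (k : ℕ) : Measure (Fin k → ℝ) :=
  Measure.pi fun _ ↦ volume.restrict (Set.Ioc (0 : ℝ) 1)

lemma unitCubeMeasure_eq_restrict (k : ℕ) : unitCubeMeasure k =
    volume.restrict {x : Fin k → ℝ | ∀ i, x i ∈ Set.Ioc (0 : ℝ) (0 + 1)} := by
  rw [unitCubeMeasure, ← Measure.restrict_pi_pi, ← volume_pi]
  congr 1
  ext x
  simp [Set.mem_pi]

lemma integrable_unitCubeMeasure {f : (Fin k → ℝ) → ℂ} (hf : Continuous f) :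
    Integrable f (unitCubeMeasure k) := by
  rw [unitCubeMeasure_eq_restrict]
  refine (hf.integrableOn_Icc (a := 0) (b := 1)).mono_set fun x hx ↦
    ⟨fun i ↦ (hx i).1.le, fun i ↦ by simpa using (hx i).2⟩

lemma integral_unitCubeMeasure_insertNth (j : Fin (k + 1)) {f : (Fin (k + 1) → ℝ) → ℂ}
    (hf : Continuous f) : ∫ x, f x ∂unitCubeMeasure (k + 1) =
      ∫ y, (∫ s in (0 : ℝ)..1, f (j.insertNth s y)) ∂unitCubeMeasure k := by
  have hmp := measurePreserving_piFinSuccAbove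
    (fun _ : Fin (k + 1) ↦ volume.restrict (Set.Ioc (0 : ℝ) 1)) j
  have hint := (hmp.symm.integrable_comp_emb (MeasurableEquiv.measurableEmbedding _)).2
    (integrable_unitCubeMeasure hf)
  rw [unitCubeMeasure, ← hmp.symm.integral_comp' (g := f)]
  refine (integral_prod_symm _ hint).trans (integral_congr_ae (Eventually.of_forall fun y ↦ ?_))
  dsimp only
  rw [intervalIntegral.integral_of_le zero_le_one]
  rfl

end TubeDomain

section TubeFourier

open MeasureTheory UnitAddTorus

variable {k : ℕ} {B : Set (Fin k → ℝ)} {g : (Fin k → ℂ) → ℂ} {Y : Fin k → ℝ}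

lemma continuous_comp_tubePt (hg : DifferentiableOn ℂ g (tube B)) (hY : Y ∈ B) :
    Continuous fun x ↦ g (tubePt x Y) :=
  hg.continuousOn.comp_continuous (continuous_tubePt Y) fun _ ↦ tubePt_mem_tube.2 hY

lemma integral_eq_of_periodic_strip {f : ℂ → ℂ} {a b : ℝ}
    (hf : DifferentiableOn ℂ f {ζ | ζ.im ∈ Set.uIcc a b})
    (hper : ∀ ζ, ζ.im ∈ Set.uIcc a b → f (ζ + 1) = f ζ) :
    ∫ s in (0 : ℝ)..1, f (s + a * I) = ∫ s in (0 : ℝ)..1, f (s + b * I) := by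
  have hrect := Complex.integral_boundary_rect_eq_zero_of_differentiableOn f ⟨0, a⟩ ⟨1, b⟩
    (hf.mono fun ζ hζ ↦ (Complex.mem_reProdIm.1 hζ).2)
  have hsides : ∀ v ∈ Set.uIcc a b, f ((1 : ℝ) + v * I) = f ((0 : ℝ) + v * I) := fun v hv ↦ by
    rw [ofReal_one, add_comm (1 : ℂ), hper _ (by simpa using hv), ofReal_zero, zero_add]
  simp only at hrect
  rw [intervalIntegral.integral_congr hsides] at hrect
  linear_combination hrect

lemma integral_tubePt_update (hg : DifferentiableOn ℂ g (tube B))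
    (hper : ∀ w ∈ tube B, ∀ n : Fin k → ℤ, g (w + fun i ↦ (n i : ℂ)) = g w) (j : Fin k) {y : ℝ}
    (hseg : ∀ v ∈ Set.uIcc (Y j) y, Function.update Y j v ∈ B) :
    ∫ x, g (tubePt x Y) ∂unitCubeMeasure k =
      ∫ x, g (tubePt x (Function.update Y j y)) ∂unitCubeMeasure k := by
  obtain _ | k := k
  · exact j.elim0
  have hY : Y ∈ B := by simpa using hseg (Y j) Set.left_mem_uIcc
  rw [integral_unitCubeMeasure_insertNth j (continuous_comp_tubePt hg hY),
    integral_unitCubeMeasure_insertNth j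
      (continuous_comp_tubePt hg (hseg y Set.right_mem_uIcc))]
  refine integral_congr_ae (Eventually.of_forall fun x ↦ ?_)
  set w : ℂ → Fin (k + 1) → ℂ := Function.update (tubePt (j.insertNth (0 : ℝ) x) Y) j
  have hw (s v : ℝ) : w (s + v * I) = tubePt (j.insertNth s x) (Function.update Y j v) := by
    funext i
    rcases Fin.eq_self_or_eq_succAbove j i with rfl | ⟨i, rfl⟩ <;> simp [w, tubePt]
  have hmem {ζ : ℂ} (hζ : ζ.im ∈ Set.uIcc (Y j) y) : w ζ ∈ tube B := by
    rw [← Complex.re_add_im ζ, hw]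
    exact tubePt_mem_tube.2 (hseg _ hζ)
  have hdiff : DifferentiableOn ℂ (g ∘ w) {ζ | ζ.im ∈ Set.uIcc (Y j) y} :=
    hg.comp (fun ζ _ ↦
      (hasFDerivAt_update (E := fun _ ↦ ℂ) _ ζ).differentiableAt.differentiableWithinAt)
      fun ζ hζ ↦ hmem hζ
  have hone (ζ : ℂ) : w (ζ + 1) = w ζ + fun i ↦ ((Pi.single j 1 : Fin (k + 1) → ℤ) i : ℂ) := by
    funext i
    rcases Fin.eq_self_or_eq_succAbove j i with rfl | ⟨i, rfl⟩ <;> simp [w]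
  have hstrip := integral_eq_of_periodic_strip hdiff fun ζ hζ ↦ by
    rw [Function.comp_apply, hone, hper _ (hmem hζ), Function.comp_apply]
  simpa only [Function.comp_apply, hw, Function.update_eq_self] using hstrip

lemma integral_tubePt_eq_of_mem_ball (hg : DifferentiableOn ℂ g (tube B))
    (hper : ∀ w ∈ tube B, ∀ n : Fin k → ℤ, g (w + fun i ↦ (n i : ℂ)) = g w) {r : ℝ}
    (hball : Metric.ball Y r ⊆ B) {Z : Fin k → ℝ} (hZ : Z ∈ Metric.ball Y r) :
    ∫ x, g (tubePt x Y) ∂unitCubeMeasure k = ∫ x, g (tubePt x Z) ∂unitCubeMeasure k := by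
  have hr : 0 < r := Metric.pos_of_mem_ball hZ
  rw [Metric.mem_ball, dist_pi_lt_iff hr] at hZ
  suffices h : ∀ s : Finset (Fin k), ∫ x, g (tubePt x Y) ∂unitCubeMeasure k =
      ∫ x, g (tubePt x (s.piecewise Z Y)) ∂unitCubeMeasure k by
    simpa using h Finset.univ
  intro s
  induction s using Finset.induction_on with
  | empty => simp
  | insert j s hj ih =>
    rw [ih, Finset.piecewise_insert]
    refine integral_tubePt_update hg hper j fun v hv ↦ hball ?_
    rw [Metric.mem_ball, dist_pi_lt_iff hr]
    intro i
    rcases eq_or_ne i j with rfl | hij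
    · rw [Finset.piecewise_eq_of_notMem _ _ _ hj] at hv
      rw [Function.update_self]
      exact (Set.abs_sub_left_of_mem_uIcc hv).trans_lt (hZ i)
    · rw [Function.update_of_ne hij]
      by_cases his : i ∈ s
      · rw [Finset.piecewise_eq_of_mem _ _ _ his]
        exact hZ i
      · rwa [Finset.piecewise_eq_of_notMem _ _ _ his, dist_self]

lemma integral_tubePt_eq (hB : IsOpen B) (hconn : IsPreconnected B)
    (hg : DifferentiableOn ℂ g (tube B))
    (hper : ∀ w ∈ tube B, ∀ n : Fin k → ℤ, g (w + fun i ↦ (n i : ℂ)) = g w)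
    {Z : Fin k → ℝ} (hY : Y ∈ B) (hZ : Z ∈ B) :
    ∫ x, g (tubePt x Y) ∂unitCubeMeasure k = ∫ x, g (tubePt x Z) ∂unitCubeMeasure k := by
  refine hconn.induction₂ (fun Y Z ↦ ∫ x, g (tubePt x Y) ∂unitCubeMeasure k =
    ∫ x, g (tubePt x Z) ∂unitCubeMeasure k) (fun Y hY ↦ ?_)
    (fun _ _ _ _ _ _ h₁ h₂ ↦ h₁.trans h₂) (fun _ _ _ _ h ↦ h.symm) hY hZ
  obtain ⟨r, hr, hball⟩ := Metric.isOpen_iff.1 hB Y hY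
  filter_upwards [mem_nhdsWithin_of_mem_nhds (Metric.ball_mem_nhds Y hr)] with Z hZ
  exact integral_tubePt_eq_of_mem_ball hg hper hball hZ

lemma exists_lift_mFourierCoeff_eq (hg : DifferentiableOn ℂ g (tube B))
    (hper : ∀ w ∈ tube B, ∀ n : Fin k → ℤ, g (w + fun i ↦ (n i : ℂ)) = g w) (hY : Y ∈ B) :
    ∃ G : C(UnitAddTorus (Fin k), ℂ),
      (∀ x : Fin k → ℝ, G (fun i ↦ (x i : UnitAddCircle)) = g (tubePt x Y)) ∧
      ∀ n, mFourierCoeff G n = (∫ x, g (tubePt x Y) * expChar (-n) (tubePt x Y)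
        ∂unitCubeMeasure k) * expChar n (tubePt 0 Y) := by
  obtain ⟨G, hG⟩ := exists_torus_lift (continuous_comp_tubePt hg hY) fun x n ↦ by
    refine (congrArg g (funext fun i ↦ ?_)).trans (hper _ (tubePt_mem_tube.2 hY) n)
    simp [tubePt]
    ring
  refine ⟨G, hG, fun n ↦ ?_⟩
  rw [mFourierCoeff_eq_integral G n 0, ← integral_mul_const, unitCubeMeasure_eq_restrict]
  refine integral_congr_ae (Eventually.of_forall fun x ↦ ?_)
  simp only [hG, mFourier_coe, smul_eq_mul]
  conv_rhs => rw [tubePt_eq_add x Y, expChar_add, ← tubePt_eq_add]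
  rw [mul_assoc, mul_assoc, expChar_neg_mul_self, mul_one, mul_comm]

lemma summable_mul_expChar {a : (Fin k → ℤ) → ℂ} (hB : IsOpen B) (hY : Y ∈ B)
    (hbound : ∀ Z ∈ B, ∃ C, ∀ n, ‖a n * expChar n (tubePt 0 Z)‖ ≤ C) :
    Summable fun n ↦ a n * expChar n (tubePt 0 Y) := by
  have hev : ∀ᶠ δ : ℝ in 𝓝[>] 0, ∀ σ : Fin k → SignType,
      (fun i ↦ Y i - δ * (σ i : ℝ)) ∈ B := by
    refine Filter.Eventually.filter_mono nhdsWithin_le_nhds (eventually_all.2 fun σ ↦ ?_)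
    have hcont : Continuous fun (δ : ℝ) (i : Fin k) ↦ Y i - δ * (σ i : ℝ) := by fun_prop
    exact hcont.continuousAt.eventually_mem (hB.mem_nhds (by simpa using hY))
  obtain ⟨δ, hδ, hδ0 : 0 < δ⟩ := (hev.and self_mem_nhdsWithin).exists
  choose C hC using fun σ ↦ hbound _ (hδ σ)
  have hdecay (n : Fin k → ℤ) : ‖a n * expChar n (tubePt 0 Y)‖ ≤
      (∑ σ, |C σ|) * ∏ j, Real.exp (-(2 * Real.pi * δ * |(n j : ℝ)|)) := by
    have hσ := (hC (fun i ↦ SignType.sign (n i : ℝ)) n).trans ((le_abs_self _).trans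
      (Finset.single_le_sum (f := fun σ ↦ |C σ|) (fun i _ ↦ abs_nonneg _) (Finset.mem_univ _)))
    refine le_trans (le_of_eq ?_) (mul_le_mul_of_nonneg_right hσ (by positivity))
    rw [norm_mul, norm_mul, mul_assoc, norm_expChar, norm_expChar, ← Real.exp_sum, ← Real.exp_add]
    congr 2
    simp only [tubePt, ← sign_mul_self, Finset.mul_sum, ← Finset.sum_neg_distrib,
      ← Finset.sum_add_distrib]
    refine Finset.sum_congr rfl fun j _ ↦ ?_
    simp
    ring
  exact Summable.of_norm_bounded
    ((summable_pi_prod_of_nonneg (summable_exp_neg_mul_abs (by positivity)) fun n ↦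
      (Real.exp_pos _).le).mul_left _) hdecay

theorem exists_hasSum_expChar (hB : IsOpen B) (hconn : IsPreconnected B)
    (hg : DifferentiableOn ℂ g (tube B))
    (hper : ∀ w ∈ tube B, ∀ n : Fin k → ℤ, g (w + fun i ↦ (n i : ℂ)) = g w) :
    ∃ a : (Fin k → ℤ) → ℂ, ∀ w ∈ tube B, HasSum (fun n ↦ a n * expChar n w) (g w) := by
  rcases B.eq_empty_or_nonempty with rfl | ⟨Y₀, hY₀⟩
  · exact ⟨0, fun w hw ↦ hw.elim⟩
  set a : (Fin k → ℤ) → ℂ := fun n ↦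
    ∫ x, g (tubePt x Y₀) * expChar (-n) (tubePt x Y₀) ∂unitCubeMeasure k with ha
  have hcoeff (Y) (hY : Y ∈ B) : ∃ G : C(UnitAddTorus (Fin k), ℂ),
      (∀ x : Fin k → ℝ, G (fun i ↦ (x i : UnitAddCircle)) = g (tubePt x Y)) ∧
      ∀ n, mFourierCoeff G n = a n * expChar n (tubePt 0 Y) := by
    obtain ⟨G, hG, hGn⟩ := exists_lift_mFourierCoeff_eq hg hper hY
    refine ⟨G, hG, fun n ↦ ?_⟩
    rw [hGn, ha]
    congr 1
    refine integral_tubePt_eq hB hconn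
      (g := fun w ↦ g w * expChar (-n) w) (hg.mul (by fun_prop)) (fun w hw m ↦ ?_) hY hY₀
    rw [hper w hw, expChar_add, expChar_intCast, mul_one]
  refine ⟨a, fun w hw ↦ ?_⟩
  obtain ⟨G, hG, hGn⟩ := hcoeff (fun i ↦ (w i).im) hw
  have hsum : Summable (mFourierCoeff G) := by
    refine (summable_mul_expChar hB hw fun Z hZ ↦ ?_).congr fun n ↦ (hGn n).symm
    obtain ⟨G', -, hGn'⟩ := hcoeff Z hZ
    exact ⟨‖G'‖, fun n ↦ hGn' n ▸ norm_mFourierCoeff_le G' n⟩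
  have hseries := hasSum_mFourier_series_apply_of_summable hsum
    fun i ↦ ((w i).re : UnitAddCircle)
  rw [hG fun i ↦ (w i).re, tubePt_re_im] at hseries
  refine hseries.congr_fun fun n ↦ ?_
  rw [hGn, mFourier_coe, smul_eq_mul, mul_assoc, mul_comm (expChar n (tubePt 0 _)), ← expChar_add,
    ← tubePt_eq_add, tubePt_re_im]

end TubeFourier

/-! ### Fourier coefficients of the components -/

section SiegelFourier

/-- The cone of positive definite symmetric matrices, in the coordinates `(t, z, u)` of
`τ = (t z; z u)`; it is the base of `ℍ₂` as a tube domain. -/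
def posCone : Set (Fin 3 → ℝ) := {Y | 0 < Y 0 ∧ Y 1 ^ 2 < Y 0 * Y 2}

lemma isOpen_posCone : IsOpen posCone :=
  (isOpen_lt continuous_const (continuous_apply 0)).inter
    (isOpen_lt ((continuous_apply 1).pow 2) ((continuous_apply 0).mul (continuous_apply 2)))

lemma convex_posCone : Convex ℝ posCone := by
  refine convex_iff_forall_pos.2 fun X ⟨hX0, hX⟩ Y ⟨hY0, hY⟩ a b ha hb _ ↦ ?_
  have hcross : 2 * (X 1 * Y 1) < X 0 * Y 2 + Y 0 * X 2 := by
    have hX2 : 0 < X 2 := pos_of_mul_pos_right ((sq_nonneg _).trans_lt hX) hX0.le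
    have hY2 : 0 < Y 2 := pos_of_mul_pos_right ((sq_nonneg _).trans_lt hY) hY0.le
    refine lt_of_pow_lt_pow_left₀ 2 (by positivity) ?_
    nlinarith [mul_lt_mul'' hX hY (sq_nonneg _) (sq_nonneg _), sq_nonneg (X 0 * Y 2 - Y 0 * X 2)]
  simp only [posCone, Set.mem_ofPred_eq, Pi.add_apply, Pi.smul_apply, smul_eq_mul]
  refine ⟨by positivity, ?_⟩
  nlinarith [mul_pos ha hb, mul_lt_mul_of_pos_left hcross (mul_pos ha hb),
    mul_lt_mul_of_pos_left hX (pow_pos ha 2), mul_lt_mul_of_pos_left hY (pow_pos hb 2)]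

lemma mem_tube_posCone {w : Fin 3 → ℂ} :
    w ∈ tube posCone ↔ symMat (2 * w 0) (2 * w 1) (2 * w 2) ∈ H2 := by
  simp only [tube, posCone, Set.mem_ofPred_eq, symMat_mem_H2, mul_im, re_ofNat, im_ofNat, zero_mul,
    add_zero, mul_pow]
  refine and_congr (by simp) ?_
  constructor <;> intro h <;> linarith

/-- The exponential `exp (π i (N t + R z + M u))` for `p = (M, N, R)`. Half-integral exponents occur
because the forms are antiperiodic. -/
def halfChar (p : ℤ × ℤ × ℤ) (t z u : ℂ) : ℂ :=
  cexp (Real.pi * I * (p.2.1 * t + p.2.2 * z + p.1 * u))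

lemma halfChar_eq_expChar (p : ℤ × ℤ × ℤ) (t z u : ℂ) :
    halfChar p t z u = expChar ![p.2.1, p.2.2, p.1] ![t / 2, z / 2, u / 2] := by
  rw [halfChar, expChar, Fin.sum_univ_three]
  congr 1
  simp
  ring

lemma halfChar_add (p : ℤ × ℤ × ℤ) (t z u t' z' u' : ℂ) :
    halfChar p (t + t') (z + z') (u + u') = halfChar p t z u * halfChar p t' z' u' := by
  rw [halfChar, halfChar, halfChar, ← Complex.exp_add]
  ring_nf

lemma halfChar_ne_zero (p : ℤ × ℤ × ℤ) (t z u : ℂ) : halfChar p t z u ≠ 0 := Complex.exp_ne_zero _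

lemma exp_pi_mul_I_mul_intCast (n : ℤ) : cexp (Real.pi * I * n) = (-1) ^ n := by
  rw [mul_comm, Complex.exp_int_mul, Complex.exp_pi_mul_I]

lemma halfChar_add_one_fst (p : ℤ × ℤ × ℤ) (t z u : ℂ) :
    halfChar p (t + 1) z u = (-1) ^ p.2.1 * halfChar p t z u := by
  rw [← exp_pi_mul_I_mul_intCast, halfChar, halfChar, ← Complex.exp_add]
  ring_nf

lemma halfChar_add_one_mid (p : ℤ × ℤ × ℤ) (t z u : ℂ) :
    halfChar p t (z + 1) u = (-1) ^ p.2.2 * halfChar p t z u := by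
  rw [← exp_pi_mul_I_mul_intCast, halfChar, halfChar, ← Complex.exp_add]
  ring_nf

lemma hasSum_reindex {c : ℤ × ℤ × ℤ → ℂ} {s t z u t' z' u' : ℂ} (e : ℤ × ℤ × ℤ ≃ ℤ × ℤ × ℤ)
    (hc : HasSum (fun p ↦ c p * halfChar p t' z' u') s)
    (he : ∀ p, halfChar (e p) t' z' u' = halfChar p t z u) :
    HasSum (fun p ↦ c (e p) * halfChar p t z u) s := by
  simpa only [Function.comp_def, he] using e.hasSum_iff.2 hc

/-- `g` has the Fourier expansion `∑ c (M, N, R) exp (π i (N t + R z + M u))` on `ℍ₂`. -/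
def HasFourierExpansion (c : ℤ × ℤ × ℤ → ℂ) (g : ℂ → ℂ → ℂ → ℂ) : Prop :=
  ∀ t z u, symMat t z u ∈ H2 → HasSum (fun p ↦ c p * halfChar p t z u) (g t z u)

/-- The frequencies `(M, N, R)` in the order of the coordinates `(t, z, u)`. -/
def freqEquiv : ℤ × ℤ × ℤ ≃ (Fin 3 → ℤ) where
  toFun p := ![p.2.1, p.2.2, p.1]
  invFun n := (n 2, n 0, n 1)
  left_inv _ := rfl
  right_inv n := by ext i; fin_cases i <;> rfl

theorem exists_hasFourierExpansion {g : ℂ → ℂ → ℂ → ℂ}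
    (hd : DifferentiableOn ℂ (fun w : Fin 3 → ℂ ↦ g (2 * w 0) (2 * w 1) (2 * w 2)) (tube posCone))
    (hfst : ∀ t z u, symMat t z u ∈ H2 → g (t + 1) z u = -g t z u)
    (hmid : ∀ t z u, symMat t z u ∈ H2 → g t (z + 1) u = -g t z u)
    (hsnd : ∀ t z u, symMat t z u ∈ H2 → g t z (u + 1) = -g t z u) :
    ∃ c, HasFourierExpansion c g := by
  have hfst2 : ∀ t z u, symMat t z u ∈ H2 → g (t + 2) z u = g t z u := fun t z u h ↦ by
    have h' : symMat (t + 1) z u ∈ H2 := by simpa using symMat_add_intCast_mem_H2 1 0 0 h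
    rw [← one_add_one_eq_two, ← add_assoc, hfst _ _ _ h', hfst _ _ _ h, neg_neg]
  have hmid2 : ∀ t z u, symMat t z u ∈ H2 → g t (z + 2) u = g t z u := fun t z u h ↦ by
    have h' : symMat t (z + 1) u ∈ H2 := by simpa using symMat_add_intCast_mem_H2 0 1 0 h
    rw [← one_add_one_eq_two, ← add_assoc, hmid _ _ _ h', hmid _ _ _ h, neg_neg]
  have hsnd2 : ∀ t z u, symMat t z u ∈ H2 → g t z (u + 2) = g t z u := fun t z u h ↦ by
    have h' : symMat t z (u + 1) ∈ H2 := by simpa using symMat_add_intCast_mem_H2 0 0 1 h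
    rw [← one_add_one_eq_two, ← add_assoc, hsnd _ _ _ h', hsnd _ _ _ h, neg_neg]
  obtain ⟨a, ha⟩ := exists_hasSum_expChar isOpen_posCone convex_posCone.isPreconnected hd
    fun w hw n ↦ periodic_of_periodic_single (g := fun w ↦ g (2 * w 0) (2 * w 1) (2 * w 2))
      (fun w hw i ↦ by
        rw [mem_tube_posCone] at hw
        fin_cases i
        · simpa [mul_add] using hfst2 _ _ _ hw
        · simpa [mul_add] using hmid2 _ _ _ hw
        · simpa [mul_add] using hsnd2 _ _ _ hw) hw n
  refine ⟨a ∘ freqEquiv, fun t z u h ↦ ?_⟩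
  have hw := ha ![t / 2, z / 2, u / 2] (mem_tube_posCone.2 (by simpa [mul_div_cancel₀] using h))
  rw [← freqEquiv.hasSum_iff] at hw
  simp only [halfChar_eq_expChar]
  simpa [mul_div_cancel₀, Function.comp_def] using! hw

namespace HasFourierExpansion

variable {c c' : ℤ × ℤ × ℤ → ℂ} {g g' : ℂ → ℂ → ℂ → ℂ}

lemma eq_zero (hc : HasFourierExpansion c g) (hg : ∀ t z u, symMat t z u ∈ H2 → g t z u = 0)
    (p : ℤ × ℤ × ℤ) : c p = 0 := by
  have hker := eq_zero_of_hasSum_expChar_zero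
    (c := fun n ↦ c (freqEquiv.symm n) * halfChar (freqEquiv.symm n) I 0 I) (fun x ↦ by
      have h : symMat (2 * x 0 + I) (2 * x 1) (2 * x 2 + I) ∈ H2 := by simp [symMat_mem_H2]
      have hsum := hc _ _ _ h
      rw [hg _ _ _ h, ← freqEquiv.symm.hasSum_iff] at hsum
      refine hsum.congr_fun fun n ↦ ?_
      rw [Function.comp_apply, ← add_zero (2 * (x 1 : ℂ)), halfChar_add, mul_assoc,
        mul_comm (halfChar _ I 0 I), halfChar_eq_expChar _ (2 * _)]
      congr 2
      · congr 1
        · exact (freqEquiv.apply_symm_apply n).symm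
        · funext i; fin_cases i <;> simp) (freqEquiv p)
  rw [Equiv.symm_apply_apply] at hker
  exact (mul_eq_zero.1 hker).resolve_right (halfChar_ne_zero _ _ _ _)

lemma add (hc : HasFourierExpansion c g) (hc' : HasFourierExpansion c' g') :
    HasFourierExpansion (fun p ↦ c p + c' p) (fun t z u ↦ g t z u + g' t z u) :=
  fun t z u h ↦ by simpa only [add_mul] using (hc t z u h).add (hc' t z u h)

lemma const_mul (r : ℂ) (hc : HasFourierExpansion c g) :
    HasFourierExpansion (fun p ↦ r * c p) (fun t z u ↦ r * g t z u) :=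
  fun t z u h ↦ by simpa only [mul_assoc] using (hc t z u h).mul_left r

lemma sum {ι : Type*} {s : Finset ι} {c : ι → ℤ × ℤ × ℤ → ℂ} {g : ι → ℂ → ℂ → ℂ → ℂ}
    (hc : ∀ l ∈ s, HasFourierExpansion (c l) (g l)) :
    HasFourierExpansion (fun p ↦ ∑ l ∈ s, c l p) (fun t z u ↦ ∑ l ∈ s, g l t z u) :=
  fun t z u h ↦ by simpa only [Finset.sum_mul] using hasSum_sum fun l hl ↦ hc l hl t z u h

lemma coeff_eq (hc : HasFourierExpansion c g) (hc' : HasFourierExpansion c' g')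
    (hg : ∀ t z u, symMat t z u ∈ H2 → g t z u = g' t z u) (p : ℤ × ℤ × ℤ) : c p = c' p := by
  have h := (hc.add (hc'.const_mul (-1))).eq_zero (fun t z u h ↦ by rw [hg t z u h]; ring) p
  linear_combination h

lemma coeff_eq_neg (hc : HasFourierExpansion c g) (hc' : HasFourierExpansion c' g')
    (hg : ∀ t z u, symMat t z u ∈ H2 → g t z u = -g' t z u) (p : ℤ × ℤ × ℤ) : c p = -c' p := by
  simpa using hc.coeff_eq (hc'.const_mul (-1)) (by simpa using hg) p

lemma comp_add_one_fst (hc : HasFourierExpansion c g) :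
    HasFourierExpansion (fun p ↦ (-1) ^ p.2.1 * c p) (fun t z u ↦ g (t + 1) z u) := by
  intro t z u h
  refine (hc _ _ _ (by simpa using symMat_add_intCast_mem_H2 1 0 0 h)).congr_fun fun p ↦ ?_
  rw [halfChar_add_one_fst]
  ring

lemma comp_add_one_mid (hc : HasFourierExpansion c g) :
    HasFourierExpansion (fun p ↦ (-1) ^ p.2.2 * c p) (fun t z u ↦ g t (z + 1) u) := by
  intro t z u h
  refine (hc _ _ _ (by simpa using symMat_add_intCast_mem_H2 0 1 0 h)).congr_fun fun p ↦ ?_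
  rw [halfChar_add_one_mid]
  ring

lemma comp_neg_mid (hc : HasFourierExpansion c g) :
    HasFourierExpansion (fun p ↦ c (p.1, p.2.1, -p.2.2)) (fun t z u ↦ g t (-z) u) := fun t z u h ↦
  hasSum_reindex ⟨fun p ↦ (p.1, p.2.1, -p.2.2), fun p ↦ (p.1, p.2.1, -p.2.2), fun p ↦ by simp,
    fun p ↦ by simp⟩ (hc t (-z) u (by simpa [symMat_mem_H2] using h)) fun p ↦ by simp [halfChar]

lemma comp_swap (hc : HasFourierExpansion c g) :
    HasFourierExpansion (fun p ↦ c (p.2.1, p.1, p.2.2)) (fun t z u ↦ g u z t) := fun t z u h ↦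
  hasSum_reindex ⟨fun p ↦ (p.2.1, p.1, p.2.2), fun p ↦ (p.2.1, p.1, p.2.2), fun _ ↦ rfl,
    fun _ ↦ rfl⟩ (hc u z t (symMat_swap_mem_H2 h)) fun p ↦ by simp [halfChar]; ring_nf

lemma comp_shear (hc : HasFourierExpansion c g) :
    HasFourierExpansion (fun p ↦ c (p.1, p.2.1 - p.2.2 + p.1, p.2.2 - 2 * p.1))
      (fun t z u ↦ g t (z + t) (u + 2 * z + t)) := fun t z u h ↦
  hasSum_reindex ⟨fun p ↦ (p.1, p.2.1 - p.2.2 + p.1, p.2.2 - 2 * p.1),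
    fun p ↦ (p.1, p.2.1 + p.2.2 + p.1, p.2.2 + 2 * p.1), fun p ↦ by ext <;> simp; ring,
    fun p ↦ by ext <;> simp; ring⟩ (hc _ _ _ (symMat_shear_mem_H2 h)) fun p ↦ by
      simp [halfChar]
      ring_nf

lemma exists_norm_mul_exp_le (hc : HasFourierExpansion c g) :
    ∃ C, ∀ p : ℤ × ℤ × ℤ, ‖c p‖ * Real.exp (-Real.pi * (p.2.1 + p.1)) ≤ C := by
  have hs := (hc I 0 I (by simp [symMat_mem_H2])).summable.norm
  refine ⟨_, fun p ↦ le_trans (le_of_eq ?_) (hs.le_tsum p fun _ _ ↦ norm_nonneg _)⟩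
  rw [norm_mul, halfChar, Complex.norm_exp]
  simp

end HasFourierExpansion

end SiegelFourier

section EpsCoeffs

variable {j : ℕ} {k : ℤ} {f : ℂ → ℂ → ℂ → Fin (j + 1) → ℂ} {a : Fin (j + 1) → ℤ × ℤ × ℤ → ℂ}

/-- The relations between the Fourier coefficients `a l (M, N, R)` of an `IsEpsForm` which express
its laws other than `inv`, together with the Koecher principle. -/
structure EpsCoeffs (a : Fin (j + 1) → ℤ × ℤ × ℤ → ℂ) : Prop where
  eq_zero_of_not_odd_fst : ∀ l {M} N R, ¬Odd M → a l (M, N, R) = 0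
  eq_zero_of_not_odd_snd : ∀ l M {N} R, ¬Odd N → a l (M, N, R) = 0
  eq_zero_of_not_odd_mid : ∀ l M N {R}, ¬Odd R → a l (M, N, R) = 0
  neg_mid : ∀ l M N R, a l (M, N, -R) = (-1) ^ (l : ℕ) * a l (M, N, R)
  swap : ∀ l M N R, a l (N, M, R) = -a l.rev (M, N, R)
  shear : ∀ i M N R, a i (M, N, R) = -∑ l : Fin (j + 1), ((l : ℕ).choose i : ℂ) *
    (-1) ^ ((l : ℕ) - i) * a l (M, N + R + M, R + 2 * M)
  shear_inv : ∀ i M N R,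
    a i (M, N + R + M, R + 2 * M) = -∑ l : Fin (j + 1), ((l : ℕ).choose i : ℂ) * a l (M, N, R)
  eq_zero_of_fst_neg : ∀ l {M} N R, M < 0 → a l (M, N, R) = 0
  eq_zero_of_snd_neg : ∀ l M {N} R, N < 0 → a l (M, N, R) = 0

namespace IsEpsForm

lemma exists_coeffs (hf : IsEpsForm k f)
    (hd : ∀ l, DifferentiableOn ℂ (fun w : Fin 3 → ℂ ↦ f (2 * w 0) (2 * w 1) (2 * w 2) l)
      (tube posCone)) :
    ∃ a : Fin (j + 1) → ℤ × ℤ × ℤ → ℂ, ∀ l, HasFourierExpansion (a l) fun t z u ↦ f t z u l := by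
  choose a ha using fun l ↦ exists_hasFourierExpansion (g := fun t z u ↦ f t z u l) (hd l)
    (fun t z u h ↦ congrFun (hf.add_one_fst t z u h) l)
    (fun t z u h ↦ congrFun (hf.add_one_mid t z u h) l)
    (fun t z u h ↦ congrFun (hf.add_one_snd t z u h) l)
  exact ⟨a, ha⟩

variable (hf : IsEpsForm k f) (ha : ∀ l, HasFourierExpansion (a l) fun t z u ↦ f t z u l)
include hf ha

lemma coeff_neg_mid (l : Fin (j + 1)) (M N R : ℤ) :
    a l (M, N, -R) = (-1) ^ (l : ℕ) * a l (M, N, R) :=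
  (ha l).comp_neg_mid.coeff_eq ((ha l).const_mul _) (fun t z u h ↦ hf.neg_mid t z u h l) (M, N, R)

lemma coeff_swap (l : Fin (j + 1)) (M N R : ℤ) : a l (N, M, R) = -a l.rev (M, N, R) :=
  (ha l).comp_swap.coeff_eq_neg (ha l.rev) (fun t z u h ↦ hf.swap t z u h l) (M, N, R)

lemma coeff_shear (i : Fin (j + 1)) (M N R : ℤ) :
    a i (M, N, R) = -∑ l : Fin (j + 1), ((l : ℕ).choose i : ℂ) *
      (-1) ^ ((l : ℕ) - i) * a l (M, N + R + M, R + 2 * M) := by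
  have h := (ha i).comp_shear.coeff_eq_neg
    (.sum (s := Finset.univ) fun l _ ↦
      (ha l).const_mul (((l : ℕ).choose i : ℂ) * (-1) ^ ((l : ℕ) - i)))
    (fun t z u h ↦ hf.shear t z u h i) (M, N + R + M, R + 2 * M)
  rw [← h]
  ring_nf

lemma coeff_eq_zero_of_not_odd_snd (l : Fin (j + 1)) (M : ℤ) {N : ℤ} (R : ℤ) (hN : ¬Odd N) :
    a l (M, N, R) = 0 := by
  have h := (ha l).comp_add_one_fst.coeff_eq_neg (ha l)
    (fun t z u h ↦ congrFun (hf.add_one_fst t z u h) l) (M, N, R)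
  rw [(Int.not_odd_iff_even.1 hN).neg_one_zpow, one_mul] at h
  exact self_eq_neg.1 h

lemma coeff_eq_zero_of_not_odd_mid (l : Fin (j + 1)) (M N : ℤ) {R : ℤ} (hR : ¬Odd R) :
    a l (M, N, R) = 0 := by
  have h := (ha l).comp_add_one_mid.coeff_eq_neg (ha l)
    (fun t z u h ↦ congrFun (hf.add_one_mid t z u h) l) (M, N, R)
  rw [(Int.not_odd_iff_even.1 hR).neg_one_zpow, one_mul] at h
  exact self_eq_neg.1 h

lemma coeff_shear_inv (i : Fin (j + 1)) (M N R : ℤ) :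
    a i (M, N + R + M, R + 2 * M) = -∑ l : Fin (j + 1), ((l : ℕ).choose i : ℂ) * a l (M, N, R) := by
  have h := hf.coeff_shear ha i M (N + R + M) (-(R + 2 * M))
  rw [hf.coeff_neg_mid ha, show N + R + M + -(R + 2 * M) + M = N by ring,
    show -(R + 2 * M) + 2 * M = -R by ring] at h
  refine mul_left_cancel₀ (pow_ne_zero i (neg_ne_zero.2 one_ne_zero)) (h.trans ?_)
  rw [mul_neg, Finset.mul_sum]
  refine congrArg _ (Finset.sum_congr rfl fun l _ ↦ ?_)
  rw [hf.coeff_neg_mid ha]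
  rcases lt_or_ge (l : ℕ) i with hli | hil
  · simp [Nat.choose_eq_zero_of_lt hli]
  · obtain ⟨m, hm⟩ := Nat.exists_eq_add_of_le hil
    have hsign : (-1 : ℂ) ^ m * (-1) ^ m = 1 := by rw [← mul_pow]; norm_num
    rw [hm, Nat.add_sub_cancel_left, pow_add]
    linear_combination ((i + m : ℕ).choose i : ℂ) * (-1) ^ (i : ℕ) * a l (M, N, R) * hsign

lemma norm_coeff_shear_iterate {l : Fin (j + 1)} {M N R : ℤ}
    (hl : ∀ l' > l, a l' (M, N, R) = 0) (n : ℕ) :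
    (∀ l' > l, a l' (M, N + n * R + n ^ 2 * M, R + 2 * n * M) = 0) ∧
      ‖a l (M, N + n * R + n ^ 2 * M, R + 2 * n * M)‖ = ‖a l (M, N, R)‖ := by
  induction n with
  | zero => simpa using hl
  | succ n ih =>
    have hstep (i : Fin (j + 1)) := hf.coeff_shear_inv ha i M (N + n * R + n ^ 2 * M)
      (R + 2 * n * M)
    rw [show N + n * R + n ^ 2 * M + (R + 2 * n * M) + M =
        N + (n + 1 : ℕ) * R + (n + 1 : ℕ) ^ 2 * M by push_cast; ring,
      show R + 2 * n * M + 2 * M = R + 2 * (n + 1 : ℕ) * M by push_cast; ring] at hstep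
    have hvanish : ∀ i ≥ l, ∀ l' ≠ i, ((l' : ℕ).choose i : ℂ) *
        a l' (M, N + n * R + n ^ 2 * M, R + 2 * n * M) = 0 := fun i hi l' hl' ↦ by
      rcases hl'.lt_or_gt with h | h
      · rw [Nat.choose_eq_zero_of_lt h, Nat.cast_zero, zero_mul]
      · rw [ih.1 l' (hi.trans_lt h), mul_zero]
    have htop (i) (hi : l ≤ i) : a i (M, N + (n + 1 : ℕ) * R + (n + 1 : ℕ) ^ 2 * M,
        R + 2 * (n + 1 : ℕ) * M) = -a i (M, N + n * R + n ^ 2 * M, R + 2 * n * M) := by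
      rw [hstep, Fintype.sum_eq_single i (hvanish i hi), Nat.choose_self, Nat.cast_one, one_mul]
    refine ⟨fun i hi ↦ ?_, ?_⟩
    · rw [htop i hi.le, ih.1 i hi, neg_zero]
    · rw [htop l le_rfl, norm_neg, ih.2]

lemma coeff_eq_zero_of_fst_neg (l : Fin (j + 1)) {M : ℤ} (N R : ℤ) (hM : M < 0) :
    a l (M, N, R) = 0 := by
  by_contra hne
  obtain ⟨l, hl, hmax⟩ := (Set.toFinite {l | a l (M, N, R) ≠ 0}).exists_maximal ⟨l, hne⟩
  have htop : ∀ l' > l, a l' (M, N, R) = 0 := fun l' hl' ↦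
    of_not_not fun hne' ↦ hl'.not_ge (hmax hne' hl'.le)
  obtain ⟨C, hC⟩ := (ha l).exists_norm_mul_exp_le
  have hgrowth : Tendsto (fun n : ℕ ↦ ‖a l (M, N, R)‖ *
      Real.exp (-Real.pi * ((N + n * R + n ^ 2 * M : ℤ) + M))) atTop atTop := by
    refine (Real.tendsto_exp_atTop.comp ?_).const_mul_atTop (norm_pos_iff.2 hl)
    have hn := tendsto_natCast_atTop_atTop (R := ℝ)
    have hM' : 0 < -Real.pi * M :=
      mul_pos_of_neg_of_neg (neg_lt_zero.2 Real.pi_pos) (Int.cast_lt_zero.2 hM)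
    refine (tendsto_atTop_add_const_right _ (-Real.pi * (N + M)) (hn.atTop_mul_atTop₀
      (tendsto_atTop_add_const_right _ (-Real.pi * R) (hn.atTop_mul_const hM')))).congr fun n ↦ ?_
    push_cast
    ring
  obtain ⟨n, hn⟩ := (hgrowth.eventually_gt_atTop C).exists
  refine hn.not_ge ?_
  rw [← (hf.norm_coeff_shear_iterate ha htop n).2]
  exact hC _

theorem epsCoeffs : EpsCoeffs a where
  eq_zero_of_not_odd_fst l M N R hM := by
    rw [hf.coeff_swap ha, hf.coeff_eq_zero_of_not_odd_snd ha _ _ _ hM, neg_zero]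
  eq_zero_of_not_odd_snd l M _ R := hf.coeff_eq_zero_of_not_odd_snd ha l M R
  eq_zero_of_not_odd_mid l M N _ := hf.coeff_eq_zero_of_not_odd_mid ha l M N
  neg_mid := hf.coeff_neg_mid ha
  swap := hf.coeff_swap ha
  shear := hf.coeff_shear ha
  shear_inv := hf.coeff_shear_inv ha
  eq_zero_of_fst_neg l _ := hf.coeff_eq_zero_of_fst_neg ha l
  eq_zero_of_snd_neg l M N R hN := by
    rw [hf.coeff_swap ha, hf.coeff_eq_zero_of_fst_neg ha _ _ _ hN, neg_zero]

end IsEpsForm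

end EpsCoeffs

/-! ### Fourier–Jacobi coefficients and their Taylor developments -/

section FourierJacobi

/-- The condition on `b` under which `∑ b (N, R) exp (π i (N t + R z))` converges normally on
`ℍ₁ × ℂ`. -/
def JacobiSummable (b : ℤ × ℤ → ℂ) : Prop :=
  ∀ y : ℝ, 0 < y → ∀ c : ℝ,
    Summable fun p : ℤ × ℤ ↦ ‖b p‖ * Real.exp (-Real.pi * p.1 * y + c * |(p.2 : ℝ)|)

/-- The series `∑ b (N, R) exp (π i (N t + R z))`, of the shape of a Jacobi form. -/
def jacobiSeries (b : ℤ × ℤ → ℂ) (t z : ℂ) : ℂ :=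
  ∑' p : ℤ × ℤ, b p * cexp (Real.pi * I * (p.1 * t + p.2 * z))

/-- The coefficient of `(π i z) ^ ν / ν!` in the Taylor expansion of `jacobiSeries b t z` at
`z = 0`. -/
def jacobiTaylor (b : ℤ × ℤ → ℂ) (ν : ℕ) (t : ℂ) : ℂ :=
  ∑' p : ℤ × ℤ, b p * (p.2 : ℂ) ^ ν * cexp (Real.pi * I * (p.1 * t))

lemma eq_zero_of_hasSum_exp_zero {c : ℤ → ℂ}
    (h : ∀ x : ℝ, HasSum (fun n : ℤ ↦ c n * cexp (Real.pi * I * n * x)) 0) (n : ℤ) : c n = 0 := by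
  refine eq_zero_of_hasSum_expChar_zero (ι := Fin 1) (c := fun n ↦ c (n 0)) (fun x ↦ ?_)
    fun _ ↦ n
  refine ((Equiv.funUnique (Fin 1) ℤ).hasSum_iff.2 (h (2 * x 0))).congr_fun fun n ↦ ?_
  simp only [expChar, Fin.sum_univ_one, Function.comp_apply, Equiv.funUnique_apply,
    Fin.default_eq_zero]
  push_cast
  ring_nf

lemma norm_exp_pi_mul_I_mul_intCast_mul (n : ℤ) (t : ℂ) :
    ‖cexp (Real.pi * I * (n * t))‖ = Real.exp (-Real.pi * n * t.im) := by
  rw [Complex.norm_exp]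
  congr 1
  simp
  ring

variable {b : ℤ × ℤ → ℂ} {t : ℂ}

lemma norm_mul_pow_mul_exp_le (b : ℤ × ℤ → ℂ) (ν : ℕ) (p : ℤ × ℤ) (t : ℂ) :
    ‖b p * (p.2 : ℂ) ^ ν * cexp (Real.pi * I * (p.1 * t))‖ ≤
      ν.factorial * (‖b p‖ * Real.exp (-Real.pi * p.1 * t.im + 1 * |(p.2 : ℝ)|)) := by
  have hpow := Real.pow_div_factorial_le_exp |(p.2 : ℝ)| (abs_nonneg _) ν
  rw [div_le_iff₀ (by positivity)] at hpow
  rw [norm_mul, norm_mul, norm_pow, norm_exp_pi_mul_I_mul_intCast_mul, Real.exp_add,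
    Complex.norm_intCast, one_mul]
  calc ‖b p‖ * |(p.2 : ℝ)| ^ ν * Real.exp (-Real.pi * p.1 * t.im)
    _ ≤ ‖b p‖ * (Real.exp |(p.2 : ℝ)| * ν.factorial) * Real.exp (-Real.pi * p.1 * t.im) := by gcongr
    _ = _ := by ring

namespace JacobiSummable

variable (hb : JacobiSummable b)
include hb

lemma summable_jacobiTaylor (ν : ℕ) (ht : 0 < t.im) :
    Summable fun p : ℤ × ℤ ↦ b p * (p.2 : ℂ) ^ ν * cexp (Real.pi * I * (p.1 * t)) :=
  .of_norm_bounded ((hb _ ht 1).mul_left _) fun p ↦ norm_mul_pow_mul_exp_le b ν p t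

lemma summable_exponential_expansion (ht : 0 < t.im) (z : ℂ) :
    Summable fun q : (ℤ × ℤ) × ℕ ↦ b q.1 * cexp (Real.pi * I * (q.1.1 * t)) *
      ((Real.pi * I * z * q.1.2) ^ q.2 / q.2.factorial) := by
  have hexp (x : ℝ) : HasSum (fun n : ℕ ↦ x ^ n / n.factorial) (Real.exp x) := by
    simpa only [Real.exp_eq_exp_ℝ] using NormedSpace.expSeries_div_hasSum_exp x
  have hnorm (q : (ℤ × ℤ) × ℕ) : ‖b q.1 * cexp (Real.pi * I * (q.1.1 * t)) *
      ((Real.pi * I * z * q.1.2) ^ q.2 / q.2.factorial)‖ =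
      ‖b q.1‖ * Real.exp (-Real.pi * q.1.1 * t.im) *
        ((Real.pi * ‖z‖ * |(q.1.2 : ℝ)|) ^ q.2 / q.2.factorial) := by
    rw [norm_mul, norm_mul, norm_exp_pi_mul_I_mul_intCast_mul]
    simp [abs_of_pos Real.pi_pos]
  have hrow (p : ℤ × ℤ) := (hexp (Real.pi * ‖z‖ * |(p.2 : ℝ)|)).mul_left
    (‖b p‖ * Real.exp (-Real.pi * p.1 * t.im))
  have hsum : Summable fun q : (ℤ × ℤ) × ℕ ↦ ‖b q.1‖ * Real.exp (-Real.pi * q.1.1 * t.im) *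
      ((Real.pi * ‖z‖ * |(q.1.2 : ℝ)|) ^ q.2 / q.2.factorial) := by
    refine (summable_prod_of_nonneg fun q ↦ by rw [← hnorm]; exact norm_nonneg _).2
      ⟨fun p ↦ (hrow p).summable, (hb _ ht (Real.pi * ‖z‖)).congr fun p ↦ ?_⟩
    rw [(hrow p).tsum_eq, Real.exp_add, ← mul_assoc]
  exact .of_norm (hsum.congr fun q ↦ (hnorm q).symm)

lemma summable_jacobiSeries (ht : 0 < t.im) (z : ℂ) :
    Summable fun p : ℤ × ℤ ↦ b p * cexp (Real.pi * I * (p.1 * t + p.2 * z)) := by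
  refine .of_norm_bounded (hb _ ht (Real.pi * |z.im|)) fun p ↦ ?_
  rw [norm_mul, mul_add, Complex.exp_add, norm_mul, norm_exp_pi_mul_I_mul_intCast_mul,
    norm_exp_pi_mul_I_mul_intCast_mul, ← Real.exp_add]
  refine mul_le_mul_of_nonneg_left (Real.exp_le_exp.2 (add_le_add_right ?_ _)) (norm_nonneg _)
  rw [mul_assoc, mul_assoc, neg_mul, ← mul_neg, ← abs_mul, mul_comm z.im]
  exact mul_le_mul_of_nonneg_left (neg_le_abs _) Real.pi_pos.le

/-- The Taylor expansion arises from expanding every `exp (π i R z)` in the absolutely convergent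
double series. -/
lemma hasSum_jacobiTaylor (ht : 0 < t.im) (z : ℂ) :
    HasSum (fun ν ↦ (Real.pi * I) ^ ν / ν.factorial * jacobiTaylor b ν t * z ^ ν)
      (jacobiSeries b t z) := by
  have hdouble := (hb.summable_exponential_expansion ht z).hasSum
  have hexp (p : ℤ × ℤ) := (NormedSpace.expSeries_div_hasSum_exp (Real.pi * I * z * p.2)).mul_left
    (b p * cexp (Real.pi * I * (p.1 * t)))
  have hrow := hdouble.prod_fiberwise hexp
  have hvalue : HasSum (fun p : ℤ × ℤ ↦ b p * cexp (Real.pi * I * (p.1 * t + p.2 * z)))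
      (∑' q : (ℤ × ℤ) × ℕ, b q.1 * cexp (Real.pi * I * (q.1.1 * t)) *
        ((Real.pi * I * z * q.1.2) ^ q.2 / q.2.factorial)) := by
    refine hrow.congr_fun fun p ↦ ?_
    rw [← Complex.exp_eq_exp_ℂ, mul_assoc (b p), ← Complex.exp_add]
    ring_nf
  rw [jacobiSeries, hvalue.tsum_eq]
  refine ((Equiv.prodComm ℕ (ℤ × ℤ)).hasSum_iff.2 hdouble).prod_fiberwise fun ν ↦ ?_
  have hcol := (hb.summable_jacobiTaylor ν ht).hasSum.mul_left
    ((Real.pi * I) ^ ν / ν.factorial * z ^ ν)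
  rw [mul_right_comm _ (jacobiTaylor b ν t), jacobiTaylor]
  refine hcol.congr_fun fun p ↦ ?_
  simp only [Function.comp_apply, Equiv.prodComm_apply, Prod.swap_prod_mk]
  ring

lemma hasSum_moment (ν : ℕ) (hvanish : ∀ t : ℂ, 0 < t.im → jacobiTaylor b ν t = 0) (N : ℤ) :
    HasSum (fun R : ℤ ↦ b (N, R) * (R : ℂ) ^ ν) 0 := by
  have hsummable (N : ℤ) : Summable fun R : ℤ ↦ b (N, R) * (R : ℂ) ^ ν := by
    have hrow := ((hb.summable_jacobiTaylor ν (t := I) (by simp)).prod_factor N).mul_right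
      (cexp (-(Real.pi * I * (N * I))))
    refine hrow.congr fun R ↦ ?_
    rw [mul_assoc, ← Complex.exp_add, add_neg_cancel, Complex.exp_zero, mul_one]
  have hzero := eq_zero_of_hasSum_exp_zero
    (c := fun N ↦ (∑' R : ℤ, b (N, R) * (R : ℂ) ^ ν) * cexp (Real.pi * I * (N * I))) (fun x ↦ by
      have him : 0 < (I + x).im := by simp
      have hsum := (hb.summable_jacobiTaylor ν him).hasSum
      rw [← jacobiTaylor, hvanish _ him] at hsum
      refine hsum.prod_fiberwise fun N ↦ ?_
      rw [mul_assoc, ← Complex.exp_add]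
      refine ((hsummable N).hasSum.mul_right _).congr_fun fun R ↦ ?_
      ring_nf) N
  rw [← (mul_eq_zero.1 hzero).resolve_right (Complex.exp_ne_zero _)]
  exact (hsummable N).hasSum

end JacobiSummable

end FourierJacobi

section TaylorSignForm

lemma tendsto_div_pow_of_hasSum {c : ℕ → ℂ} {f : ℂ → ℂ} {ν : ℕ}
    (hf : ∀ z, HasSum (fun n ↦ c n * z ^ n) (f z)) (hc : ∀ μ < ν, c μ = 0) :
    Tendsto (fun z ↦ f z / z ^ ν) (𝓝[≠] 0) (𝓝 (c ν)) := by
  have hquot (z : ℂ) :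
      HasSum (fun n ↦ c (n + ν) * z ^ n) (Function.update (fun z ↦ f z / z ^ ν) 0 (c ν) z) := by
    rcases eq_or_ne z 0 with rfl | hz
    · simpa using hasSum_single (f := fun n ↦ c (n + ν) * (0 : ℂ) ^ n) 0 fun n hn ↦ by simp [hn]
    · have h := ((hasSum_nat_add_iff' ν).2 (hf z)).div_const (z ^ ν)
      rw [Finset.sum_eq_zero fun μ hμ ↦ by rw [hc μ (Finset.mem_range.1 hμ), zero_mul],
        sub_zero] at h
      rw [Function.update_of_ne hz]
      refine h.congr_fun fun n ↦ ?_
      rw [pow_add, ← mul_assoc, mul_div_cancel_right₀ _ (pow_ne_zero ν hz)]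
  have hseries : HasFPowerSeriesAt (Function.update (fun z ↦ f z / z ^ ν) 0 (c ν))
      (.ofScalars ℂ fun n ↦ c (n + ν)) 0 := by
    refine hasFPowerSeriesAt_iff.2 (.of_forall fun z ↦ ?_)
    simpa [FormalMultilinearSeries.coeff_ofScalars, mul_comm] using hquot z
  exact continuousAt_update_same.1 hseries.continuousAt

variable {b : ℤ × ℤ → ℂ} {K N₀ ν : ℕ} {t : ℂ}

namespace JacobiSummable

variable (hb : JacobiSummable b)
include hb

lemma differentiableOn_jacobiTaylor (hN : ∀ p : ℤ × ℤ, p.1 < 0 → b p = 0) (ν : ℕ) :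
    DifferentiableOn ℂ (jacobiTaylor b ν) {t | 0 < t.im} := by
  intro t (ht : 0 < t.im)
  have hopen : IsOpen {s : ℂ | t.im / 2 < s.im} := isOpen_lt continuous_const continuous_im
  have hdiff : DifferentiableOn ℂ (jacobiTaylor b ν) {s : ℂ | t.im / 2 < s.im} := by
    refine differentiableOn_tsum_of_summable_norm
      ((hb _ (half_pos ht) 1).mul_left (ν.factorial : ℝ))
      (fun p ↦ by fun_prop) hopen fun p s hs ↦ (norm_mul_pow_mul_exp_le b ν p s).trans ?_
    rcases lt_or_ge p.1 0 with hp | hp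
    · simp [hN p hp]
    · have hp' : 0 ≤ Real.pi * p.1 := mul_nonneg Real.pi_pos.le (Int.cast_nonneg hp)
      have hs' : t.im / 2 ≤ s.im := (Set.mem_ofPred_eq ▸ hs).le
      gcongr ?_ * (?_ * Real.exp (?_ + _))
      linarith [mul_le_mul_of_nonneg_left hs' hp']
  exact (hdiff.differentiableAt (hopen.mem_nhds (half_lt_self ht))).differentiableWithinAt

lemma exists_norm_jacobiTaylor_le (hN : ∀ p : ℤ × ℤ, p.1 < N₀ → b p = 0) (ν : ℕ) :
    ∃ C : ℝ, ∀ t : ℂ, 1 ≤ t.im → ‖jacobiTaylor b ν t‖ ≤ C * Real.exp (-Real.pi * N₀ * t.im) := by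
  have hsum := (hb 1 one_pos 1).mul_left (ν.factorial * Real.exp (Real.pi * N₀))
  refine ⟨_, fun t ht ↦ tsum_of_norm_bounded (hsum.hasSum.mul_right _) fun p ↦
    (norm_mul_pow_mul_exp_le b ν p t).trans ?_⟩
  rcases lt_or_ge p.1 N₀ with hp | hp
  · simp [hN p hp]
  · have hp' : (N₀ : ℝ) ≤ p.1 := mod_cast hp
    have hexp : -Real.pi * p.1 * t.im + 1 * |(p.2 : ℝ)| ≤
        Real.pi * N₀ + (-Real.pi * p.1 * 1 + 1 * |(p.2 : ℝ)|) + -Real.pi * N₀ * t.im := by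
      nlinarith [mul_nonneg Real.pi_pos.le (mul_nonneg (sub_nonneg.2 hp') (sub_nonneg.2 ht))]
    calc ν.factorial * (‖b p‖ * Real.exp (-Real.pi * p.1 * t.im + 1 * |(p.2 : ℝ)|))
      _ ≤ ν.factorial * (‖b p‖ * Real.exp (Real.pi * N₀ +
          (-Real.pi * p.1 * 1 + 1 * |(p.2 : ℝ)|) + -Real.pi * N₀ * t.im)) := by gcongr
      _ = _ := by rw [Real.exp_add, Real.exp_add]; ring

lemma isSignForm_jacobiTaylor (hodd : ∀ p : ℤ × ℤ, ¬Odd p.1 → b p = 0)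
    (hN : ∀ p : ℤ × ℤ, p.1 < N₀ → b p = 0)
    (hinv : ∀ t : ℂ, 0 < t.im → jacobiTaylor b ν (-1 / t) = -t ^ K * jacobiTaylor b ν t) :
    IsSignForm K N₀ (jacobiTaylor b ν) where
  differentiableOn := hb.differentiableOn_jacobiTaylor
    (fun p hp ↦ hN p (hp.trans_le (Int.natCast_nonneg _))) ν
  map_add_one t _ := by
    rw [jacobiTaylor, jacobiTaylor, ← tsum_neg]
    refine tsum_congr fun p ↦ ?_
    by_cases hp : Odd p.1
    · rw [show Real.pi * I * (p.1 * (t + 1)) = Real.pi * I * p.1 + Real.pi * I * (p.1 * t) by ring,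
        Complex.exp_add, exp_pi_mul_I_mul_intCast, hp.neg_one_zpow]
      ring
    · simp [hodd p hp]
  map_neg_one_div := hinv
  exists_bound := hb.exists_norm_jacobiTaylor_le hN ν

/-- Comparison of the leading Taylor coefficients of the two sides of the law of `jacobiSeries`. -/
lemma jacobiTaylor_neg_one_div {M : ℂ} (hlaw : ∀ t z : ℂ, 0 < t.im →
      jacobiSeries b (-1 / t) (z / t) * cexp (-(Real.pi * I * M * (z ^ 2 / t))) =
        -(t ^ K * jacobiSeries b t z))
    (hν : ∀ μ < ν, ∀ t : ℂ, 0 < t.im → jacobiTaylor b μ t = 0) (ht : 0 < t.im) :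
    jacobiTaylor b ν (-1 / t) = -t ^ (K + ν) * jacobiTaylor b ν t := by
  have ht0 : t ≠ 0 := fun h ↦ by simp [h] at ht
  have ht' : 0 < (-1 / t).im := by
    rw [neg_div, neg_im, one_div, inv_im, neg_div, neg_neg]
    exact div_pos ht (normSq_pos.2 ht0)
  have hleading {s : ℂ} (hs : 0 < s.im) :=
    tendsto_div_pow_of_hasSum (ν := ν) (hb.hasSum_jacobiTaylor hs) fun μ hμ ↦ by
      rw [hν μ hμ s hs, mul_zero]
  have hdiv : Tendsto (fun z : ℂ ↦ z / t) (𝓝[≠] 0) (𝓝[≠] 0) := by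
    refine tendsto_nhdsWithin_iff.2 ⟨?_, by
      filter_upwards [self_mem_nhdsWithin] with z hz using div_ne_zero hz ht0⟩
    have hcont : Continuous fun z : ℂ ↦ z / t := by fun_prop
    exact (hcont.tendsto' 0 0 (by simp)).mono_left nhdsWithin_le_nhds
  have hfactor : Tendsto (fun z : ℂ ↦ cexp (-(Real.pi * I * M * (z ^ 2 / t)))) (𝓝[≠] 0) (𝓝 1) := by
    have hcont : Continuous fun z : ℂ ↦ cexp (-(Real.pi * I * M * (z ^ 2 / t))) := by fun_prop
    exact (hcont.tendsto' 0 1 (by simp)).mono_left nhdsWithin_le_nhds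
  have hlim := tendsto_nhds_unique_of_eventuallyEq (((hleading ht').comp hdiv).mul hfactor)
    ((hleading ht).const_mul (-t ^ (K + ν))) (by
      filter_upwards [self_mem_nhdsWithin] with z hz
      have hz' : z ≠ 0 := hz
      rw [Function.comp_apply, div_mul_eq_mul_div, hlaw t z ht, pow_add, div_pow]
      field_simp)
  have hconst : ((Real.pi * I) ^ ν / ν.factorial : ℂ) ≠ 0 := by
    simp [Real.pi_ne_zero, Nat.factorial_ne_zero]
  refine mul_left_cancel₀ hconst ?_
  linear_combination hlim

lemma jacobiTaylor_eq_zero {M : ℂ} (hodd : ∀ p : ℤ × ℤ, ¬Odd p.1 → b p = 0)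
    (hN : ∀ p : ℤ × ℤ, p.1 < N₀ → b p = 0)
    (hlaw : ∀ t z : ℂ, 0 < t.im →
      jacobiSeries b (-1 / t) (z / t) * cexp (-(Real.pi * I * M * (z ^ 2 / t))) =
        -(t ^ K * jacobiSeries b t z))
    (hν : K + ν < 6 * N₀) (ht : 0 < t.im) : jacobiTaylor b ν t = 0 := by
  induction ν using Nat.strong_induction_on generalizing t with
  | _ ν ih =>
    exact (hb.isSignForm_jacobiTaylor hodd hN fun t ht ↦ hb.jacobiTaylor_neg_one_div hlaw
      (fun μ hμ t ht ↦ ih μ hμ (by lia) ht) ht).eq_zero_of_lt hν ht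

end JacobiSummable

end TaylorSignForm

section FourierJacobiOfForm

lemma HasFourierExpansion.jacobiSummable {c : ℤ × ℤ × ℤ → ℂ} {g : ℂ → ℂ → ℂ → ℂ}
    (hc : HasFourierExpansion c g) (M : ℤ) : JacobiSummable fun p ↦ c (M, p) := by
  intro y hy r
  have hsigned (r : ℝ) :
      Summable fun p : ℤ × ℤ ↦ ‖c (M, p)‖ * Real.exp (-Real.pi * p.1 * y + r * p.2) := by
    set v : ℝ := -r / Real.pi with hv
    set w : ℝ := (v ^ 2 + 1) / y with hw
    have hmem : symMat (y * I) (v * I) (w * I) ∈ H2 := by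
      simp only [symMat_mem_H2, im_ofReal_mul, I_im, mul_one]
      exact ⟨hy, by rw [hw, mul_div_cancel₀ _ hy.ne']; exact lt_add_one _⟩
    refine (((hc _ _ _ hmem).summable.norm.prod_factor M).mul_left
      (Real.exp (Real.pi * M * w))).congr fun p ↦ ?_
    rw [norm_mul, halfChar, Complex.norm_exp, mul_left_comm, ← Real.exp_add]
    congr 2
    have hr : r = -(Real.pi * v) := by rw [hv]; field_simp [Real.pi_ne_zero]
    simp [hr]
    ring
  refine .of_nonneg_of_le (fun p ↦ by positivity) (fun p ↦ ?_) ((hsigned r).add (hsigned (-r)))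
  rw [← mul_add]
  refine mul_le_mul_of_nonneg_left ?_ (norm_nonneg _)
  rcases abs_choice (p.2 : ℝ) with h | h <;> rw [h]
  · exact le_add_of_nonneg_right (Real.exp_nonneg _)
  · rw [mul_neg, ← neg_mul]
    exact le_add_of_nonneg_left (Real.exp_nonneg _)

lemma HasFourierExpansion.hasSum_jacobiSeries {c : ℤ × ℤ × ℤ → ℂ} {g : ℂ → ℂ → ℂ → ℂ}
    (hc : HasFourierExpansion c g) {t z u : ℂ} (h : symMat t z u ∈ H2) :
    HasSum (fun M : ℤ ↦ jacobiSeries (fun p ↦ c (M, p)) t z * cexp (Real.pi * I * M * u))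
      (g t z u) := by
  refine (hc t z u h).prod_fiberwise fun M ↦ ?_
  refine (((hc.jacobiSummable M).summable_jacobiSeries (symMat_mem_H2.1 h).1 z).hasSum.mul_right
    (cexp (Real.pi * I * M * u))).congr_fun fun p ↦ ?_
  rw [mul_assoc (c (M, p)), ← Complex.exp_add, halfChar]
  ring_nf

lemma eq_zero_of_hasSum_exp_snd {d : ℤ → ℂ} {t z : ℂ} (ht : 0 < t.im)
    (h : ∀ u, symMat t z u ∈ H2 → HasSum (fun M : ℤ ↦ d M * cexp (Real.pi * I * M * u)) 0)
    (M : ℤ) : d M = 0 := by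
  set u₀ : ℂ := ((z.im ^ 2 + 1) / t.im : ℝ) * I with hu₀
  have hmem (x : ℝ) : symMat t z (u₀ + x) ∈ H2 := by
    refine symMat_mem_H2.2 ⟨ht, ?_⟩
    rw [hu₀, add_im, ofReal_im, im_ofReal_mul, I_im, mul_one, add_zero, mul_div_cancel₀ _ ht.ne']
    exact lt_add_one _
  have hzero := eq_zero_of_hasSum_exp_zero (c := fun M ↦ d M * cexp (Real.pi * I * M * u₀))
    (fun x ↦ (h _ (hmem x)).congr_fun fun M ↦ by
      rw [mul_assoc, ← Complex.exp_add]
      ring_nf) M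
  exact (mul_eq_zero.1 hzero).resolve_right (Complex.exp_ne_zero _)

variable {j k : ℕ} {f : ℂ → ℂ → ℂ → Fin (j + 1) → ℂ} {a : Fin (j + 1) → ℤ × ℤ × ℤ → ℂ}

lemma IsEpsForm.jacobiSeries_neg_one_div (hf : IsEpsForm k f)
    (ha : ∀ l, HasFourierExpansion (a l) fun t z u ↦ f t z u l) (i : Fin (j + 1)) (M : ℤ) {t : ℂ}
    (ht : 0 < t.im) (z : ℂ) :
    jacobiSeries (fun p ↦ a i (M, p)) (-1 / t) (z / t) * cexp (-(Real.pi * I * M * (z ^ 2 / t))) =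
      -(t ^ k * ∑ l : Fin (j + 1), ((l : ℕ).choose i : ℂ) * z ^ ((l : ℕ) - i) *
        t ^ (j - (l : ℕ)) * jacobiSeries (fun p ↦ a l (M, p)) t z) := by
  refine eq_neg_of_add_eq_zero_left (eq_zero_of_hasSum_exp_snd (z := z) (d := fun M ↦
    jacobiSeries (fun p ↦ a i (M, p)) (-1 / t) (z / t) * cexp (-(Real.pi * I * M * (z ^ 2 / t))) +
      t ^ k * ∑ l : Fin (j + 1), ((l : ℕ).choose i : ℂ) * z ^ ((l : ℕ) - i) *
        t ^ (j - (l : ℕ)) * jacobiSeries (fun p ↦ a l (M, p)) t z) ht (fun u hu ↦ ?_) M)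
  have hleft := (ha i).hasSum_jacobiSeries (symMat_inv_mem_H2 hu)
  have hright := (hasSum_sum (s := Finset.univ) fun l _ ↦ ((ha l).hasSum_jacobiSeries hu).mul_left
    (((l : ℕ).choose i : ℂ) * z ^ ((l : ℕ) - i) * t ^ (j - (l : ℕ)))).mul_left (t ^ k)
  rw [hf.inv _ _ _ hu, zpow_natCast] at hleft
  have hsum := hleft.add hright
  rw [neg_add_cancel] at hsum
  refine hsum.congr_fun fun M ↦ ?_
  simp only [← mul_assoc, ← Finset.sum_mul]
  rw [add_mul, mul_assoc _ (cexp _) (cexp _), ← Complex.exp_add]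
  ring_nf

end FourierJacobiOfForm

section Moments

variable {j k : ℕ} {f : ℂ → ℂ → ℂ → Fin (j + 1) → ℂ} {a : Fin (j + 1) → ℤ × ℤ × ℤ → ℂ}

/-- The relations between the Fourier coefficients of an `IsEpsForm` of weight `k` which express the
vanishing of Taylor coefficients of the functions `jacobiSeries (a l (M, ·))` when these are forms
of level one of small weight. -/
structure MomentRelations (k : ℕ) (a : Fin (j + 1) → ℤ × ℤ × ℤ → ℂ) : Prop where
  hasSum_zero : ∀ (l : Fin (j + 1)) (M : ℤ) (N₀ : ℕ), (∀ N R, N < (N₀ : ℤ) → a l (M, N, R) = 0) →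
    k + (j - l) < 6 * N₀ ∨ (k + (j - l) = 8 ∧ N₀ = 1) → ∀ N, HasSum (fun R ↦ a l (M, N, R)) 0
  hasSum_pow : ∀ (l : Fin (j + 1)) (M : ℤ) (N₀ ν : ℕ), (∀ l' > l, ∀ N R, a l' (M, N, R) = 0) →
    (∀ N R, N < (N₀ : ℤ) → a l (M, N, R) = 0) → k + (j - l) + ν < 6 * N₀ →
    ∀ N, HasSum (fun R : ℤ ↦ a l (M, N, R) * (R : ℂ) ^ ν) 0

theorem IsEpsForm.momentRelations (hf : IsEpsForm k f)
    (ha : ∀ l, HasFourierExpansion (a l) fun t z u ↦ f t z u l) : MomentRelations k a where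
  hasSum_zero l M N₀ hN hK N := by
    have hb := (ha l).jacobiSummable M
    have hinv (t : ℂ) (ht : 0 < t.im) : jacobiTaylor (fun p ↦ a l (M, p)) 0 (-1 / t) =
        -t ^ (k + (j - l)) * jacobiTaylor (fun p ↦ a l (M, p)) 0 t := by
      have hseries (t : ℂ) : jacobiTaylor (fun p ↦ a l (M, p)) 0 t =
          jacobiSeries (fun p ↦ a l (M, p)) t 0 := by simp [jacobiTaylor, jacobiSeries]
      have hlaw := hf.jacobiSeries_neg_one_div ha l M ht 0
      rw [Fintype.sum_eq_single l fun i hi ↦ ?_] at hlaw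
      · rw [hseries, hseries, pow_add]
        simpa [mul_assoc] using hlaw
      · rcases hi.lt_or_gt with h | h
        · rw [Nat.choose_eq_zero_of_lt h]; simp
        · rw [zero_pow (Nat.sub_ne_zero_of_lt h)]; simp
    have hsign := hb.isSignForm_jacobiTaylor
      (fun p hp ↦ (hf.epsCoeffs ha).eq_zero_of_not_odd_snd l M p.2 hp)
      (fun p hp ↦ hN p.1 p.2 hp) hinv
    simpa using hb.hasSum_moment 0 (fun t ht ↦ by
      rcases hK with hK | ⟨hK, rfl⟩
      · exact hsign.eq_zero_of_lt hK ht
      · exact (hK ▸ hsign).eq_zero_of_weight_eight ht) N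
  hasSum_pow l M N₀ ν hl hN hK N := by
    have hb := (ha l).jacobiSummable M
    have hlaw (t z : ℂ) (ht : 0 < t.im) : jacobiSeries (fun p ↦ a l (M, p)) (-1 / t) (z / t) *
        cexp (-(Real.pi * I * M * (z ^ 2 / t))) =
          -(t ^ (k + (j - l)) * jacobiSeries (fun p ↦ a l (M, p)) t z) := by
      rw [hf.jacobiSeries_neg_one_div ha l M ht z, Fintype.sum_eq_single l fun i hi ↦ ?_]
      · rw [pow_add]
        simp [mul_assoc]
      · rcases hi.lt_or_gt with h | h
        · rw [Nat.choose_eq_zero_of_lt h]; simp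
        · simp [jacobiSeries, hl i h]
    exact hb.hasSum_moment ν (fun t ht ↦ hb.jacobiTaylor_eq_zero
      (fun p hp ↦ (hf.epsCoeffs ha).eq_zero_of_not_odd_snd l M p.2 hp)
      (fun p hp ↦ hN p.1 p.2 hp) hlaw hK ht) N

/-- Multiply `c` with the polynomial that vanishes on `S` except at one point. -/
lemma eq_zero_of_hasSum_mul_pow_zero {c : ℤ → ℂ} {m : ℕ} {S : Finset ℤ} (hS : S.card ≤ m + 1)
    (hc : ∀ R ∉ S, c R = 0) (h : ∀ ν ≤ m, HasSum (fun R : ℤ ↦ c R * (R : ℂ) ^ ν) 0) (R : ℤ) :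
    c R = 0 := by
  by_cases hR : R ∉ S
  · exact hc R hR
  rw [not_not] at hR
  set p : Polynomial ℂ := ∏ R' ∈ S.erase R, (.X - .C (R' : ℂ)) with hp
  have hdeg : p.natDegree < m + 1 := by
    rw [hp, Polynomial.natDegree_finsetProd_X_sub_C_eq_card, Finset.card_erase_of_mem hR]
    lia
  have heval (R' : ℤ) : p.eval (R' : ℂ) = ∏ R'' ∈ S.erase R, ((R' : ℂ) - R'') := by
    simp [hp, Polynomial.eval_prod]
  have hzero : HasSum (fun R' : ℤ ↦ c R' * p.eval (R' : ℂ)) 0 := by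
    have hsum : HasSum (fun R' : ℤ ↦ ∑ ν ∈ Finset.range (m + 1),
        p.coeff ν * (c R' * (R' : ℂ) ^ ν)) (∑ ν ∈ Finset.range (m + 1), p.coeff ν * 0) :=
      hasSum_sum fun ν hν ↦ (h ν (Nat.lt_succ_iff.1 (Finset.mem_range.1 hν))).mul_left _
    simp only [mul_zero, Finset.sum_const_zero] at hsum
    refine hsum.congr_fun fun R' ↦ ?_
    rw [Polynomial.eval_eq_sum_range' hdeg, Finset.mul_sum]
    exact Finset.sum_congr rfl fun ν _ ↦ mul_left_comm _ _ _
  have hsingle := hasSum_single (f := fun R' : ℤ ↦ c R' * p.eval (R' : ℂ)) R fun R' hne ↦ by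
    by_cases hR' : R' ∈ S
    · rw [heval, Finset.prod_eq_zero (Finset.mem_erase.2 ⟨hne, hR'⟩) (sub_self (R' : ℂ)), mul_zero]
    · rw [hc R' hR', zero_mul]
  refine (mul_eq_zero.1 (hsingle.unique hzero)).resolve_right ?_
  rw [heval]
  exact Finset.prod_ne_zero_iff.2 fun R' hR' ↦
    sub_ne_zero.2 (mod_cast (Finset.ne_of_mem_erase hR').symm)

namespace EpsCoeffs

variable (ha : EpsCoeffs a)
include ha

/-- For `M < |R|` one of the shears makes `N` smaller. -/
lemma eq_zero_of_lt_abs {l : Fin (j + 1)} {M N R : ℤ} (hR : M < |R|)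
    (hN : ∀ l' ≥ l, ∀ N' < N, ∀ R', a l' (M, N', R') = 0) : a l (M, N, R) = 0 := by
  have hterm {N' R' : ℤ} (hN' : N' < N) (l' : Fin (j + 1)) :
      ((l' : ℕ).choose l : ℂ) * a l' (M, N', R') = 0 := by
    rcases lt_or_ge l' l with hl | hl
    · rw [Nat.choose_eq_zero_of_lt hl, Nat.cast_zero, zero_mul]
    · rw [hN l' hl N' hN', mul_zero]
  rcases abs_cases R with ⟨habs, -⟩ | ⟨habs, -⟩
  · have h := ha.shear_inv l M (N - R + M) (R - 2 * M)
    rw [Fintype.sum_eq_zero _ (hterm (by lia)), neg_zero] at h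
    rw [← h]
    ring_nf
  · rw [ha.shear, Fintype.sum_eq_zero _ fun l' ↦ ?_, neg_zero]
    rw [mul_right_comm, hterm (by lia), zero_mul]

lemma eq_zero_of_hasSum_pow {l : Fin (j + 1)} {M : ℕ} (hl : ∀ l' > l, ∀ N R, a l' (M, N, R) = 0)
    (hmom : ∀ ν ≤ M, ∀ N, HasSum (fun R : ℤ ↦ a l (M, N, R) * (R : ℂ) ^ ν) 0) (N R : ℤ) :
    a l (M, N, R) = 0 := by
  by_cases hM : ¬Odd (M : ℤ)
  · exact ha.eq_zero_of_not_odd_fst l N R hM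
  rw [not_not] at hM
  have hlt (n : ℕ) : ∀ N R, N < (n : ℤ) → a l (M, N, R) = 0 := by
    induction n with
    | zero => exact fun N R ↦ ha.eq_zero_of_snd_neg l M R
    | succ n ih =>
      intro N R hN
      refine eq_zero_of_hasSum_mul_pow_zero (c := fun R ↦ a l (M, N, R))
        (S := (Finset.range (M + 1)).image fun i : ℕ ↦ 2 * (i : ℤ) - M)
        (Finset.card_image_le.trans (by simp)) (fun R hR ↦ ?_) (fun ν hν ↦ hmom ν hν N) R
      by_cases hodd : Odd R
      · refine ha.eq_zero_of_lt_abs (lt_of_not_ge fun hle ↦ hR ?_) fun l' hl' N' hN' R' ↦ ?_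
        · obtain ⟨r, hr⟩ := hodd
          obtain ⟨m, hm⟩ := hM
          rw [abs_le] at hle
          exact Finset.mem_image.2 ⟨(r + m + 1).toNat, by rw [Finset.mem_range]; lia, by lia⟩
        · rcases hl'.eq_or_lt with rfl | hlt
          · exact ih N' R' (by push_cast at hN; lia)
          · exact hl l' hlt N' R'
      · exact ha.eq_zero_of_not_odd_mid l M N hodd
  exact hlt (N + 1).toNat N R (by lia)

theorem eq_zero_of_moments (hmom : MomentRelations k a) {M N₀ : ℕ}
    (hN : ∀ l N R, N < (N₀ : ℤ) → a l (M, N, R) = 0) {l : Fin (j + 1)}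
    (hl : k + (j - l) + M < 6 * N₀) (N R : ℤ) : a l (M, N, R) = 0 := by
  induction l using WellFoundedGT.induction generalizing N R with
  | ind l ih =>
    have htop : ∀ l' > l, ∀ N R, a l' (M, N, R) = 0 := fun l' hl' ↦
      ih l' hl' (by have : (l : ℕ) < l' := hl'; lia)
    exact ha.eq_zero_of_hasSum_pow htop
      (fun ν hν ↦ hmom.hasSum_pow l M N₀ ν htop (hN l) (by lia)) N R

end EpsCoeffs

end Moments

/-! ### The forms of weight `(20, 2)` are determined by one coefficient -/

section LinearAlgebra

variable {v : Fin 21 → ℂ}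
  (hshear : ∀ i, v i = -∑ l : Fin 21, ((l : ℕ).choose i : ℂ) * ((-1) ^ (l : ℕ) * v l))
include hshear

lemma eq_zero_of_shear_of_degree_le_five (hlow : ∀ l : Fin 21, (l : ℕ) < 3 → v l = 0)
    (hhigh : ∀ l : Fin 21, 6 ≤ (l : ℕ) → v l = 0) : v = 0 := by
  have h0 := hshear 0
  have h2 := hshear 2
  have h4 := hshear 4
  simp only [Fin.sum_univ_ofNat] at h0 h2 h4
  norm_num [hlow, hhigh, Nat.choose] at h0 h2 h4
  have v5 : v 5 = 0 := by linear_combination 2 * h2 - 6 * h0 - 3 * h4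
  have v4 : v 4 = 0 := by linear_combination h4 / 2 + 5 / 2 * v5
  have v3 : v 3 = 0 := by linear_combination -h0 + v4 - v5
  ext l
  rcases lt_or_ge (l : ℕ) 6 with hl | hl
  · rcases lt_or_ge (l : ℕ) 3 with hl' | hl'
    · exact hlow l hl'
    · obtain ⟨l, hl''⟩ := l
      interval_cases l <;> assumption
  · exact hhigh l hl

lemma eq_zero_of_shear_of_swap (hswap : ∀ l, v l = -v l.rev)
    (hhigh : ∀ l : Fin 21, 18 ≤ (l : ℕ) → v l = 0) (h4 : v 4 = 0) (h14 : v 14 = 0) : v = 0 := by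
  have hrev {l : Fin 21} (hl : v l = 0) : v l.rev = 0 := by
    rw [hswap, Fin.rev_rev, hl, neg_zero]
  have hlow (l : Fin 21) (hl : (l : ℕ) < 3) : v l = 0 := by
    rw [hswap, hhigh _ (by rw [Fin.val_rev]; lia), neg_zero]
  have v6 : v 6 = 0 := hrev h14
  have v16 : v 16 = 0 := hrev h4
  have v10 : v 10 = 0 := self_eq_neg.1 (hswap 10)
  have v17 : v 17 = 0 := by
    simpa [Fin.sum_univ_ofNat, hhigh, v16, Nat.choose] using hshear 16
  have v15 : v 15 = 0 := by
    simpa [Fin.sum_univ_ofNat, hhigh, h14, v16, v17, Nat.choose] using hshear 14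
  have v3 : v 3 = 0 := hrev v17
  have v5 : v 5 = 0 := hrev v15
  have v8 : v 8 = -v 12 := hswap 8
  have v9 : v 9 = -v 11 := hswap 9
  have e8 := hshear 8
  have e10 := hshear 10
  have e12 := hshear 12
  simp only [Fin.sum_univ_ofNat] at e8 e10 e12
  norm_num [hhigh, v8, v9, v10, h14, v15, v16, v17, Nat.choose] at e8 e10 e12
  have v13 : v 13 = 0 := by
    linear_combination (-e8 + 156 / 11 * e10 - 443 / 2 * e12) * (2 / 221)
  have v12 : v 12 = 0 := by linear_combination e12 / 2 + 13 / 2 * v13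
  have v11 : v 11 = 0 := by linear_combination -e10 / 11 + 6 * v12 - 26 * v13
  have v7' : v 7 = 0 := hrev v13
  have v8' : v 8 = 0 := hrev v12
  have v9' : v 9 = 0 := hrev v11
  ext l
  rcases lt_or_ge (l : ℕ) 18 with hl | hl
  · rcases lt_or_ge (l : ℕ) 3 with hl' | hl'
    · exact hlow l hl'
    · obtain ⟨l, hl''⟩ := l
      interval_cases l <;> assumption
  · exact hhigh l hl

end LinearAlgebra

namespace EpsCoeffs

section

variable {j : ℕ} {a : Fin (j + 1) → ℤ × ℤ × ℤ → ℂ} (ha : EpsCoeffs a)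
include ha

lemma eq_zero_of_snd_lt_one (l : Fin (j + 1)) (M : ℤ) {N : ℤ} (R : ℤ) (hN : N < 1) :
    a l (M, N, R) = 0 := by
  rcases (Int.lt_add_one_iff.1 (zero_add (1 : ℤ) ▸ hN)).lt_or_eq with hneg | rfl
  · exact ha.eq_zero_of_snd_neg l M R hneg
  · exact ha.eq_zero_of_not_odd_snd l M R (by decide)

lemma eq_zero_of_snd_lt_add_two {M : ℤ} {N₀ : ℕ} (hodd : Odd N₀)
    (hlt : ∀ l N R, N < (N₀ : ℤ) → a l (M, N, R) = 0) (heq : ∀ l R, a l (M, N₀, R) = 0)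
    (l : Fin (j + 1)) (N R : ℤ) (hN : N < ((N₀ + 2 : ℕ) : ℤ)) : a l (M, N, R) = 0 := by
  rcases lt_trichotomy N N₀ with h | rfl | h
  · exact hlt l N R h
  · exact heq l R
  · refine ha.eq_zero_of_not_odd_snd l M R ?_
    obtain ⟨n, rfl⟩ := hodd
    rw [Int.not_odd_iff_even]
    exact ⟨n + 1, by lia⟩

lemma coeff_eq_neg_sum_choose (M N : ℤ) (i : Fin (j + 1)) : a i (M, N, M) =
    -∑ l : Fin (j + 1), ((l : ℕ).choose i : ℂ) * ((-1) ^ (l : ℕ) * a l (M, N, M)) := by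
  have h := ha.shear_inv i M N (-M)
  simp only [ha.neg_mid] at h
  rw [← h]
  ring_nf

lemma eq_zero_of_fst_eq_one {N : ℤ} (hlt : ∀ l, ∀ N' < N, ∀ R, a l (1, N', R) = 0)
    (hone : ∀ l, a l (1, N, 1) = 0) (l : Fin (j + 1)) (R : ℤ) : a l (1, N, R) = 0 := by
  rcases lt_or_ge 1 |R| with hR | hR
  · exact ha.eq_zero_of_lt_abs hR fun l' _ ↦ hlt l'
  · obtain ⟨hl, hu⟩ := abs_le.1 hR
    interval_cases R
    · rw [ha.neg_mid, hone, mul_zero]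
    · exact ha.eq_zero_of_not_odd_mid l 1 N (by decide)
    · exact hone l

lemma eq_zero_of_hasSum_pow_of_even {l : Fin (j + 1)} {M N : ℤ} {ν : ℕ} (heven : Even (l + ν : ℕ))
    (hR : ∀ R, R ≠ 1 → R ≠ -1 → a l (M, N, R) = 0)
    (hsum : HasSum (fun R : ℤ ↦ a l (M, N, R) * (R : ℂ) ^ ν) 0) : a l (M, N, 1) = 0 := by
  have hpair := hasSum_sum_of_ne_finset_zero (f := fun R : ℤ ↦ a l (M, N, R) * (R : ℂ) ^ ν)
    (s := {1, -1})
    (L := .unconditional ℤ) fun R hmem ↦ by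
      rw [Finset.mem_insert, Finset.mem_singleton, not_or] at hmem
      rw [hR R hmem.1 hmem.2, zero_mul]
  have h := hpair.unique hsum
  rw [Finset.sum_pair (by decide), ha.neg_mid, mul_right_comm] at h
  push_cast at h
  rw [one_pow, ← pow_add, heven.neg_one_pow] at h
  linear_combination h / 2

lemma eq_zero_of_forall_fst_lt {m : ℕ} (hlt : ∀ m' < m, ∀ l N R, a l ((m' : ℕ), N, R) = 0)
    (l : Fin (j + 1)) (N R : ℤ) (hN : N < (m : ℤ)) : a l (m, N, R) = 0 := by
  rcases lt_or_ge N 0 with hneg | hpos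
  · exact ha.eq_zero_of_snd_neg l m R hneg
  · lift N to ℕ using hpos
    rw [ha.swap, hlt N (by lia), neg_zero]

end

variable {a : Fin 21 → ℤ × ℤ × ℤ → ℂ} (ha : EpsCoeffs a) (hmom : MomentRelations 2 a)
include ha hmom

lemma eq_zero_at_one_one (h : a 4 (1, 1, 1) = 0) (l : Fin 21) (R : ℤ) : a l (1, 1, R) = 0 := by
  have hlt (l : Fin 21) (M N R : ℤ) (hN : N < ((1 : ℕ) : ℤ)) : a l (M, N, R) = 0 :=
    ha.eq_zero_of_snd_lt_one l M R hN
  refine ha.eq_zero_of_fst_eq_one (fun l N hN R ↦ hlt l 1 N R hN) (fun l ↦ ?_) l R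
  refine congrFun (eq_zero_of_shear_of_swap (v := fun l ↦ a l (1, 1, 1))
    (ha.coeff_eq_neg_sum_choose 1 1) (fun l ↦ ha.swap l 1 1 1) (fun l hl ↦ ?_) h ?_) l
  · exact ha.eq_zero_of_moments hmom (M := 1) (N₀ := 1) (fun l ↦ hlt l 1) (by lia) 1 1
  · refine ha.eq_zero_of_hasSum_pow_of_even (ν := 0) (by decide) (fun R h1 h2 ↦ ?_)
      (by simpa using hmom.hasSum_zero 14 1 1 (hlt 14 1) (.inr (by decide)) 1)
    rcases eq_or_ne R 0 with rfl | h0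
    · exact ha.eq_zero_of_not_odd_mid 14 1 1 (by decide)
    · exact ha.eq_zero_of_lt_abs (by rcases abs_cases R with h | h <;> lia)
        fun l' _ N hN R ↦ hlt l' 1 N R hN

lemma eq_zero_at_three_one (hone : ∀ l R, a l (1, 1, R) = 0) (l : Fin 21) (hl : 18 ≤ (l : ℕ)) :
    a l (3, 1, 1) = 0 := by
  have hlt (l : Fin 21) (M N R : ℤ) (hN : N < ((1 : ℕ) : ℤ)) : a l (M, N, R) = 0 :=
    ha.eq_zero_of_snd_lt_one l M R hN
  have hthree (l : Fin 21) : a l (3, 1, 3) = 0 := by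
    have h := ha.shear_inv l.rev 1 1 1
    simp only [hone, mul_zero, Finset.sum_const_zero, neg_zero] at h
    rw [ha.swap]
    exact neg_eq_zero.2 h
  have hR (l : Fin 21) (R : ℤ) (h1 : R ≠ 1) (h2 : R ≠ -1) : a l (3, 1, R) = 0 := by
    rcases lt_or_ge 3 |R| with hR | hR
    · exact ha.eq_zero_of_lt_abs hR fun l' _ N hN R ↦ hlt l' 3 N R hN
    by_cases hodd : Odd R
    · obtain ⟨r, rfl⟩ := hodd
      rcases (show r = 1 ∨ r = -2 by rw [abs_le] at hR; lia) with rfl | rfl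
      · exact hthree l
      · exact (ha.neg_mid l 3 1 3).trans (by rw [hthree, mul_zero])
    · exact ha.eq_zero_of_not_odd_mid l 3 1 hodd
  have h20 (N R : ℤ) : a 20 (3, N, R) = 0 :=
    ha.eq_zero_of_moments hmom (M := 3) (N₀ := 1) (fun l ↦ hlt l 3) (by decide) N R
  obtain rfl | rfl | rfl : l = 18 ∨ l = 19 ∨ l = 20 := by lia
  · exact ha.eq_zero_of_hasSum_pow_of_even (ν := 0) (by decide) (hR 18)
      (by simpa using hmom.hasSum_zero 18 3 1 (hlt 18 3) (.inl (by decide)) 1)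
  · exact ha.eq_zero_of_hasSum_pow_of_even (ν := 1) (by decide) (hR 19)
      (hmom.hasSum_pow 19 3 1 1 (fun l' hl' ↦ (show l' = 20 by lia) ▸ h20) (hlt 19 3) (by decide) 1)
  · exact h20 1 1

lemma eq_zero_of_fst_one (h : a 4 (1, 1, 1) = 0) (l : Fin 21) (N R : ℤ) : a l (1, N, R) = 0 := by
  have hone := ha.eq_zero_at_one_one hmom h
  have hlt₃ := ha.eq_zero_of_snd_lt_add_two (M := 1) (N₀ := 1) odd_one
    (fun l N R hN ↦ ha.eq_zero_of_snd_lt_one l 1 R hN) hone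
  have hthree : ∀ l R, a l (1, 3, R) = 0 := by
    refine ha.eq_zero_of_fst_eq_one (fun l N hN R ↦ hlt₃ l N R hN) fun l ↦ ?_
    refine congrFun (eq_zero_of_shear_of_degree_le_five (v := fun l ↦ a l (1, 3, 1))
      (ha.coeff_eq_neg_sum_choose 1 3) (fun l hl ↦ ?_) (fun l hl ↦ ?_)) l
    · rw [ha.swap, ha.eq_zero_at_three_one hmom hone _ (by rw [Fin.val_rev]; lia), neg_zero]
    · exact ha.eq_zero_of_moments hmom (M := 1) (N₀ := 3) hlt₃ (by lia) 3 1
  exact ha.eq_zero_of_moments hmom (M := 1) (N₀ := 5)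
    (ha.eq_zero_of_snd_lt_add_two (N₀ := 3) (by decide) hlt₃ hthree) (by lia) N R

lemma eq_zero_of_fst_three (hone : ∀ l N R, a l (1, N, R) = 0) (l : Fin 21) (N R : ℤ) :
    a l (3, N, R) = 0 := by
  have hlt₃ := ha.eq_zero_of_snd_lt_add_two (M := 3) (N₀ := 1) odd_one
    (fun l N R hN ↦ ha.eq_zero_of_snd_lt_one l 3 R hN)
    (fun l R ↦ (ha.swap l 1 3 R).trans (by rw [hone, neg_zero]))
  have hhigh (l : Fin 21) (hl : 8 ≤ (l : ℕ)) (R : ℤ) : a l (3, 3, R) = 0 :=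
    ha.eq_zero_of_moments hmom (M := 3) (N₀ := 3) hlt₃ (by lia) 3 R
  have hthree (l : Fin 21) (R : ℤ) : a l (3, 3, R) = 0 := by
    rcases lt_or_ge (l : ℕ) 8 with hl | hl
    · rw [ha.swap, hhigh _ (by rw [Fin.val_rev]; lia), neg_zero]
    · exact hhigh l hl R
  exact ha.eq_zero_of_moments hmom (M := 3) (N₀ := 5)
    (ha.eq_zero_of_snd_lt_add_two (N₀ := 3) (by decide) hlt₃ hthree) (by lia) N R

theorem eq_zero_of_coeff_eq_zero (h : a 4 (1, 1, 1) = 0) (l : Fin 21) (p : ℤ × ℤ × ℤ) :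
    a l p = 0 := by
  have hone := ha.eq_zero_of_fst_one hmom h
  have hthree := ha.eq_zero_of_fst_three hmom hone
  have hnat (m : ℕ) : ∀ l N R, a l (m, N, R) = 0 := by
    induction m using Nat.strong_induction_on with
    | _ m ih =>
      by_cases hodd : Odd (m : ℤ)
      · rcases lt_or_ge m 5 with hm | hm
        · interval_cases m <;> first | exact hone | exact hthree | exact absurd hodd (by decide)
        · exact fun l N R ↦
            ha.eq_zero_of_moments hmom (ha.eq_zero_of_forall_fst_lt ih) (by lia) N R
      · exact fun l N R ↦ ha.eq_zero_of_not_odd_fst l N R hodd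
  obtain ⟨M, N, R⟩ := p
  rcases lt_or_ge M 0 with hneg | hpos
  · exact ha.eq_zero_of_fst_neg l N R hneg
  · lift M to ℕ using hpos
    exact hnat M l N R

end EpsCoeffs

/-! ### Reduction to the construction of one form -/

lemma diagH_eq_symMat (t u : ℂ) : diagH t u = symMat t 0 u := by
  ext i j
  fin_cases i <;> fin_cases j <;> rfl

lemma symMat_zero_ofReal_mul_I_mem_H2 {t : ℂ} (ht : 0 < t.im) {y : ℝ} (hy : 0 < y) :
    symMat t 0 (y * I) ∈ H2 := by
  simpa [symMat_mem_H2, ht] using mul_pos ht hy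

lemma norm_halfChar_zero_ofReal_mul_I (p : ℤ × ℤ × ℤ) (t : ℂ) (y : ℝ) :
    ‖halfChar p t 0 (y * I)‖ = Real.exp (-(Real.pi * p.2.1 * t.im)) *
      Real.exp (-(Real.pi * p.1 * y)) := by
  rw [halfChar, Complex.norm_exp, ← Real.exp_add]
  simp
  ring

theorem HasFourierExpansion.tendsto_zero {c : ℤ × ℤ × ℤ → ℂ} {g : ℂ → ℂ → ℂ → ℂ}
    (hc : HasFourierExpansion c g) (hpos : ∀ p, p.1 ≤ 0 → c p = 0) {t : ℂ} (ht : 0 < t.im) :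
    Tendsto (fun y : ℝ ↦ g t 0 (y * I)) atTop (𝓝 0) := by
  have hlim : Tendsto (fun y : ℝ ↦ ∑' p, c p * halfChar p t 0 (y * I)) atTop
      (𝓝 (∑' _ : ℤ × ℤ × ℤ, (0 : ℂ))) := by
    refine tendsto_tsum_of_dominated_convergence
      (bound := fun p ↦ ‖c p * halfChar p t 0 ((1 : ℝ) * I)‖)
      (hc _ _ _ (symMat_zero_ofReal_mul_I_mem_H2 ht one_pos)).summable.norm (fun p ↦ ?_) ?_
    · rcases le_or_gt p.1 0 with hp | hp
      · simp [hpos p hp]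
      · rw [tendsto_zero_iff_norm_tendsto_zero]
        simp only [norm_mul, norm_halfChar_zero_ofReal_mul_I, ← mul_assoc]
        rw [← mul_zero (‖c p‖ * Real.exp (-(Real.pi * p.2.1 * t.im)))]
        exact (Real.tendsto_exp_neg_atTop_nhds_zero.comp
          (tendsto_id.const_mul_atTop (by positivity))).const_mul _
    · filter_upwards [eventually_ge_atTop 1] with y hy p
      rcases le_or_gt p.1 0 with hp | hp
      · simp [hpos p hp]
      · rw [norm_mul, norm_mul, norm_halfChar_zero_ofReal_mul_I, norm_halfChar_zero_ofReal_mul_I]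
        gcongr
  rw [tsum_zero] at hlim
  refine hlim.congr' ?_
  filter_upwards [eventually_gt_atTop 0] with y hy
  exact (hc _ _ _ (symMat_zero_ofReal_mul_I_mem_H2 ht hy)).tsum_eq

section

variable {j : ℕ} {k : ℤ} {ε : Matrix (Fin 4) (Fin 4) ℤ → ℂ}
  {F : (Fin 2 → Fin 2 → ℂ) → Fin (j + 1) → ℂ}

lemma IsEps.exists_hasFourierExpansion (hε : IsEps ε) (hk : Even k) (hd : DifferentiableOn ℂ F H2)
    (hF : ∀ γ ∈ Sp4Z, ∀ τ ∈ H2, F (moeb γ τ) = ε γ • wt j k (den γ τ) (F τ)) :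
    ∃ a : Fin (j + 1) → ℤ × ℤ × ℤ → ℂ,
      ∀ l, HasFourierExpansion (a l) fun t z u ↦ F (symMat t z u) l := by
  refine (hε.isEpsForm hk hF).exists_coeffs (differentiableOn_pi.1 (hd.comp
    (f := fun w : Fin 3 → ℂ ↦ symMat (2 * w 0) (2 * w 1) (2 * w 2)) ?_
    fun w hw ↦ mem_tube_posCone.1 hw))
  have hlin (i : Fin 3) : Differentiable ℂ fun w : Fin 3 → ℂ ↦ 2 * w i := by fun_prop
  refine (differentiable_pi.2 fun r ↦ differentiable_pi.2 fun s ↦ ?_).differentiableOn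
  fin_cases r <;> fin_cases s
  exacts [hlin 0, hlin 1, hlin 1, hlin 2]

/-- The cusp condition is automatic: all frequencies in the Fourier expansion are odd, so there is
no constant term. -/
theorem IsEps.isSiegelCuspForm (hε : IsEps ε) (hk : Even k) (hd : DifferentiableOn ℂ F H2)
    (hF : ∀ g ∈ sp4Gens, ∀ τ ∈ H2, F (moeb g τ) = -wt j k (den g τ) (F τ))
    (hzero : ∀ τ, τ ∉ H2 → F τ = 0) : IsSiegelCuspForm j k Sp4Z ε F := by
  have hlaw := transforms_of_sp4Gens hε hF
  refine ⟨hd, hlaw, fun γ hγ t ht ↦ ?_, hzero⟩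
  obtain ⟨a, ha⟩ := hε.exists_hasFourierExpansion hk hd hlaw
  have hcoeff := (hε.isEpsForm hk hlaw).epsCoeffs ha
  have hlim : Tendsto (fun y : ℝ ↦ F (symMat t 0 (y * I))) atTop (𝓝 0) := by
    refine tendsto_pi_nhds.2 fun l ↦ (ha l).tendsto_zero (fun p hp ↦ ?_) ht
    rcases hp.lt_or_eq with hneg | h0
    · exact hcoeff.eq_zero_of_fst_neg l p.2.1 p.2.2 hneg
    · exact hcoeff.eq_zero_of_not_odd_fst l p.2.1 p.2.2 (by rw [h0]; decide)
  rw [← smul_zero (ε γ)]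
  refine (hlim.const_smul (ε γ)).congr' ?_
  filter_upwards [eventually_gt_atTop 0] with y hy
  rw [diagH_eq_symMat, slashS_eq_smul hlaw hγ (symMat_zero_ofReal_mul_I_mem_H2 ht hy)]

end

section

variable {ε : Matrix (Fin 4) (Fin 4) ℤ → ℂ} {F G : (Fin 2 → Fin 2 → ℂ) → Fin 21 → ℂ}

lemma eq_zero_of_mem_SiegelCusp (hε : IsEps ε) (hF : F ∈ SiegelCusp 20 2 Sp4Z ε)
    {a : Fin 21 → ℤ × ℤ × ℤ → ℂ}
    (ha : ∀ l, HasFourierExpansion (a l) fun t z u ↦ F (symMat t z u) l)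
    (h : a 4 (1, 1, 1) = 0) : F = 0 := by
  have hform : IsEpsForm (2 : ℕ) fun t z u ↦ F (symMat t z u) := hε.isEpsForm even_two hF.2.1
  have hcoeff := (hform.epsCoeffs ha).eq_zero_of_coeff_eq_zero (hform.momentRelations ha) h
  funext τ
  by_cases hτ : τ ∈ H2
  · obtain ⟨t, z, u, rfl⟩ := exists_eq_symMat hτ
    funext l
    refine (ha l t z u hτ).unique ?_
    simp [hcoeff]
  · exact hF.2.2.2 τ hτ

theorem exists_smul_eq_of_mem_SiegelCusp (hε : IsEps ε) (hF : F ∈ SiegelCusp 20 2 Sp4Z ε)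
    (hne : F ≠ 0) (hG : G ∈ SiegelCusp 20 2 Sp4Z ε) : ∃ c : ℂ, c • F = G := by
  obtain ⟨a, ha⟩ := hε.exists_hasFourierExpansion even_two hF.1 hF.2.1
  obtain ⟨b, hb⟩ := hε.exists_hasFourierExpansion even_two hG.1 hG.2.1
  have ha4 : a 4 (1, 1, 1) ≠ 0 := fun h ↦ hne (eq_zero_of_mem_SiegelCusp hε hF ha h)
  refine ⟨b 4 (1, 1, 1) / a 4 (1, 1, 1), sub_eq_zero.1 ?_⟩
  refine eq_zero_of_mem_SiegelCusp hε (Submodule.sub_mem _ (Submodule.smul_mem _ _ hF) hG)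
    (a := fun l p ↦ b 4 (1, 1, 1) / a 4 (1, 1, 1) * a l p - b l p) (fun l t z u h ↦ ?_) ?_
  · refine (((ha l t z u h).mul_left _).sub (hb l t z u h)).congr_fun fun p ↦ ?_
    ring
  · rw [div_mul_cancel₀ _ ha4, sub_self]

end

/-! ### Exponential series on the half space -/

/-- `ImGE δ t z u` says that the imaginary part of `symMat t z u` is at least `δ` times the identity
matrix. -/
def ImGE (δ : ℝ) (t z u : ℂ) : Prop :=
  0 ≤ t.im - δ ∧ 0 ≤ u.im - δ ∧ z.im ^ 2 ≤ (t.im - δ) * (u.im - δ)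

lemma exists_eventually_imGE {t z u : ℂ} (h : symMat t z u ∈ H2) :
    ∃ δ > 0, ∀ᶠ τ in 𝓝 (symMat t z u), ImGE δ (τ 0 0) (τ 0 1) (τ 1 1) := by
  rw [symMat_mem_H2] at h
  have hopen : IsOpen {p : ℝ × (Fin 2 → Fin 2 → ℂ) | 0 < (p.2 0 0).im - p.1 ∧
      (p.2 0 1).im ^ 2 < ((p.2 0 0).im - p.1) * ((p.2 1 1).im - p.1)} :=
    (isOpen_lt (by fun_prop) (by fun_prop)).and (isOpen_lt (by fun_prop) (by fun_prop))
  have hev := (hopen.eventually_mem (x := (0, symMat t z u))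
    (by simpa [symMat] using h)).curry_nhds
  obtain ⟨δ, hδ, hδ0⟩ :=
    ((hev.filter_mono nhdsWithin_le_nhds).and (self_mem_nhdsWithin (s := Set.Ioi (0 : ℝ)))).exists
  refine ⟨δ, hδ0, hδ.mono fun τ hτ ↦ ⟨hτ.1.le, ?_, hτ.2.le⟩⟩
  exact (pos_of_mul_pos_right ((sq_nonneg _).trans_lt hτ.2) hτ.1.le).le

lemma exists_imGE {t z u : ℂ} (h : symMat t z u ∈ H2) : ∃ δ > 0, ImGE δ t z u :=
  (exists_eventually_imGE h).imp fun _ hδ ↦ ⟨hδ.1, hδ.2.self_of_nhds⟩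

/-- The data of a series
`∑ᵢ cᵢ exp(πi(Xᵢ t + 2 Yᵢ z + Zᵢ u)) exp(2πi(Aᵢ a + Bᵢ b))`, with `cᵢ` the `coeff`, `(Aᵢ, Bᵢ)` the
`freq` and `(Xᵢ, Yᵢ, Zᵢ)` the `quad`; a common shape for theta series, closed under products. -/
structure ExpFamily (ι : Type*) where
  coeff : ι → ℂ
  freq₁ : ι → ℂ
  freq₂ : ι → ℂ
  quad₁₁ : ι → ℝ
  quad₁₂ : ι → ℝ
  quad₂₂ : ι → ℝ

namespace ExpFamily

variable {ι κ : Type*} {F : ExpFamily ι} {G : ExpFamily κ} {t z u : ℂ} {δ : ℝ}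

/-- The summands of the value of the series at `a = b = 0`. -/
def nullTerm (F : ExpFamily ι) (t z u : ℂ) (i : ι) : ℂ :=
  F.coeff i * cexp (Real.pi * I * (F.quad₁₁ i * t + 2 * F.quad₁₂ i * z + F.quad₂₂ i * u))

/-- The summands of the series. -/
def term (F : ExpFamily ι) (t z u a b : ℂ) (i : ι) : ℂ :=
  F.nullTerm t z u i * cexp (2 * Real.pi * I * (F.freq₁ i * a + F.freq₂ i * b))

/-- The sum of the series. -/
def val (F : ExpFamily ι) (t z u a b : ℂ) : ℂ :=
  ∑' i, F.term t z u a b i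

/-- The product of two series. -/
def mul (F : ExpFamily ι) (G : ExpFamily κ) : ExpFamily (ι × κ) where
  coeff p := F.coeff p.1 * G.coeff p.2
  freq₁ p := F.freq₁ p.1 + G.freq₁ p.2
  freq₂ p := F.freq₂ p.1 + G.freq₂ p.2
  quad₁₁ p := F.quad₁₁ p.1 + G.quad₁₁ p.2
  quad₁₂ p := F.quad₁₂ p.1 + G.quad₁₂ p.2
  quad₂₂ p := F.quad₂₂ p.1 + G.quad₂₂ p.2

/-- The series with `(a, b)` replaced by `(α a, α b)`. -/
def scale (α : ℂ) (F : ExpFamily ι) : ExpFamily ι :=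
  { F with freq₁ := fun i ↦ α * F.freq₁ i, freq₂ := fun i ↦ α * F.freq₂ i }

/-- The series with coefficients `cᵢ Aᵢᵐ Bᵢⁿ`, a constant multiple of a partial derivative in
`(a, b)`. -/
def moment (F : ExpFamily ι) (m n : ℕ) : ExpFamily ι :=
  { F with coeff := fun i ↦ F.coeff i * (F.freq₁ i ^ m * F.freq₂ i ^ n) }

lemma nullTerm_moment (F : ExpFamily ι) (m n : ℕ) (t z u : ℂ) (i : ι) :
    (F.moment m n).nullTerm t z u i =
      F.nullTerm t z u i * (F.freq₁ i ^ m * F.freq₂ i ^ n) :=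
  mul_right_comm _ _ _

/-- Up to the factor `(2πi)ʲ / j!`, the homogeneous part of degree `j` in `(a, b)` of the series. -/
def homogPart (F : ExpFamily ι) (j : ℕ) (t z u : ℂ) (l : Fin (j + 1)) : ℂ :=
  j.choose l * ∑' i, (F.moment (j - l) l).nullTerm t z u i

/-- The conditions under which the series converges, locally uniformly on the half space. -/
structure IsAdmissible (F : ExpFamily ι) : Prop where
  nonneg : ∀ i p q r, 0 ≤ p → 0 ≤ r → q ^ 2 ≤ p * r →
    0 ≤ p * F.quad₁₁ i + 2 * q * F.quad₁₂ i + r * F.quad₂₂ i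
  summable : ∀ R δ : ℝ, 0 ≤ R → 0 < δ → Summable fun i ↦
    ‖F.coeff i‖ * Real.exp (R * (‖F.freq₁ i‖ + ‖F.freq₂ i‖) - δ * (F.quad₁₁ i + F.quad₂₂ i))

namespace IsAdmissible

lemma scale (hF : F.IsAdmissible) (α : ℂ) : (F.scale α).IsAdmissible where
  nonneg := hF.nonneg
  summable R δ hR hδ := by
    refine (hF.summable (R * ‖α‖) δ (by positivity) hδ).congr fun i ↦ ?_
    simp only [ExpFamily.scale, norm_mul]
    congr 2
    ring

lemma mul (hF : F.IsAdmissible) (hG : G.IsAdmissible) : (F.mul G).IsAdmissible where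
  nonneg i p q r hp hr hq := by
    have h₁ := hF.nonneg i.1 p q r hp hr hq
    have h₂ := hG.nonneg i.2 p q r hp hr hq
    simp only [ExpFamily.mul]
    linarith
  summable R δ hR hδ := by
    refine .of_nonneg_of_le (fun i ↦ by positivity) (fun i ↦ ?_)
      ((hF.summable R δ hR hδ).mul_of_nonneg (hG.summable R δ hR hδ)
        (fun i ↦ by positivity) (fun i ↦ by positivity))
    simp only [ExpFamily.mul, norm_mul]
    rw [mul_mul_mul_comm, ← Real.exp_add]
    gcongr
    have h₁ := norm_add_le (F.freq₁ i.1) (G.freq₁ i.2)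
    have h₂ := norm_add_le (F.freq₂ i.1) (G.freq₂ i.2)
    nlinarith

lemma moment (hF : F.IsAdmissible) (m n : ℕ) : (F.moment m n).IsAdmissible where
  nonneg := hF.nonneg
  summable R δ hR hδ := by
    refine .of_nonneg_of_le (fun i ↦ by positivity) (fun i ↦ ?_)
      ((hF.summable (R + 1) δ (by positivity) hδ).mul_left ((m.factorial : ℝ) * n.factorial))
    simp only [ExpFamily.moment, norm_mul, norm_pow]
    have h₁ := Real.pow_div_factorial_le_exp _ (norm_nonneg (F.freq₁ i)) m
    have h₂ := Real.pow_div_factorial_le_exp _ (norm_nonneg (F.freq₂ i)) n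
    rw [div_le_iff₀ (by positivity)] at h₁ h₂
    set E := Real.exp (R * (‖F.freq₁ i‖ + ‖F.freq₂ i‖) - δ * (F.quad₁₁ i + F.quad₂₂ i)) with hE
    calc ‖F.coeff i‖ * (‖F.freq₁ i‖ ^ m * ‖F.freq₂ i‖ ^ n) * E
        ≤ ‖F.coeff i‖ * ((Real.exp ‖F.freq₁ i‖ * m.factorial) *
            (Real.exp ‖F.freq₂ i‖ * n.factorial)) * E := by gcongr
      _ = m.factorial * n.factorial * (‖F.coeff i‖ *
            (Real.exp ‖F.freq₁ i‖ * Real.exp ‖F.freq₂ i‖ * E)) := by ring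
      _ = _ := by
        rw [hE, ← Real.exp_add, ← Real.exp_add]
        congr 3
        ring

lemma norm_nullTerm_le (hF : F.IsAdmissible) (h : ImGE δ t z u) (i : ι) :
    ‖F.nullTerm t z u i‖ ≤
      ‖F.coeff i‖ * Real.exp (-(Real.pi * δ) * (F.quad₁₁ i + F.quad₂₂ i)) := by
  rw [nullTerm, norm_mul, norm_exp]
  gcongr
  have hre : (Real.pi * I * (F.quad₁₁ i * t + 2 * F.quad₁₂ i * z + F.quad₂₂ i * u)).re =
      -(Real.pi * (F.quad₁₁ i * t.im + 2 * F.quad₁₂ i * z.im + F.quad₂₂ i * u.im)) := by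
    simp
  rw [hre]
  nlinarith [hF.nonneg i _ _ _ h.1 h.2.1 h.2.2, Real.pi_pos]

lemma summable_norm_nullTerm_mul_exp (hF : F.IsAdmissible) (h : symMat t z u ∈ H2) {R : ℝ}
    (hR : 0 ≤ R) :
    Summable fun i ↦ ‖F.nullTerm t z u i‖ * Real.exp (R * (‖F.freq₁ i‖ + ‖F.freq₂ i‖)) := by
  obtain ⟨δ, hδ, him⟩ := exists_imGE h
  refine .of_nonneg_of_le (fun i ↦ by positivity) (fun i ↦ ?_)
    (hF.summable R (Real.pi * δ) hR (mul_pos Real.pi_pos hδ))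
  rw [sub_eq_neg_add, Real.exp_add, ← mul_assoc, ← neg_mul]
  gcongr
  exact hF.norm_nullTerm_le him i

lemma summable_norm_nullTerm (hF : F.IsAdmissible) (h : symMat t z u ∈ H2) :
    Summable fun i ↦ ‖F.nullTerm t z u i‖ := by
  simpa using hF.summable_norm_nullTerm_mul_exp h le_rfl

end IsAdmissible

lemma norm_two_pi_I_mul_freq_le (F : ExpFamily ι) (a b : ℂ) (i : ι) :
    ‖2 * Real.pi * I * (F.freq₁ i * a + F.freq₂ i * b)‖ ≤
      2 * Real.pi * (‖a‖ + ‖b‖) * (‖F.freq₁ i‖ + ‖F.freq₂ i‖) := by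
  have hadd : ‖F.freq₁ i * a + F.freq₂ i * b‖ ≤ (‖a‖ + ‖b‖) * (‖F.freq₁ i‖ + ‖F.freq₂ i‖) := by
    refine (norm_add_le _ _).trans ?_
    rw [norm_mul, norm_mul]
    have h₁ := mul_nonneg (norm_nonneg a) (norm_nonneg (F.freq₂ i))
    have h₂ := mul_nonneg (norm_nonneg b) (norm_nonneg (F.freq₁ i))
    linarith
  have hpi : ‖2 * Real.pi * I‖ = 2 * Real.pi := by simp [Real.pi_pos.le]
  rw [norm_mul, hpi, mul_assoc (2 * Real.pi)]
  gcongr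

lemma IsAdmissible.summable_norm_term (hF : F.IsAdmissible) (h : symMat t z u ∈ H2) (a b : ℂ) :
    Summable fun i ↦ ‖F.term t z u a b i‖ := by
  refine .of_nonneg_of_le (fun i ↦ by positivity) (fun i ↦ ?_)
    (hF.summable_norm_nullTerm_mul_exp h (R := 2 * Real.pi * (‖a‖ + ‖b‖)) (by positivity))
  rw [term, norm_mul, norm_exp]
  gcongr
  exact (re_le_norm _).trans (F.norm_two_pi_I_mul_freq_le a b i)

lemma val_mul (hF : F.IsAdmissible) (hG : G.IsAdmissible) (h : symMat t z u ∈ H2) (a b : ℂ) :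
    (F.mul G).val t z u a b = F.val t z u a b * G.val t z u a b := by
  rw [val, val, val, tsum_mul_tsum_of_summable_norm (hF.summable_norm_term h a b)
    (hG.summable_norm_term h a b)]
  refine tsum_congr fun p ↦ ?_
  simp only [term, nullTerm, mul]
  rw [mul_mul_mul_comm, mul_mul_mul_comm (F.coeff p.1), ← Complex.exp_add, ← Complex.exp_add]
  congr 3 <;> push_cast <;> ring

lemma val_scale (F : ExpFamily ι) (α t z u a b : ℂ) :
    (F.scale α).val t z u a b = F.val t z u (α * a) (α * b) := by
  refine tsum_congr fun p ↦ ?_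
  simp only [term, nullTerm, scale]
  congr 2
  ring

end ExpFamily

/-! ### Homogeneous parts of exponential series -/

lemma hasSum_tsum_mul_pow_div_factorial {ι : Type*} {e x : ι → ℂ}
    (h : Summable fun i ↦ ‖e i‖ * Real.exp ‖x i‖) :
    HasSum (fun n : ℕ ↦ ∑' i, e i * (x i ^ n / n.factorial)) (∑' i, e i * cexp (x i)) := by
  have hfiber (i : ι) : HasSum (fun n : ℕ ↦ e i * (x i ^ n / n.factorial)) (e i * cexp (x i)) := by
    rw [Complex.exp_eq_exp_ℂ]
    exact (NormedSpace.expSeries_div_hasSum_exp (x i)).mul_left (e i)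
  have hnorm (i : ι) : HasSum (fun n : ℕ ↦ ‖e i * (x i ^ n / n.factorial)‖)
      (‖e i‖ * Real.exp ‖x i‖) := by
    simp only [norm_mul, norm_div, norm_pow, norm_natCast]
    rw [Real.exp_eq_exp_ℝ]
    exact (NormedSpace.expSeries_div_hasSum_exp ‖x i‖).mul_left ‖e i‖
  have hsum : Summable fun p : ι × ℕ ↦ e p.1 * (x p.1 ^ p.2 / p.2.factorial) := by
    refine .of_norm ((summable_prod_of_nonneg fun _ ↦ norm_nonneg _).2
      ⟨fun i ↦ (hnorm i).summable, ?_⟩)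
    simpa only [(hnorm _).tsum_eq] using h
  have htotal := hsum.hasSum.prod_fiberwise hfiber
  rw [htotal.tsum_eq]
  exact ((Equiv.prodComm ℕ ι).hasSum_iff.2 hsum.hasSum).prod_fiberwise
    fun n ↦ (hsum.prod_symm.prod_factor n).hasSum

lemma eq_of_hasSum_pow {c d : ℕ → ℂ} {f : ℂ → ℂ} (hc : ∀ s, HasSum (fun n ↦ s ^ n * c n) (f s))
    (hd : ∀ s, HasSum (fun n ↦ s ^ n * d n) (f s)) : c = d := by
  have hasFPowerSeriesAt {c : ℕ → ℂ} (hc : ∀ s, HasSum (fun n ↦ s ^ n * c n) (f s)) :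
      HasFPowerSeriesAt f (FormalMultilinearSeries.ofScalars ℂ c) 0 := by
    refine hasFPowerSeriesAt_iff.2 (.of_forall fun s ↦ ?_)
    simpa [FormalMultilinearSeries.coeff_ofScalars] using hc s
  funext n
  simpa [FormalMultilinearSeries.coeff_ofScalars] using congrArg (fun p ↦ p.coeff n)
    ((hasFPowerSeriesAt hc).eq_formalMultilinearSeries (hasFPowerSeriesAt hd))

namespace ExpFamily

variable {ι κ : Type*} {F : ExpFamily ι} {t z u : ℂ}

lemma IsAdmissible.tsum_nullTerm_mul_pow (hF : F.IsAdmissible) (h : symMat t z u ∈ H2) (j : ℕ)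
    (a b : ℂ) : ∑' i, F.nullTerm t z u i * (F.freq₁ i * a + F.freq₂ i * b) ^ j =
      binForm (F.homogPart j t z u) a b := by
  simp only [binForm, homogPart, ← tsum_mul_left, ← tsum_mul_right]
  have hsum (l : Fin (j + 1)) (_ : l ∈ Finset.univ) : Summable fun i ↦ j.choose l *
      (F.moment (j - l) l).nullTerm t z u i * a ^ (j - (l : ℕ)) * b ^ (l : ℕ) :=
    ((((hF.moment (j - l) l).summable_norm_nullTerm h).of_norm.mul_left _).mul_right _).mul_right _
  rw [← Summable.tsum_finsetSum hsum]
  refine tsum_congr fun i ↦ ?_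
  rw [add_comm (F.freq₁ i * a), add_pow, Finset.mul_sum, Finset.sum_range]
  refine Finset.sum_congr rfl fun l _ ↦ ?_
  simp only [nullTerm_moment, mul_pow]
  ring

lemma IsAdmissible.hasSum_val (hF : F.IsAdmissible) (h : symMat t z u ∈ H2) (a b s : ℂ) :
    HasSum (fun n : ℕ ↦ s ^ n * ((2 * Real.pi * I) ^ n / n.factorial *
      binForm (F.homogPart n t z u) a b)) (F.val t z u (s * a) (s * b)) := by
  have hbound : Summable fun i ↦ ‖F.nullTerm t z u i‖ *
      Real.exp ‖2 * Real.pi * I * (F.freq₁ i * (s * a) + F.freq₂ i * (s * b))‖ := by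
    refine .of_nonneg_of_le (fun i ↦ by positivity) (fun i ↦ ?_)
      (hF.summable_norm_nullTerm_mul_exp h (R := 2 * Real.pi * (‖s * a‖ + ‖s * b‖)) (by positivity))
    gcongr
    exact F.norm_two_pi_I_mul_freq_le _ _ i
  refine (hasSum_tsum_mul_pow_div_factorial hbound).congr_fun fun n ↦ ?_
  rw [← hF.tsum_nullTerm_mul_pow h, ← tsum_mul_left, ← tsum_mul_left]
  refine tsum_congr fun i ↦ ?_
  rw [show 2 * Real.pi * I * (F.freq₁ i * (s * a) + F.freq₂ i * (s * b)) =
    s * (2 * Real.pi * I) * (F.freq₁ i * a + F.freq₂ i * b) by ring,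
    mul_pow (s * _), mul_pow s]
  ring

lemma sum_binForm_homogPart_eq {m : Type*} [Fintype m] {σ : m → ℂ} {F : m → ExpFamily ι}
    (hF : ∀ i, (F i).IsAdmissible) {t z u t' z' u' k a b a' b' : ℂ} (h : symMat t z u ∈ H2)
    (h' : symMat t' z' u' ∈ H2)
    (hval : ∀ s, ∑ i, σ i * (F i).val t' z' u' (s * a') (s * b') =
      k * ∑ i, σ i * (F i).val t z u (s * a) (s * b)) (n : ℕ) :
    ∑ i, σ i * binForm ((F i).homogPart n t' z' u') a' b' =
      k * ∑ i, σ i * binForm ((F i).homogPart n t z u) a b := by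
  set K : ℕ → ℂ := fun n ↦ (2 * Real.pi * I) ^ n / n.factorial with hK
  have htaylor {t z u a b : ℂ} (h : symMat t z u ∈ H2) (s : ℂ) :
      HasSum (fun n ↦ s ^ n * (K n * ∑ i, σ i * binForm ((F i).homogPart n t z u) a b))
        (∑ i, σ i * (F i).val t z u (s * a) (s * b)) := by
    refine (hasSum_sum fun i _ ↦ ((hF i).hasSum_val h a b s).mul_left (σ i)).congr_fun fun n ↦ ?_
    simp only [Finset.mul_sum, hK]
    exact Finset.sum_congr rfl fun i _ ↦ by ring
  have hcoeff := congrFun (eq_of_hasSum_pow (htaylor h') fun s ↦ by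
    rw [hval s]
    refine ((htaylor h s).mul_left k).congr_fun fun n ↦ ?_
    exact mul_left_comm _ _ _) n
  have hKn : K n ≠ 0 := by simp [hK, Real.pi_ne_zero, Nat.factorial_ne_zero]
  refine mul_left_cancel₀ hKn (hcoeff.trans ?_)
  ring

end ExpFamily

namespace ExpFamily

variable {ι : Type*} {F : ExpFamily ι}

/-- The exponent `πi(Xᵢ τ₀₀ + 2 Yᵢ τ₀₁ + Zᵢ τ₁₁)` as a linear form in `τ`. -/
def exponent (F : ExpFamily ι) (i : ι) : (Fin 2 → Fin 2 → ℂ) →L[ℂ] ℂ :=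
  (Real.pi * I) • ((F.quad₁₁ i : ℂ) • (.proj (R := ℂ) (φ := fun _ : Fin 2 ↦ ℂ) 0 ∘L .proj 0) +
    (2 * F.quad₁₂ i : ℂ) • (.proj (R := ℂ) (φ := fun _ : Fin 2 ↦ ℂ) 1 ∘L .proj 0) +
    (F.quad₂₂ i : ℂ) • (.proj (R := ℂ) (φ := fun _ : Fin 2 ↦ ℂ) 1 ∘L .proj 1))

lemma exponent_apply (F : ExpFamily ι) (i : ι) (τ : Fin 2 → Fin 2 → ℂ) : F.exponent i τ =
    Real.pi * I * (F.quad₁₁ i * τ 0 0 + 2 * F.quad₁₂ i * τ 0 1 + F.quad₂₂ i * τ 1 1) := rfl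

namespace IsAdmissible

lemma quad₁₁_nonneg (hF : F.IsAdmissible) (i : ι) : 0 ≤ F.quad₁₁ i := by
  simpa using hF.nonneg i 1 0 0 (by norm_num) (by norm_num) (by norm_num)

lemma quad₂₂_nonneg (hF : F.IsAdmissible) (i : ι) : 0 ≤ F.quad₂₂ i := by
  simpa using hF.nonneg i 0 0 1 (by norm_num) (by norm_num) (by norm_num)

lemma abs_two_mul_quad₁₂_le (hF : F.IsAdmissible) (i : ι) :
    |2 * F.quad₁₂ i| ≤ F.quad₁₁ i + F.quad₂₂ i := by
  have hpos := hF.nonneg i 1 1 1 (by norm_num) (by norm_num) (by norm_num)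
  have hneg := hF.nonneg i 1 (-1) 1 (by norm_num) (by norm_num) (by norm_num)
  rw [abs_le]
  constructor <;> linarith

lemma norm_exponent_le (hF : F.IsAdmissible) (i : ι) :
    ‖F.exponent i‖ ≤ 2 * Real.pi * (F.quad₁₁ i + F.quad₂₂ i) := by
  have hX := hF.quad₁₁_nonneg i
  have hZ := hF.quad₂₂_nonneg i
  refine ContinuousLinearMap.opNorm_le_bound _ (by positivity) fun τ ↦ ?_
  have hentry (x : ℝ) (a b : Fin 2) : ‖(x : ℂ) * τ a b‖ ≤ |x| * ‖τ‖ := by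
    rw [norm_mul, norm_real, Real.norm_eq_abs]
    gcongr
    exact (norm_le_pi_norm (τ a) b).trans (norm_le_pi_norm τ a)
  have h₁₁ := hentry (F.quad₁₁ i) 0 0
  have h₁₂ := hentry (2 * F.quad₁₂ i) 0 1
  have h₂₂ := hentry (F.quad₂₂ i) 1 1
  have hY := mul_le_mul_of_nonneg_right (hF.abs_two_mul_quad₁₂_le i) (norm_nonneg τ)
  rw [abs_of_nonneg hX] at h₁₁
  rw [abs_of_nonneg hZ] at h₂₂
  push_cast at h₁₂
  calc ‖F.exponent i τ‖
      = Real.pi * ‖F.quad₁₁ i * τ 0 0 + 2 * F.quad₁₂ i * τ 0 1 + F.quad₂₂ i * τ 1 1‖ := by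
        rw [exponent_apply, norm_mul, norm_mul, norm_I, norm_real, mul_one,
          Real.norm_of_nonneg Real.pi_pos.le]
    _ ≤ Real.pi * (2 * (F.quad₁₁ i + F.quad₂₂ i) * ‖τ‖) := by
        gcongr
        refine norm_add₃_le.trans ?_
        linarith
    _ = 2 * Real.pi * (F.quad₁₁ i + F.quad₂₂ i) * ‖τ‖ := by ring

lemma norm_nullTerm_smul_exponent_le (hF : F.IsAdmissible) {t z u : ℂ} {δ : ℝ} (hδ : 0 < δ)
    (h : ImGE δ t z u) (i : ι) : ‖F.nullTerm t z u i • F.exponent i‖ ≤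
      4 / δ * (‖F.coeff i‖ * Real.exp (-(Real.pi * δ / 2) * (F.quad₁₁ i + F.quad₂₂ i))) := by
  set s := F.quad₁₁ i + F.quad₂₂ i
  have hlin : s ≤ 2 / (Real.pi * δ) * Real.exp (Real.pi * δ / 2 * s) := by
    have hexp := Real.add_one_le_exp (Real.pi * δ / 2 * s)
    calc s = 2 / (Real.pi * δ) * (Real.pi * δ / 2 * s) := by field_simp
      _ ≤ _ := by gcongr; linarith
  calc ‖F.nullTerm t z u i • F.exponent i‖
      ≤ ‖F.coeff i‖ * Real.exp (-(Real.pi * δ) * s) *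
          (2 * Real.pi * (2 / (Real.pi * δ) * Real.exp (Real.pi * δ / 2 * s))) := by
        rw [norm_smul]
        gcongr
        · exact hF.norm_nullTerm_le h i
        · exact (hF.norm_exponent_le i).trans (by gcongr)
    _ = 4 / δ * (‖F.coeff i‖ *
          (Real.exp (-(Real.pi * δ) * s) * Real.exp (Real.pi * δ / 2 * s))) := by
        field_simp
        ring
    _ = _ := by
        rw [← Real.exp_add]
        ring_nf

theorem differentiableOn_tsum_nullTerm (hF : F.IsAdmissible) :
    DifferentiableOn ℂ (fun τ ↦ ∑' i, F.nullTerm (τ 0 0) (τ 0 1) (τ 1 1) i) H2 := by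
  intro τ hτ
  obtain ⟨t, z, u, rfl⟩ := exists_eq_symMat hτ
  obtain ⟨δ, hδ, him⟩ := exists_eventually_imGE hτ
  obtain ⟨r, hr, him⟩ := Metric.eventually_nhds_iff_ball.1 him
  have hbound : Summable fun i ↦ 4 / δ *
      (‖F.coeff i‖ * Real.exp (-(Real.pi * δ / 2) * (F.quad₁₁ i + F.quad₂₂ i))) :=
    Summable.mul_left _ (by
      simpa using hF.summable 0 (Real.pi * δ / 2) le_rfl (by positivity))
  have hderiv (i : ι) (σ : Fin 2 → Fin 2 → ℂ) :
      HasFDerivAt (fun σ ↦ F.nullTerm (σ 0 0) (σ 0 1) (σ 1 1) i)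
        (F.nullTerm (σ 0 0) (σ 0 1) (σ 1 1) i • F.exponent i) σ := by
    simpa only [nullTerm, ← exponent_apply, smul_smul] using
      (F.exponent i).hasFDerivAt.cexp.const_mul (F.coeff i)
  exact (hasFDerivAt_tsum_of_isPreconnected hbound Metric.isOpen_ball
    (convex_ball (symMat t z u) r).isPreconnected (fun i σ _ ↦ hderiv i σ)
    (fun i σ hσ ↦ hF.norm_nullTerm_smul_exponent_le hδ (him σ hσ) i) (Metric.mem_ball_self hr)
    (hF.summable_norm_nullTerm hτ).of_norm
    (Metric.mem_ball_self hr)).differentiableAt.differentiableWithinAt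

lemma differentiableOn_homogPart (hF : F.IsAdmissible) (j : ℕ) :
    DifferentiableOn ℂ (fun τ ↦ F.homogPart j (τ 0 0) (τ 0 1) (τ 1 1)) H2 :=
  differentiableOn_pi.2 fun l ↦ ((hF.moment (j - l) l).differentiableOn_tsum_nullTerm).const_mul _

end IsAdmissible

end ExpFamily

/-! ### Theta series with characteristics -/

lemma summable_exp_abs_sub_sq (α : ℝ) {R δ : ℝ} (hδ : 0 < δ) :
    Summable fun n : ℤ ↦ Real.exp (R * |n + α| - δ * (n + α) ^ 2) := by
  have hexp : Summable fun n : ℤ ↦ Real.exp (-|(n : ℝ)|) :=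
    .of_nat_of_neg (by simpa using Real.summable_exp_neg_nat)
      (by simpa using Real.summable_exp_neg_nat)
  refine .of_nonneg_of_le (fun n ↦ by positivity) (fun n ↦ ?_)
    (hexp.mul_left (Real.exp ((R + 1) ^ 2 / (4 * δ) + |α|)))
  rw [← Real.exp_add, Real.exp_le_exp]
  have htri : |(n : ℝ)| ≤ |n + α| + |α| := by simpa using abs_sub (n + α) α
  have hsq : (R + 1) * |n + α| - δ * (n + α) ^ 2 ≤ (R + 1) ^ 2 / (4 * δ) := by
    rw [le_div_iff₀ (by positivity), ← sq_abs]
    nlinarith [sq_nonneg (2 * δ * |n + α| - (R + 1))]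
  linarith

lemma cexp_pi_I_mul_eq_of_eq_add_two_mul_int {x y : ℂ} (k : ℤ) (h : x = y + 2 * k) :
    cexp (Real.pi * I * x) = cexp (Real.pi * I * y) :=
  Complex.exp_eq_exp_iff_exists_int.2 ⟨k, by rw [h]; ring⟩

/-- The theta series in genus 2 with upper characteristic `(a/2, b/2)` and lower characteristic
`(c/2, d/2)`. -/
def thetaChar (a b c d : ℤ) : ExpFamily (ℤ × ℤ) where
  coeff p := cexp (Real.pi * I * ((p.1 + a / 2) * c + (p.2 + b / 2) * d))
  freq₁ p := p.1 + a / 2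
  freq₂ p := p.2 + b / 2
  quad₁₁ p := (p.1 + a / 2) ^ 2
  quad₁₂ p := (p.1 + a / 2) * (p.2 + b / 2)
  quad₂₂ p := (p.2 + b / 2) ^ 2

section thetaChar

variable (a b c d : ℤ) (t z u w v : ℂ)

lemma isAdmissible_thetaChar : (thetaChar a b c d).IsAdmissible where
  nonneg i p q r hp hr hq := by
    simp only [thetaChar]
    set x : ℝ := i.1 + a / 2
    set y : ℝ := i.2 + b / 2
    have hxy : 4 * (q * (x * y)) ^ 2 ≤ (p * x ^ 2 + r * y ^ 2) ^ 2 := by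
      nlinarith [sq_nonneg (p * x ^ 2 - r * y ^ 2),
        mul_le_mul_of_nonneg_right hq (sq_nonneg (x * y))]
    have habs := abs_le_of_sq_le_sq' (a := 2 * (q * (x * y))) (b := p * x ^ 2 + r * y ^ 2)
      (by linarith) (by positivity)
    linarith [habs.1]
  summable R δ _ hδ := by
    refine ((summable_exp_abs_sub_sq (a / 2) hδ (R := R)).mul_of_nonneg
      (summable_exp_abs_sub_sq (b / 2) hδ (R := R)) (fun i ↦ by positivity)
      (fun i ↦ by positivity)).congr fun i ↦ ?_
    have hnorm (n a : ℤ) : ‖(n : ℂ) + a / 2‖ = |(n : ℝ) + a / 2| := by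
      rw [← Real.norm_eq_abs, ← norm_real]
      push_cast
      rfl
    have hcoeff : ‖(thetaChar a b c d).coeff i‖ = 1 := by simp [thetaChar, norm_exp]
    rw [hcoeff, one_mul, ← Real.exp_add]
    simp only [thetaChar, hnorm]
    ring_nf

lemma term_thetaChar (p : ℤ × ℤ) : (thetaChar a b c d).term t z u w v p =
    cexp (Real.pi * I * ((p.1 + a / 2) ^ 2 * t + 2 * ((p.1 + a / 2) * (p.2 + b / 2)) * z +
      (p.2 + b / 2) ^ 2 * u + (p.1 + a / 2) * c + (p.2 + b / 2) * d +
      2 * ((p.1 + a / 2) * w + (p.2 + b / 2) * v))) := by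
  simp only [ExpFamily.term, ExpFamily.nullTerm, thetaChar]
  rw [← Complex.exp_add, ← Complex.exp_add]
  congr 1
  push_cast
  ring

lemma val_thetaChar_add_two_upper₁ :
    (thetaChar (a + 2) b c d).val t z u w v = (thetaChar a b c d).val t z u w v := by
  rw [ExpFamily.val, ExpFamily.val,
    ← ((Equiv.addRight (1 : ℤ)).prodCongr (Equiv.refl ℤ)).tsum_eq
      ((thetaChar a b c d).term t z u w v)]
  refine tsum_congr fun p ↦ ?_
  rw [term_thetaChar, term_thetaChar]
  congr 2
  simp only [Equiv.prodCongr_apply, Prod.map_fst, Prod.map_snd, Equiv.coe_addRight,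
    Equiv.refl_apply]
  push_cast
  ring

lemma val_thetaChar_add_two_lower₁ : (thetaChar a b (c + 2) d).val t z u w v =
    cexp (Real.pi * I * a) * (thetaChar a b c d).val t z u w v := by
  rw [ExpFamily.val, ExpFamily.val, ← tsum_mul_left]
  refine tsum_congr fun p ↦ ?_
  rw [term_thetaChar, term_thetaChar, ← Complex.exp_add, ← mul_add]
  refine cexp_pi_I_mul_eq_of_eq_add_two_mul_int p.1 ?_
  push_cast
  ring

lemma val_thetaChar_translate : (thetaChar a b c d).val (t + 1) z u w v =
    cexp (Real.pi * I * (a ^ 2 / 4 - a * (a + 1) / 2)) *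
      (thetaChar a b (c + a + 1) d).val t z u w v := by
  rw [ExpFamily.val, ExpFamily.val, ← tsum_mul_left]
  refine tsum_congr fun p ↦ ?_
  rw [term_thetaChar, term_thetaChar, ← Complex.exp_add, ← mul_add]
  obtain ⟨k, hk⟩ := Int.even_mul_pred_self p.1
  refine cexp_pi_I_mul_eq_of_eq_add_two_mul_int k ?_
  have hk : (p.1 : ℂ) * (p.1 - 1) = k + k := by exact_mod_cast hk
  push_cast
  linear_combination hk

lemma val_thetaChar_swap :
    (thetaChar a b c d).val u z t w v = (thetaChar b a d c).val t z u v w := by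
  rw [ExpFamily.val, ExpFamily.val, ← (Equiv.prodComm ℤ ℤ).tsum_eq]
  refine tsum_congr fun p ↦ ?_
  rw [term_thetaChar, term_thetaChar]
  congr 2
  simp only [Equiv.prodComm_apply, Prod.fst_swap, Prod.snd_swap]
  ring

lemma val_thetaChar_add_two_lower₂ : (thetaChar a b c (d + 2)).val t z u w v =
    cexp (Real.pi * I * b) * (thetaChar a b c d).val t z u w v := by
  rw [val_thetaChar_swap, val_thetaChar_add_two_lower₁, val_thetaChar_swap]

lemma val_thetaChar_shear : (thetaChar a b c d).val t (z + t) (u + 2 * z + t) w v =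
    (thetaChar (a + b) b c (d - c)).val t z u w (v - w) := by
  let shear : ℤ × ℤ ≃ ℤ × ℤ :=
    { toFun := fun p ↦ (p.1 + p.2, p.2)
      invFun := fun p ↦ (p.1 - p.2, p.2)
      left_inv := fun p ↦ by simp
      right_inv := fun p ↦ by simp }
  rw [ExpFamily.val, ExpFamily.val,
    ← shear.tsum_eq ((thetaChar (a + b) b c (d - c)).term t z u w (v - w))]
  refine tsum_congr fun p ↦ ?_
  rw [term_thetaChar, term_thetaChar]
  congr 2
  simp only [shear, Equiv.coe_fn_mk]
  push_cast
  ring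

lemma tsum_term_thetaChar (m : ℤ) : ∑' n : ℤ, (thetaChar a b c d).term t z u w v (n, m) =
    cexp (Real.pi * I * (a ^ 2 / 4 * t + a * (m + b / 2) * z + (m + b / 2) ^ 2 * u + a / 2 * c +
      (m + b / 2) * d + a * w + 2 * (m + b / 2) * v)) *
      jacobiTheta₂ (a * t / 2 + (m + b / 2) * z + c / 2 + w) t := by
  rw [jacobiTheta₂, ← tsum_mul_left]
  refine tsum_congr fun n ↦ ?_
  rw [term_thetaChar, jacobiTheta₂_term, ← Complex.exp_add]
  congr 1
  ring

variable {t z u}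

lemma val_thetaChar_eq_tsum_tsum (h : symMat t z u ∈ H2) : (thetaChar a b c d).val t z u w v =
    ∑' m, ∑' n, (thetaChar a b c d).term t z u w v (n, m) := by
  rw [ExpFamily.val, ← (Equiv.prodComm ℤ ℤ).tsum_eq]
  exact ((isAdmissible_thetaChar a b c d).summable_norm_term h w v).of_norm.prod_symm.tsum_prod

lemma val_thetaChar_inv (h : symMat t z u ∈ H2) :
    (thetaChar a b c d).val (-1 / t) (z / t) (u - z ^ 2 / t) w v =
      (-I * t) ^ (1 / 2 : ℂ) * cexp (Real.pi * I * (a * c / 2)) * cexp (Real.pi * I * t * w ^ 2) *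
        (thetaChar c b (-a) d).val t z u (t * w) (z * w + v) := by
  have ht := ne_zero_of_symMat_mem_H2 h
  have hroot : (-I * t) ^ (1 / 2 : ℂ) ≠ 0 := by simp [Complex.cpow_eq_zero_iff, ht]
  rw [val_thetaChar_eq_tsum_tsum _ _ _ _ _ _ (symMat_inv_mem_H2 h),
    val_thetaChar_eq_tsum_tsum _ _ _ _ _ _ h, ← tsum_mul_left]
  refine tsum_congr fun m ↦ ?_
  rw [tsum_term_thetaChar, tsum_term_thetaChar, jacobiTheta₂_functional_equation _ t]
  have harg : (c * t / 2 + (m + b / 2) * z + (-a : ℤ) / 2 + t * w) / t =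
      a * (-1 / t) / 2 + (m + b / 2) * (z / t) + c / 2 + w := by
    push_cast
    field_simp
    ring
  rw [harg]
  set θ := jacobiTheta₂ (a * (-1 / t) / 2 + (m + b / 2) * (z / t) + c / 2 + w) (-1 / t)
  have hexp {E₁ E₂ E₃ E₄ E₅ : ℂ} (hE : E₁ = E₂ + E₃ + E₄ + E₅) : cexp E₁ * θ =
      (-I * t) ^ (1 / 2 : ℂ) * cexp E₂ * cexp E₃ *
        (cexp E₄ * (1 / (-I * t) ^ (1 / 2 : ℂ) * cexp E₅ * θ)) := by
    rw [hE, Complex.exp_add, Complex.exp_add, Complex.exp_add]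
    field_simp [hroot]
  apply hexp
  push_cast
  field_simp
  ring

end thetaChar

/-! ### Signed sums of products of theta series -/

/-- The index type of a product of four series. -/
abbrev Quad (ι : Type*) := (ι × ι) × (ι × ι)

namespace ExpFamily

variable {ι κ : Type*} {F : ExpFamily ι} {G : ExpFamily κ} {t z u : ℂ}

/-- The product of the series with arguments scaled by `1`, `2`, `2` and `3i`. The squares of these
scales add up to `0`, so that in the product the Gaussian factors of the inversion law of a theta
series cancel. -/
def fourfold (F : ExpFamily ι) : ExpFamily (Quad ι) :=
  ((F.scale 1).mul (F.scale 2)).mul ((F.scale 2).mul (F.scale (3 * I)))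

lemma IsAdmissible.fourfold (hF : F.IsAdmissible) : F.fourfold.IsAdmissible :=
  ((hF.scale 1).mul (hF.scale 2)).mul ((hF.scale 2).mul (hF.scale (3 * I)))

lemma val_fourfold (hF : F.IsAdmissible) (h : symMat t z u ∈ H2) (a b : ℂ) :
    F.fourfold.val t z u a b = F.val t z u (1 * a) (1 * b) * F.val t z u (2 * a) (2 * b) *
      (F.val t z u (2 * a) (2 * b) * F.val t z u (3 * I * a) (3 * I * b)) := by
  rw [fourfold, val_mul ((hF.scale 1).mul (hF.scale 2)) ((hF.scale 2).mul (hF.scale (3 * I))) h,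
    val_mul (hF.scale 1) (hF.scale 2) h, val_mul (hF.scale 2) (hF.scale (3 * I)) h]
  simp only [val_scale]

lemma IsAdmissible.val_fourfold_eq (hG : G.IsAdmissible) (hF : F.IsAdmissible)
    {t' z' u' a b a' b' e g : ℂ} (h : symMat t z u ∈ H2) (h' : symMat t' z' u' ∈ H2)
    (hval : ∀ α : ℂ, F.val t' z' u' (α * a') (α * b') =
      e * cexp (α ^ 2 * g) * G.val t z u (α * a) (α * b)) :
    F.fourfold.val t' z' u' a' b' = e ^ 4 * G.fourfold.val t z u a b := by
  have hexp : cexp (1 ^ 2 * g) * cexp (2 ^ 2 * g) * cexp (2 ^ 2 * g) *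
      cexp ((3 * I) ^ 2 * g) = 1 := by
    rw [← Complex.exp_add, ← Complex.exp_add, ← Complex.exp_add, mul_pow, I_sq, exp_eq_one_iff]
    exact ⟨0, by ring⟩
  rw [val_fourfold hF h', val_fourfold hG h]
  simp only [hval]
  linear_combination (e ^ 4 * G.val t z u (1 * a) (1 * b) * G.val t z u (2 * a) (2 * b) ^ 2 *
    G.val t z u (3 * I * a) (3 * I * b)) * hexp

end ExpFamily

lemma symMat_add_one_mem_H2 {t z u : ℂ} (h : symMat t z u ∈ H2) : symMat (t + 1) z u ∈ H2 := by
  simpa using symMat_add_intCast_mem_H2 1 0 0 h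

lemma cexp_pi_I_mul_pow_four {x : ℂ} (k : ℤ) (h : 2 * x = k) : cexp (Real.pi * I * x) ^ 4 = 1 := by
  rw [← Complex.exp_nat_mul, Complex.exp_eq_one_iff]
  exact ⟨k, by rw [← h]; push_cast; ring⟩

/-- The product of four theta series of the same characteristic. -/
def thetaProd (a b c d : ℤ) : ExpFamily (Quad (ℤ × ℤ)) :=
  (thetaChar a b c d).fourfold

section thetaProd

variable (a b c d : ℤ) {t z u : ℂ} (w v : ℂ)

lemma isAdmissible_thetaProd : (thetaProd a b c d).IsAdmissible :=
  (isAdmissible_thetaChar a b c d).fourfold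

variable {a b c d w v} in
lemma val_thetaProd_eq {a' b' c' d' : ℤ} {t' z' u' w' v' e g : ℂ} (h : symMat t z u ∈ H2)
    (h' : symMat t' z' u' ∈ H2)
    (hval : ∀ α : ℂ, (thetaChar a' b' c' d').val t' z' u' (α * w') (α * v') =
      e * cexp (α ^ 2 * g) * (thetaChar a b c d).val t z u (α * w) (α * v)) :
    (thetaProd a' b' c' d').val t' z' u' w' v' = e ^ 4 * (thetaProd a b c d).val t z u w v :=
  (isAdmissible_thetaChar a b c d).val_fourfold_eq (isAdmissible_thetaChar a' b' c' d') h h' hval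

lemma val_thetaProd_add_two_upper₁ (h : symMat t z u ∈ H2) :
    (thetaProd (a + 2) b c d).val t z u w v = (thetaProd a b c d).val t z u w v := by
  simpa using val_thetaProd_eq h h (e := 1) (g := 0)
    fun α ↦ by simpa using val_thetaChar_add_two_upper₁ a b c d t z u (α * w) (α * v)

lemma val_thetaProd_add_two_lower₁ (h : symMat t z u ∈ H2) :
    (thetaProd a b (c + 2) d).val t z u w v = (thetaProd a b c d).val t z u w v := by
  have hroot : cexp (Real.pi * I * a) ^ 4 = 1 :=
    cexp_pi_I_mul_pow_four (2 * a) (by push_cast; ring)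
  rw [← one_mul ((thetaProd a b c d).val t z u w v), ← hroot]
  exact val_thetaProd_eq h h (g := 0)
    fun α ↦ by simpa using val_thetaChar_add_two_lower₁ a b c d t z u (α * w) (α * v)

lemma val_thetaProd_add_two_lower₂ (h : symMat t z u ∈ H2) :
    (thetaProd a b c (d + 2)).val t z u w v = (thetaProd a b c d).val t z u w v := by
  have hroot : cexp (Real.pi * I * b) ^ 4 = 1 :=
    cexp_pi_I_mul_pow_four (2 * b) (by push_cast; ring)
  rw [← one_mul ((thetaProd a b c d).val t z u w v), ← hroot]
  exact val_thetaProd_eq h h (g := 0)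
    fun α ↦ by simpa using val_thetaChar_add_two_lower₂ a b c d t z u (α * w) (α * v)

lemma val_thetaProd_translate (h : symMat t z u ∈ H2) :
    (thetaProd a b c d).val (t + 1) z u w v =
      cexp (Real.pi * I * a) * (thetaProd a b (c + a + 1) d).val t z u w v := by
  have hroot : cexp (Real.pi * I * (a ^ 2 / 4 - a * (a + 1) / 2)) ^ 4 =
      cexp (Real.pi * I * a) := by
    obtain ⟨k, hk⟩ := Int.even_mul_succ_self a
    have hk : (a : ℂ) * (a + 1) = k + k := by exact_mod_cast hk
    rw [← Complex.exp_nat_mul, Complex.exp_eq_exp_iff_exists_int]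
    refine ⟨-k - a, ?_⟩
    push_cast
    linear_combination (-Real.pi * I) * hk
  rw [← hroot]
  exact val_thetaProd_eq h (symMat_add_one_mem_H2 h) (g := 0)
    fun α ↦ by simpa using val_thetaChar_translate a b c d t z u (α * w) (α * v)

lemma val_thetaProd_swap (h : symMat t z u ∈ H2) :
    (thetaProd a b c d).val u z t w v = (thetaProd b a d c).val t z u v w := by
  simpa using val_thetaProd_eq h (symMat_swap_mem_H2 h) (e := 1) (g := 0)
    fun α ↦ by simpa using val_thetaChar_swap a b c d t z u (α * w) (α * v)

lemma val_thetaProd_shear (h : symMat t z u ∈ H2) :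
    (thetaProd a b c d).val t (z + t) (u + 2 * z + t) w v =
      (thetaProd (a + b) b c (d - c)).val t z u w (v - w) := by
  simpa using val_thetaProd_eq h (symMat_shear_mem_H2 h) (e := 1) (g := 0)
    fun α ↦ by simpa [mul_sub] using val_thetaChar_shear a b c d t z u (α * w) (α * v)

lemma val_thetaProd_inv (h : symMat t z u ∈ H2) :
    (thetaProd a b c d).val (-1 / t) (z / t) (u - z ^ 2 / t) w v =
      -t ^ 2 * (thetaProd c b (-a) d).val t z u (t * w) (z * w + v) := by
  have hroot : ((-I * t) ^ (1 / 2 : ℂ) * cexp (Real.pi * I * (a * c / 2))) ^ 4 = -t ^ 2 := by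
    rw [mul_pow, cexp_pi_I_mul_pow_four (a * c) (by push_cast; ring), ← Complex.cpow_nat_mul]
    norm_num [mul_pow]
  rw [← hroot]
  refine val_thetaProd_eq h (symMat_inv_mem_H2 h) (g := Real.pi * I * t * w ^ 2)
    fun α ↦ ?_
  rw [val_thetaChar_inv a b c d _ _ h]
  ring_nf

end thetaProd

lemma binForm_sum_smul {j : ℕ} {m : Type*} [Fintype m] (σ : m → ℂ) (v : m → Fin (j + 1) → ℂ)
    (a b : ℂ) : binForm (∑ i, σ i • v i) a b = ∑ i, σ i * binForm (v i) a b := by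
  simp only [binForm, Finset.sum_apply, Pi.smul_apply, smul_eq_mul, Finset.mul_sum,
    Finset.sum_mul]
  rw [Finset.sum_comm]
  exact Finset.sum_congr rfl fun i _ ↦ Finset.sum_congr rfl fun l _ ↦ by ring

/-- The characteristics of the six odd theta functions of genus 2. -/
def oddChar : Fin 6 → Fin 4 → ℤ :=
  ![![0, 1, 0, 1], ![0, 1, 1, 1], ![1, 1, 0, 1], ![1, 0, 1, 0], ![1, 0, 1, 1], ![1, 1, 1, 0]]

/-- The signs for which the sum of the products `oddThetaProd i` has the sign character. -/
def oddSign : Fin 6 → ℤ :=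
  ![1, -1, -1, -1, 1, 1]

/-- The product of four theta series of the odd characteristic with number `i`. -/
def oddThetaProd (i : Fin 6) : ExpFamily (Quad (ℤ × ℤ)) :=
  thetaProd (oddChar i 0) (oddChar i 1) (oddChar i 2) (oddChar i 3)

lemma isAdmissible_oddThetaProd (i : Fin 6) : (oddThetaProd i).IsAdmissible :=
  isAdmissible_thetaProd ..

/-- The signed sum of the six products of theta series. -/
def thetaSum (t z u w v : ℂ) : ℂ :=
  ∑ i, oddSign i * (oddThetaProd i).val t z u w v

lemma thetaSum_eq (t z u w v : ℂ) : thetaSum t z u w v =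
    (thetaProd 0 1 0 1).val t z u w v - (thetaProd 0 1 1 1).val t z u w v -
      (thetaProd 1 1 0 1).val t z u w v - (thetaProd 1 0 1 0).val t z u w v +
      (thetaProd 1 0 1 1).val t z u w v + (thetaProd 1 1 1 0).val t z u w v := by
  simp only [thetaSum, Fin.sum_univ_six, oddSign, oddThetaProd, oddChar, Matrix.cons_val]
  push_cast
  ring

section thetaSum

variable {t z u : ℂ} (h : symMat t z u ∈ H2) (w v : ℂ)

include h

lemma thetaSum_translate : thetaSum (t + 1) z u w v = -1 * thetaSum t z u w v := by
  have h₁ := val_thetaProd_add_two_lower₁ 0 1 0 1 w v h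
  have h₂ := val_thetaProd_add_two_lower₁ 1 1 0 1 w v h
  have h₃ := val_thetaProd_add_two_lower₁ 1 0 1 0 w v h
  have h₄ := val_thetaProd_add_two_lower₁ 1 0 1 1 w v h
  have h₅ := val_thetaProd_add_two_lower₁ 1 1 1 0 w v h
  simp only [thetaSum_eq, val_thetaProd_translate _ _ _ _ w v h]
  norm_num [Complex.exp_pi_mul_I] at h₁ h₂ h₃ h₄ h₅ ⊢
  rw [h₁, h₂, h₃, h₄, h₅]
  ring

lemma thetaSum_swap : thetaSum u z t w v = -1 * thetaSum t z u v w := by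
  simp only [thetaSum_eq, val_thetaProd_swap _ _ _ _ w v h]
  ring

lemma thetaSum_shear :
    thetaSum t (z + t) (u + 2 * z + t) w v = -1 * thetaSum t z u w (v - w) := by
  have h₁ := val_thetaProd_add_two_upper₁ 0 1 0 1 w (v - w) h
  have h₂ := val_thetaProd_add_two_upper₁ 0 1 1 (-1) w (v - w) h
  have h₃ := val_thetaProd_add_two_lower₂ 0 1 1 (-1) w (v - w) h
  have h₄ := val_thetaProd_add_two_lower₂ 1 0 1 (-1) w (v - w) h
  simp only [thetaSum_eq, val_thetaProd_shear _ _ _ _ w v h]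
  norm_num at h₁ h₂ h₃ h₄ ⊢
  rw [h₁, h₂, ← h₃, ← h₄]
  ring

lemma thetaSum_inv : thetaSum (-1 / t) (z / t) (u - z ^ 2 / t) w v =
    -t ^ 2 * thetaSum t z u (t * w) (z * w + v) := by
  have h₁ := val_thetaProd_add_two_lower₁ 0 1 (-1) 1 (t * w) (z * w + v) h
  have h₂ := val_thetaProd_add_two_lower₁ 1 0 (-1) 0 (t * w) (z * w + v) h
  have h₃ := val_thetaProd_add_two_lower₁ 1 0 (-1) 1 (t * w) (z * w + v) h
  have h₄ := val_thetaProd_add_two_lower₁ 1 1 (-1) 0 (t * w) (z * w + v) h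
  simp only [thetaSum_eq, val_thetaProd_inv _ _ _ _ w v h]
  norm_num at h₁ h₂ h₃ h₄ ⊢
  rw [← h₁, ← h₂, ← h₃, ← h₄]
  ring

end thetaSum

/-- Up to a constant factor, the homogeneous part of degree `j` in `(w, v)` of `thetaSum`, as a
function on the half space. -/
def thetaForm (j : ℕ) : (Fin 2 → Fin 2 → ℂ) → Fin (j + 1) → ℂ :=
  H2.indicator fun τ ↦
    ∑ i, (oddSign i : ℂ) • (oddThetaProd i).homogPart j (τ 0 0) (τ 0 1) (τ 1 1)

section thetaForm

variable (j : ℕ) {t z u t' z' u' : ℂ}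

lemma differentiableOn_thetaForm : DifferentiableOn ℂ (thetaForm j) H2 := by
  refine DifferentiableOn.congr ?_ fun τ hτ ↦ Set.indicator_of_mem hτ _
  exact .fun_sum fun i _ ↦
    ((isAdmissible_oddThetaProd i).differentiableOn_homogPart j).fun_const_smul _

lemma binForm_thetaForm (h : symMat t z u ∈ H2) (a b : ℂ) :
    binForm (thetaForm j (symMat t z u)) a b =
      ∑ i, oddSign i * binForm ((oddThetaProd i).homogPart j t z u) a b := by
  rw [thetaForm, Set.indicator_of_mem h, binForm_sum_smul]
  rfl

lemma binForm_thetaForm_eq (h : symMat t z u ∈ H2) (h' : symMat t' z' u' ∈ H2) {k a b a' b' : ℂ}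
    (hsum : ∀ s, thetaSum t' z' u' (s * a') (s * b') = k * thetaSum t z u (s * a) (s * b)) :
    binForm (thetaForm j (symMat t' z' u')) a' b' =
      k * binForm (thetaForm j (symMat t z u)) a b := by
  rw [binForm_thetaForm j h, binForm_thetaForm j h']
  exact ExpFamily.sum_binForm_homogPart_eq isAdmissible_oddThetaProd h h' hsum j

theorem isSiegelCuspForm_thetaForm {ε : Matrix (Fin 4) (Fin 4) ℤ → ℂ} (hε : IsEps ε) :
    IsSiegelCuspForm j 2 Sp4Z ε (thetaForm j) := by
  refine hε.isSiegelCuspForm even_two (differentiableOn_thetaForm j)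
    (transforms_sp4Gens_of_binForm even_two ?_ ?_ ?_ ?_) fun τ hτ ↦ Set.indicator_of_notMem hτ _
  all_goals intro t z u h a b
  · rw [binForm_thetaForm_eq j h (symMat_add_one_mem_H2 h) fun s ↦ thetaSum_translate h ..,
      neg_one_mul]
  · rw [binForm_thetaForm_eq j h (symMat_inv_mem_H2 h) (k := -t ^ 2) (a := t * a)
      (b := z * a + b) fun s ↦ by rw [thetaSum_inv h]; ring_nf]
    exact neg_mul ..
  · rw [binForm_thetaForm_eq j h (symMat_swap_mem_H2 h) fun s ↦ thetaSum_swap h .., neg_one_mul]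
  · rw [binForm_thetaForm_eq j h (symMat_shear_mem_H2 h) (k := -1) (a := a) (b := b - a)
      fun s ↦ by rw [thetaSum_shear h, mul_sub], neg_one_mul]

end thetaForm

/-! ### Nonvanishing of the signed sum -/

theorem tendsto_exp_smul_tsum {ι E : Type*} [NormedAddCommGroup E] [NormedSpace ℝ E]
    [CompleteSpace E] {q : ι → ℝ} {w : ι → E} {q₀ : ℝ} {s : Finset ι} (hs : ∀ i ∈ s, q i = q₀)
    (hlt : ∀ i ∉ s, w i ≠ 0 → q₀ < q i) (hsum : Summable fun i ↦ ‖Real.exp (-q i) • w i‖) :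
    Tendsto (fun y ↦ Real.exp (q₀ * y) • ∑' i, Real.exp (-q i * y) • w i) atTop
      (𝓝 (∑ i ∈ s, w i)) := by
  have hle (i : ι) (hw : w i ≠ 0) : q₀ ≤ q i := by
    by_cases hi : i ∈ s
    · exact (hs i hi).ge
    · exact (hlt i hi hw).le
  simp only [← tsum_const_smul'', smul_smul, ← Real.exp_add, ← add_mul, ← sub_eq_add_neg]
  rw [sum_eq_tsum_indicator]
  refine tendsto_tsum_of_dominated_convergence (hsum.mul_left (Real.exp q₀)) (fun i ↦ ?_) ?_
  · by_cases hi : i ∈ s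
    · simp [hs i hi, hi]
    rw [Set.indicator_of_notMem (by simpa using hi)]
    by_cases hw : w i = 0
    · simp [hw]
    rw [← zero_smul ℝ (w i)]
    exact (Real.tendsto_exp_atBot.comp
      (tendsto_id.const_mul_atTop_of_neg (sub_neg.2 (hlt i hi hw)))).smul_const _
  · filter_upwards [eventually_ge_atTop 1] with y hy i
    by_cases hw : w i = 0
    · simp [hw]
    rw [norm_smul, norm_smul, ← mul_assoc, Real.norm_of_nonneg (Real.exp_pos _).le,
      Real.norm_of_nonneg (Real.exp_pos _).le, ← Real.exp_add]
    gcongr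
    nlinarith [hle i hw]

/-- Four times the exponent of the `n`-th term of the product of four theta series in one variable
with upper characteristic `a / 2`. -/
def sqSum (a : ℤ) (n : Quad ℤ) : ℤ :=
  (2 * n.1.1 + a) ^ 2 + (2 * n.1.2 + a) ^ 2 + (2 * n.2.1 + a) ^ 2 + (2 * n.2.2 + a) ^ 2

/-- Twice the frequency of the `n`-th term of the product of four theta series in one variable
with upper characteristic `a / 2`. -/
def gaussFreq (a : ℤ) (n : Quad ℤ) : GaussianInt :=
  ⟨(2 * n.1.1 + a) + 2 * (2 * n.1.2 + a) + 2 * (2 * n.2.1 + a), 3 * (2 * n.2.2 + a)⟩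

/-- Up to the factor `2 ^ N`, the coefficient of the `n`-th term of the `N`-th derivative of the
product of four theta series in one variable with characteristic `(a / 2, c / 2)`. -/
def gaussCoeff (a c : ℤ) (N : ℕ) (n : Quad ℤ) : GaussianInt :=
  ((c * (n.1.1 + n.1.2 + n.2.1 + n.2.2)).negOnePow : ℤ) * gaussFreq a n ^ N

/-- The indices of the terms of lowest exponent among those of nonzero frequency. -/
def leadIndices (a : ℤ) : Finset (Quad ℤ) :=
  {n ∈ Finset.Icc ((-1, -1), -1, -1) ((1, 1), 1, 1) | sqSum a n = 4}

/-- The coefficient of the lowest exponent in the `N`-th derivative. -/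
def leadCoeff (a c : ℤ) (N : ℕ) : GaussianInt :=
  ∑ n ∈ leadIndices a, gaussCoeff a c N n

lemma mem_leadIndices {a : ℤ} (ha : a = 0 ∨ a = 1) {n : Quad ℤ} :
    n ∈ leadIndices a ↔ sqSum a n = 4 := by
  refine Finset.mem_filter.trans (and_iff_right_of_imp fun h ↦ ?_)
  have hcoord {m : ℤ} (hm : (2 * m + a) ^ 2 ≤ 2 ^ 2) : -1 ≤ m ∧ m ≤ 1 := by
    have hm := abs_le.1 (abs_le_of_sq_le_sq hm zero_le_two)
    omega
  obtain ⟨⟨n₁, n₂⟩, n₃, n₄⟩ := n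
  simp only [sqSum] at h
  have h₁ := sq_nonneg (2 * n₁ + a)
  have h₂ := sq_nonneg (2 * n₂ + a)
  have h₃ := sq_nonneg (2 * n₃ + a)
  have h₄ := sq_nonneg (2 * n₄ + a)
  have c₁ := hcoord (m := n₁) (by linarith)
  have c₂ := hcoord (m := n₂) (by linarith)
  have c₃ := hcoord (m := n₃) (by linarith)
  have c₄ := hcoord (m := n₄) (by linarith)
  simp [c₁, c₂, c₃, c₄]

lemma four_le_sqSum {a : ℤ} (ha : a = 0 ∨ a = 1) {n : Quad ℤ} (hn : gaussFreq a n ≠ 0) :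
    4 ≤ sqSum a n := by
  obtain ⟨⟨n₁, n₂⟩, n₃, n₄⟩ := n
  rcases ha with rfl | rfl
  · by_contra! hlt
    simp only [sqSum, add_zero, mul_pow] at hlt
    have hzero {m : ℤ} (hm : m ^ 2 < 1) : m = 0 := by
      by_contra hne
      exact hm.not_ge (sq_pos_iff.2 hne)
    obtain rfl := hzero (m := n₁) (by nlinarith [sq_nonneg n₂, sq_nonneg n₃, sq_nonneg n₄])
    obtain rfl := hzero (m := n₂) (by nlinarith [sq_nonneg n₃, sq_nonneg n₄])
    obtain rfl := hzero (m := n₃) (by nlinarith [sq_nonneg n₄])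
    obtain rfl := hzero (m := n₄) (by nlinarith)
    exact hn rfl
  · have hodd (m : ℤ) : 0 < (2 * m + 1) ^ 2 := sq_pos_of_ne_zero (by omega)
    simp only [sqSum]
    linarith [hodd n₁, hodd n₂, hodd n₃, hodd n₄]

lemma gaussFreq_ne_zero_of_gaussCoeff {a c : ℤ} {N : ℕ} {n : Quad ℤ} (hN : N ≠ 0)
    (h : gaussCoeff a c N n ≠ 0) : gaussFreq a n ≠ 0 :=
  ne_zero_pow hN (right_ne_zero_of_mul h)

lemma eight_lt_sqSum_add_sqSum {a b : ℤ} (ha : a = 0 ∨ a = 1) (hb : b = 0 ∨ b = 1)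
    {p : Quad ℤ × Quad ℤ} (hp : p ∉ leadIndices a ×ˢ leadIndices b) (h₁ : gaussFreq a p.1 ≠ 0)
    (h₂ : gaussFreq b p.2 ≠ 0) : 8 < sqSum a p.1 + sqSum b p.2 := by
  rw [Finset.mem_product, mem_leadIndices ha, mem_leadIndices hb] at hp
  have := four_le_sqSum ha h₁
  have := four_le_sqSum hb h₂
  omega

/-- The index of a product of genus 2 series, sorted by variables. -/
def quadProdEquiv : Quad (ℤ × ℤ) ≃ Quad ℤ × Quad ℤ :=
  ((Equiv.prodProdProdComm ..).prodCongr (Equiv.prodProdProdComm ..)).trans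
    (Equiv.prodProdProdComm ..)

lemma quadProdEquiv_symm_apply (n m : Quad ℤ) : quadProdEquiv.symm (n, m) =
    (((n.1.1, m.1.1), (n.1.2, m.1.2)), ((n.2.1, m.2.1), (n.2.2, m.2.2))) :=
  rfl

section Leading

variable (a b c d : ℤ)

lemma coeff_thetaChar (p : ℤ × ℤ) : (thetaChar a b c d).coeff p =
    cexp (Real.pi * I * (a * c / 2)) * cexp (Real.pi * I * (b * d / 2)) *
      (((c * p.1).negOnePow : ℤ) * ((d * p.2).negOnePow : ℤ)) := by
  rw [Int.cast_negOnePow, Int.cast_negOnePow, ← Complex.exp_pi_mul_I, ← Complex.exp_int_mul,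
    ← Complex.exp_int_mul, ← Complex.exp_add, ← Complex.exp_add, ← Complex.exp_add]
  simp only [thetaChar]
  push_cast
  ring_nf

lemma coeff_thetaProd_symm (n m : Quad ℤ) : (thetaProd a b c d).coeff (quadProdEquiv.symm (n, m)) =
    ((c * (n.1.1 + n.1.2 + n.2.1 + n.2.2)).negOnePow : ℤ) *
      ((d * (m.1.1 + m.1.2 + m.2.1 + m.2.2)).negOnePow : ℤ) := by
  have hroot := cexp_pi_I_mul_pow_four (x := a * c / 2) (a * c) (by push_cast; ring)
  have hroot' := cexp_pi_I_mul_pow_four (x := b * d / 2) (b * d) (by push_cast; ring)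
  simp only [thetaProd, ExpFamily.fourfold, ExpFamily.mul, ExpFamily.scale, coeff_thetaChar,
    quadProdEquiv_symm_apply, mul_add, Int.negOnePow_add, Units.val_mul, Int.cast_mul]
  linear_combination (((c * n.1.1).negOnePow : ℤ) * ((c * n.1.2).negOnePow : ℤ) *
    (((c * n.2.1).negOnePow : ℤ) * ((c * n.2.2).negOnePow : ℤ)) *
    (((d * m.1.1).negOnePow : ℤ) * ((d * m.1.2).negOnePow : ℤ) *
    (((d * m.2.1).negOnePow : ℤ) * ((d * m.2.2).negOnePow : ℤ)))) * congrArg₂ (· * ·) hroot hroot'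

lemma freq₁_thetaProd_symm (n m : Quad ℤ) :
    (thetaProd a b c d).freq₁ (quadProdEquiv.symm (n, m)) = gaussFreq a n / 2 := by
  simp only [thetaProd, ExpFamily.fourfold, ExpFamily.mul, ExpFamily.scale, thetaChar,
    quadProdEquiv_symm_apply, gaussFreq, GaussianInt.toComplex_def']
  push_cast
  ring

lemma freq₂_thetaProd_symm (n m : Quad ℤ) :
    (thetaProd a b c d).freq₂ (quadProdEquiv.symm (n, m)) = gaussFreq b m / 2 := by
  simp only [thetaProd, ExpFamily.fourfold, ExpFamily.mul, ExpFamily.scale, thetaChar,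
    quadProdEquiv_symm_apply, gaussFreq, GaussianInt.toComplex_def']
  push_cast
  ring

lemma quad₁₁_thetaProd_symm (n m : Quad ℤ) :
    (thetaProd a b c d).quad₁₁ (quadProdEquiv.symm (n, m)) = sqSum a n / 4 := by
  simp only [thetaProd, ExpFamily.fourfold, ExpFamily.mul, ExpFamily.scale, thetaChar,
    quadProdEquiv_symm_apply, sqSum]
  push_cast
  ring

lemma quad₂₂_thetaProd_symm (n m : Quad ℤ) :
    (thetaProd a b c d).quad₂₂ (quadProdEquiv.symm (n, m)) = sqSum b m / 4 := by
  simp only [thetaProd, ExpFamily.fourfold, ExpFamily.mul, ExpFamily.scale, thetaChar,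
    quadProdEquiv_symm_apply, sqSum]
  push_cast
  ring

lemma nullTerm_moment_thetaProd_symm (M N : ℕ) (y : ℝ) (n m : Quad ℤ) :
    ((thetaProd a b c d).moment M N).nullTerm (y * I) 0 (y * I) (quadProdEquiv.symm (n, m)) =
      Real.exp (-(Real.pi / 4 * (sqSum a n + sqSum b m)) * y) •
        (gaussCoeff a c M n * gaussCoeff b d N m / 2 ^ (M + N) : ℂ) := by
  have hexp : (Real.pi * I * (((sqSum a n / 4 : ℝ) : ℂ) * (y * I) +
      2 * (thetaProd a b c d).quad₁₂ (quadProdEquiv.symm (n, m)) * 0 +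
      ((sqSum b m / 4 : ℝ) : ℂ) * (y * I)) : ℂ) =
      (-(Real.pi / 4 * (sqSum a n + sqSum b m)) * y : ℝ) := by
    push_cast
    linear_combination (Real.pi / 4 * (sqSum a n + sqSum b m) * y : ℂ) * I_sq
  rw [ExpFamily.nullTerm_moment, ExpFamily.nullTerm, coeff_thetaProd_symm, freq₁_thetaProd_symm,
    freq₂_thetaProd_symm, quad₁₁_thetaProd_symm, quad₂₂_thetaProd_symm, hexp, real_smul,
    ofReal_exp, gaussCoeff, gaussCoeff, map_mul, map_mul, map_pow, map_pow, map_intCast,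
    map_intCast, div_pow, div_pow, pow_add]
  ring

lemma sum_leadIndices_product (M N : ℕ) :
    ∑ p ∈ leadIndices a ×ˢ leadIndices b,
        (gaussCoeff a c M p.1 * gaussCoeff b d N p.2 / 2 ^ (M + N) : ℂ) =
      leadCoeff a c M * leadCoeff b d N / 2 ^ (M + N) := by
  rw [← Finset.sum_div, leadCoeff, leadCoeff, map_sum, map_sum, Finset.sum_mul_sum,
    Finset.sum_product]

variable {a b}

/-- Terms with `sqSum` equal to `4` in both variables decay like `exp(-πy) ^ 2`. -/
theorem tendsto_exp_smul_homogPart (ha : a = 0 ∨ a = 1) (hb : b = 0 ∨ b = 1) {j : ℕ}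
    {l : Fin (j + 1)} (hl₀ : (l : ℕ) ≠ 0) (hl : j - l ≠ 0) :
    Tendsto (fun y : ℝ ↦ Real.exp (2 * Real.pi * y) •
        (thetaProd a b c d).homogPart j (y * I) 0 (y * I) l) atTop
      (𝓝 (j.choose l * (leadCoeff a c (j - l) * leadCoeff b d l / 2 ^ (j - l + l)))) := by
  set q : Quad ℤ × Quad ℤ → ℝ := fun p ↦ Real.pi / 4 * (sqSum a p.1 + sqSum b p.2) with hq
  set w : Quad ℤ × Quad ℤ → ℂ := fun p ↦
    gaussCoeff a c (j - l) p.1 * gaussCoeff b d l p.2 / 2 ^ (j - l + l)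
  have hterm (y : ℝ) (p : Quad ℤ × Quad ℤ) :
      ((thetaProd a b c d).moment (j - l) l).nullTerm (y * I) 0 (y * I) (quadProdEquiv.symm p) =
        Real.exp (-q p * y) • w p :=
    nullTerm_moment_thetaProd_symm ..
  have hs (p) (hp : p ∈ leadIndices a ×ˢ leadIndices b) : q p = 2 * Real.pi := by
    rw [Finset.mem_product, mem_leadIndices ha, mem_leadIndices hb] at hp
    rw [hq]
    simp only [hp]
    push_cast
    ring
  have hlt (p) (hp : p ∉ leadIndices a ×ˢ leadIndices b) (hne : w p ≠ 0) : 2 * Real.pi < q p := by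
    obtain ⟨hne₁, hne₂⟩ := mul_ne_zero_iff.1 (div_ne_zero_iff.1 hne).1
    have h := eight_lt_sqSum_add_sqSum ha hb hp
      (gaussFreq_ne_zero_of_gaussCoeff hl (GaussianInt.toComplex_eq_zero.not.1 hne₁))
      (gaussFreq_ne_zero_of_gaussCoeff hl₀ (GaussianInt.toComplex_eq_zero.not.1 hne₂))
    have h : (8 : ℝ) < sqSum a p.1 + sqSum b p.2 := by exact_mod_cast h
    rw [hq]
    nlinarith [Real.pi_pos]
  have hsum : Summable fun p ↦ ‖Real.exp (-q p) • w p‖ := by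
    have h := ((isAdmissible_thetaProd a b c d).moment (j - l) l).summable_norm_nullTerm
      (symMat_zero_ofReal_mul_I_mem_H2 (t := (1 : ℝ) * I) (by simp) one_pos)
    refine (quadProdEquiv.symm.summable_iff.2 h).congr fun p ↦ ?_
    simp only [Function.comp_apply, hterm, mul_one]
  rw [← sum_leadIndices_product]
  refine ((tendsto_exp_smul_tsum hs hlt hsum).const_mul (j.choose l : ℂ)).congr fun y ↦ ?_
  rw [ExpFamily.homogPart, ← mul_smul_comm, ← quadProdEquiv.symm.tsum_eq
    (((thetaProd a b c d).moment (j - l) l).nullTerm (y * I) 0 (y * I))]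
  simp only [hterm]

end Leading

set_option maxRecDepth 100000 in
lemma sum_oddSign_mul_leadCoeff_ne_zero :
    ∑ i, (oddSign i : GaussianInt) * (leadCoeff (oddChar i 0) (oddChar i 2) 16 *
      leadCoeff (oddChar i 1) (oddChar i 3) 4) ≠ 0 := by
  decide +kernel

lemma sum_oddSign_mul_homogPart_eq_zero {j : ℕ} (hzero : thetaForm j = 0) {τ : Fin 2 → Fin 2 → ℂ}
    (hτ : τ ∈ H2)
    (l : Fin (j + 1)) :
    ∑ i, (oddSign i : ℂ) * (oddThetaProd i).homogPart j (τ 0 0) (τ 0 1) (τ 1 1) l = 0 := by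
  have h := congrFun (congrFun hzero τ) l
  rw [thetaForm, Set.indicator_of_mem hτ, Finset.sum_apply] at h
  exact h

theorem thetaForm_ne_zero : thetaForm 20 ≠ 0 := by
  intro hzero
  have hchar : ∀ i k, oddChar i k = 0 ∨ oddChar i k = 1 := by decide
  have hlim := tendsto_finsetSum Finset.univ fun i _ ↦
    (tendsto_exp_smul_homogPart (oddChar i 2) (oddChar i 3) (hchar i 0) (hchar i 1) (j := 20)
      (l := 4) (by decide) (by decide)).const_mul (oddSign i : ℂ)
  have hvanish : ∀ᶠ y : ℝ in atTop, ∑ i, (oddSign i : ℂ) * Real.exp (2 * Real.pi * y) •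
      (oddThetaProd i).homogPart 20 (y * I) 0 (y * I) 4 = 0 := by
    filter_upwards [eventually_gt_atTop 0] with y hy
    have hmem : symMat (y * I) 0 (y * I) ∈ H2 :=
      symMat_zero_ofReal_mul_I_mem_H2 (by simpa using hy) hy
    have hsum := sum_oddSign_mul_homogPart_eq_zero hzero hmem 4
    simp only [mul_smul_comm, ← Finset.smul_sum]
    exact smul_eq_zero_of_right _ hsum
  have hsum := tendsto_nhds_unique (hlim.congr' hvanish) tendsto_const_nhds
  refine sum_oddSign_mul_leadCoeff_ne_zero (GaussianInt.toComplex_eq_zero.1 ?_)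
  simp only [mul_left_comm _ (Nat.cast _ : ℂ), mul_div_assoc', ← Finset.mul_sum, ← Finset.sum_div]
    at hsum
  simpa [Nat.choose_eq_zero_iff] using hsum

/-- The space `S_{20,2}(Γ₂,ε)` has dimension 1 over `ℂ`. -/
theorem dim_S20_2_eps (ε : Matrix (Fin 4) (Fin 4) ℤ → ℂ) (hε : IsEps ε) :
    Module.finrank ℂ ↥(SiegelCusp 20 2 Sp4Z ε) = 1 := by
  have hmem : thetaForm 20 ∈ SiegelCusp 20 2 Sp4Z ε := isSiegelCuspForm_thetaForm 20 hε
  refine finrank_eq_one_iff'.2 ⟨⟨thetaForm 20, hmem⟩, fun h ↦ ?_, fun ⟨G, hG⟩ ↦ ?_⟩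
  · exact thetaForm_ne_zero (Subtype.ext_iff.1 h)
  · obtain ⟨c, hc⟩ := exists_smul_eq_of_mem_SiegelCusp hε hmem thetaForm_ne_zero hG
    exact ⟨c, Subtype.ext hc⟩
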